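/- arXiv:2304.02334 — 2 statements merged into one kernel-verified Lean document; each statement's English description precedes it below -/
import Mathlib

section
/- Let W ∈ L¹(ℝ, ℝ) be an even function and let Ŵ(ξ) = ∫_ℝ e^{−i x ξ} W(x) dx denote its Fourier transform. Assume there exists σ ∈ (0, 1] such that inf_{ξ ∈ ℝ} (Ŵ(ξ) + ξ²/2) = σ. Then for almost every c ∈ (0, √(2σ)) (with respect to Lebesgue measure) there exists a nonconstant bounded smooth function u : ℝ → ℂ with u' ∈ L²(ℝ) and 1 − |u|² ∈ L²(ℝ) satisfying i·c·u'(x) + u''(x) + (W ⋆ (1 − |u|²))(x)·u(x) = 0 for all x ∈ ℝ. -/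
open MeasureTheory Filter

/-!
Write `u = ρ e^{iθ}`. The phase is eliminated through `θ' = (c / 2) (ρ⁻² - 1)`, and what remains for
the modulus `ρ` is the Euler–Lagrange equation of the action `E - (c² / 8) ∫ (ρ - 1 / ρ)²`, with `E`
the energy of a real function. The lower bound on the symbol `Ŵ(ξ) + ξ² / 2` makes the action
coercive near the constant `ρ = 1`, while lowering `ρ` almost to `0` at a single point makes it
negative: this is mountain pass geometry.

The action is discretised on `ℤ / n²ℤ` with mesh `1 / n`, where critical points are found in finite
dimension and the positivity of `Ŵ(ξ) + ξ² / 2` survives as the mesh tends to `0`. The mountain pass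
level is monotone in `c`, so by differentiability of monotone functions and Fatou's lemma its slope
at almost every `c` is bounded along a subsequence of meshes, and by the monotonicity trick the
slope bounds `∫ (ρ - 1 / ρ)²` along suitable critical points. These stay a fixed distance away from
`1` at some site. Recentred at that site, they converge along a subsequence to a nontrivial modulus
of finite energy on the line.
-/

namespace DarkSoliton

open Set
open scoped Topology ENNReal Finset

section MonotoneSlopes

theorem lintegral_ofReal_deriv_le {f : ℝ → ℝ} {a b : ℝ} (hab : a ≤ b)
    (hf : MonotoneOn f (Icc a b)) :
    ∫⁻ c in Ioo a b, ENNReal.ofReal (deriv f c) ≤ ENNReal.ofReal (f b - f a) := by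
  have hf' : MonotoneOn f (uIcc a b) := by rwa [uIcc_of_le hab]
  have hint : IntegrableOn (deriv f) (Ioo a b) :=
    ((intervalIntegrable_iff_integrableOn_Ioc_of_le hab).1 hf'.intervalIntegrable_deriv).mono_set
      Ioo_subset_Ioc_self
  have hnonneg : 0 ≤ᵐ[volume.restrict (Ioo a b)] deriv f := by
    filter_upwards [ae_restrict_mem measurableSet_Ioo] with c hc
    rw [← derivWithin_of_mem_nhds (Icc_mem_nhds hc.1 hc.2)]
    exact hf.derivWithin_nonneg
  have hle := hf'.intervalIntegral_deriv_mem_uIcc.2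
  rw [intervalIntegral.integral_of_le hab, integral_Ioc_eq_integral_Ioo] at hle
  rw [← ofReal_integral_eq_lintegral_ofReal hint hnonneg]
  refine ENNReal.ofReal_le_ofReal (hle.trans_eq (max_eq_right (sub_nonneg.2 ?_)))
  exact hf (left_mem_Icc.2 hab) (right_mem_Icc.2 hab) hab

theorem ae_exists_frequently_lt_of_lintegral_le {α : Type*} [MeasurableSpace α] {μ : Measure α}
    {g : ℕ → α → ℝ≥0∞} {C : ℝ≥0∞} (hg : ∀ n, Measurable (g n)) (hC : C ≠ ∞)
    (hgC : ∀ n, ∫⁻ x, g n x ∂μ ≤ C) :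
    ∀ᵐ x ∂μ, ∃ K < ∞, ∃ᶠ n in atTop, g n x < K := by
  have hfatou : ∫⁻ x, liminf (fun n => g n x) atTop ∂μ ≤ C :=
    (lintegral_liminf_le hg).trans
      ((liminf_le_liminf (Eventually.of_forall hgC)).trans (liminf_const C).le)
  filter_upwards [ae_lt_top (Measurable.liminf hg) (hfatou.trans_lt hC.lt_top).ne] with x hx
  obtain ⟨K, hK, hKtop⟩ := exists_between hx
  exact ⟨K, hKtop, frequently_lt_of_liminf_lt (by isBoundedDefault) hK⟩

theorem eventually_sub_le_mul_of_deriv_lt {f : ℝ → ℝ} {c M : ℝ} (hf : DifferentiableAt ℝ f c)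
    (hM : deriv f c < M) : ∀ᶠ c' in 𝓝[<] c, f c - f c' ≤ M * (c - c') := by
  have hslope := hf.hasDerivAt.hasDerivWithinAt (s := Iio c)
  rw [hasDerivWithinAt_iff_tendsto_slope' self_notMem_Iio] at hslope
  filter_upwards [hslope.eventually_lt_const hM, self_mem_nhdsWithin] with c' hlt hc'
  rw [slope_def_field, div_lt_iff_of_neg (sub_neg.2 hc')] at hlt
  linarith

theorem ae_exists_frequently_sub_le_mul {f : ℕ → ℝ → ℝ} {a b C : ℝ} (hab : a ≤ b)
    (hf : ∀ n, MonotoneOn (f n) (Icc a b)) (hC : ∀ n, f n b - f n a ≤ C) :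
    ∀ᵐ c ∂volume.restrict (Ioo a b), ∃ M, ∃ᶠ n in atTop,
      ∀ᶠ c' in 𝓝[<] c, f n c - f n c' ≤ M * (c - c') := by
  have hdiff : ∀ᵐ c ∂volume.restrict (Ioo a b), ∀ n, DifferentiableAt ℝ (f n) c := by
    rw [ae_all_iff]
    intro n
    rw [ae_restrict_iff' measurableSet_Ioo]
    filter_upwards [((hf n).mono Ioo_subset_Icc_self).ae_differentiableWithinAt_of_mem]
      with c hc hmem using (hc hmem).differentiableAt (isOpen_Ioo.mem_nhds hmem)
  have hfatou := ae_exists_frequently_lt_of_lintegral_le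
    (fun n => (measurable_deriv (f n)).ennreal_ofReal) ENNReal.ofReal_ne_top
    fun n => (lintegral_ofReal_deriv_le hab (hf n)).trans (ENNReal.ofReal_le_ofReal (hC n))
  filter_upwards [hdiff, hfatou] with c hc ⟨K, hK, hfreq⟩
  refine ⟨K.toReal + 1, hfreq.mono fun n hn => ?_⟩
  have hderiv : deriv (f n) c ≤ K.toReal := (ENNReal.ofReal_le_iff_le_toReal hK.ne).1 hn.le
  exact eventually_sub_le_mul_of_deriv_lt (hc n) (hderiv.trans_lt (lt_add_one _))

end MonotoneSlopes

section MountainPass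

variable {X : Type*} [TopologicalSpace X] {U : Set X} {J : X → ℝ} {a e : X}

/-- The upper bounds of `J` along the continuous paths in `U` from `a` to `e`. -/
def pathBounds (U : Set X) (J : X → ℝ) (a e : X) : Set ℝ :=
  {m | ∃ γ : Path a e, ∀ t, γ t ∈ U ∧ J (γ t) ≤ m}

/-- The mountain pass level `inf_γ sup_t J (γ t)` over the paths `γ` in `U` from `a` to `e`. -/
noncomputable def passLevel (U : Set X) (J : X → ℝ) (a e : X) : ℝ :=
  sInf (pathBounds U J a e)

theorem pathBounds_nonempty (hJ : ContinuousOn J U) (h : JoinedIn U a e) :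
    (pathBounds U J a e).Nonempty := by
  obtain ⟨γ, hγ⟩ := h
  have hcont : Continuous fun t => J (γ t) := hJ.comp_continuous γ.continuous hγ
  obtain ⟨m, hm⟩ := (isCompact_range hcont).bddAbove
  exact ⟨m, γ, fun t => ⟨hγ t, hm (mem_range_self t)⟩⟩

theorem pathBounds_anti {K : X → ℝ} (h : ∀ x ∈ U, J x ≤ K x) :
    pathBounds U K a e ⊆ pathBounds U J a e := fun _ ⟨γ, hγ⟩ =>
  ⟨γ, fun t => ⟨(hγ t).1, (h _ (hγ t).1).trans (hγ t).2⟩⟩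

theorem exists_path_le_passLevel_add (hJ : ContinuousOn J U) (h : JoinedIn U a e) {ε : ℝ}
    (hε : 0 < ε) : ∃ γ : Path a e, ∀ t, γ t ∈ U ∧ J (γ t) ≤ passLevel U J a e + ε := by
  obtain ⟨m, ⟨γ, hγ⟩, hm⟩ :=
    exists_lt_of_csInf_lt (pathBounds_nonempty hJ h) (lt_add_of_pos_right (passLevel U J a e) hε)
  exact ⟨γ, fun t => ⟨(hγ t).1, (hγ t).2.trans hm.le⟩⟩

/-- Uniform mountain pass geometry between `a` and `e` of the functionals `E - lam * Q`,
`lam₁ ≤ lam ≤ lam₂`, whose levels then lie between `α` and `C`. -/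
structure HasPassGeometry (U : Set X) (E Q : X → ℝ) (a e : X) (lam₁ lam₂ α C : ℝ) : Prop where
  nonneg : ∀ x ∈ U, 0 ≤ Q x
  left_le : E a ≤ lam₁ * Q a
  right_le : E e ≤ lam₁ * Q e
  mem_pathBounds : C ∈ pathBounds U E a e
  mem_lowerBounds : α ∈ lowerBounds (pathBounds U (fun x => E x - lam₂ * Q x) a e)

namespace HasPassGeometry

variable {E Q : X → ℝ} {lam₁ lam₂ α C lam : ℝ}

theorem joinedIn (h : HasPassGeometry U E Q a e lam₁ lam₂ α C) : JoinedIn U a e :=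
  let ⟨γ, hγ⟩ := h.mem_pathBounds
  ⟨γ, fun t => (hγ t).1⟩

theorem left_sub_nonpos (h : HasPassGeometry U E Q a e lam₁ lam₂ α C) (hlam : lam₁ ≤ lam) :
    E a - lam * Q a ≤ 0 :=
  sub_nonpos.2 <| h.left_le.trans <|
    mul_le_mul_of_nonneg_right hlam (h.nonneg a h.joinedIn.source_mem)

theorem right_sub_nonpos (h : HasPassGeometry U E Q a e lam₁ lam₂ α C) (hlam : lam₁ ≤ lam) :
    E e - lam * Q e ≤ 0 :=
  sub_nonpos.2 <| h.right_le.trans <|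
    mul_le_mul_of_nonneg_right hlam (h.nonneg e h.joinedIn.target_mem)

theorem pathBounds_subset (h : HasPassGeometry U E Q a e lam₁ lam₂ α C) {lam' : ℝ}
    (hlam : lam ≤ lam') : pathBounds U (fun x => E x - lam * Q x) a e ⊆
      pathBounds U (fun x => E x - lam' * Q x) a e :=
  pathBounds_anti fun x hx => sub_le_sub_left (mul_le_mul_of_nonneg_right hlam (h.nonneg x hx)) _

theorem mem_pathBounds_sub (h : HasPassGeometry U E Q a e lam₁ lam₂ α C) (hlam : 0 ≤ lam) :
    C ∈ pathBounds U (fun x => E x - lam * Q x) a e :=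
  pathBounds_anti (fun x hx => sub_le_self _ (mul_nonneg hlam (h.nonneg x hx))) h.mem_pathBounds

theorem mem_lowerBounds_sub (h : HasPassGeometry U E Q a e lam₁ lam₂ α C) (hlam : lam ≤ lam₂) :
    α ∈ lowerBounds (pathBounds U (fun x => E x - lam * Q x) a e) := fun _ hm =>
  h.mem_lowerBounds (h.pathBounds_subset hlam hm)

theorem passLevel_mem_Icc (h : HasPassGeometry U E Q a e lam₁ lam₂ α C) (hlam : lam ∈ Icc 0 lam₂) :
    passLevel U (fun x => E x - lam * Q x) a e ∈ Icc α C :=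
  ⟨le_csInf ⟨C, h.mem_pathBounds_sub hlam.1⟩ (h.mem_lowerBounds_sub hlam.2),
    csInf_le ⟨α, h.mem_lowerBounds_sub hlam.2⟩ (h.mem_pathBounds_sub hlam.1)⟩

theorem antitoneOn_passLevel (h : HasPassGeometry U E Q a e lam₁ lam₂ α C) :
    AntitoneOn (fun lam => passLevel U (fun x => E x - lam * Q x) a e) (Icc 0 lam₂) :=
  fun _ hlam _ hlam' hle => csInf_le_csInf ⟨α, h.mem_lowerBounds_sub hlam'.2⟩
    ⟨C, h.mem_pathBounds_sub hlam.1⟩ (h.pathBounds_subset hle)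

end HasPassGeometry

theorem eventually_mul_sub_lt (k : ℝ) {x b : ℝ} (hb : 0 < b) :
    ∀ᶠ y in 𝓝[<] x, k * (x - y) < b := by
  have hcont : ContinuousAt (fun y => k * (x - y)) x := by fun_prop
  exact (hcont.eventually_lt_const (by simpa using hb)).filter_mono nhdsWithin_le_nhds

/-- Flowing along `-v` for a time which is cut off to `0` where `J ≤ ℓ - 2 * ε` lowers the
maximum of `J` along a path below `ℓ - ε`. -/
theorem sub_mem_pathBounds_of_descent {V : Type*} [AddCommGroup V] [Module ℝ V]
    [TopologicalSpace V] [IsTopologicalAddGroup V] [ContinuousSMul ℝ V] {U K : Set V} {J : V → ℝ}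
    {v : V → V} {a e : V} {ℓ ε δ τ : ℝ} (hJ : ContinuousOn J U) (hv : ContinuousOn v U)
    (hε : 0 < ε) (hδ : 0 ≤ δ) (hτ : 0 ≤ τ)
    (hstep : ∀ x ∈ K, ∀ s ∈ Icc 0 τ, x - s • v x ∈ U ∧ J (x - s • v x) ≤ J x - δ * s)
    (γ : Path a e) (hγU : ∀ t, γ t ∈ U) (hγ : ∀ t, J (γ t) ≤ ℓ - ε + δ * τ)
    (hγK : ∀ t, ℓ - 2 * ε ≤ J (γ t) → γ t ∈ K) (ha : J a ≤ ℓ - 2 * ε) (he : J e ≤ ℓ - 2 * ε) :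
    ℓ - ε ∈ pathBounds U J a e := by
  let χ : ℝ → ℝ := fun y => max 0 (min 1 ((y - (ℓ - 2 * ε)) / ε))
  have hχ_mem : ∀ y, τ * χ y ∈ Icc 0 τ := fun y =>
    ⟨mul_nonneg hτ (le_max_left _ _),
      mul_le_of_le_one_right hτ (max_le zero_le_one (min_le_left _ _))⟩
  have hχ_low : ∀ y ≤ ℓ - 2 * ε, χ y = 0 := fun y hy => max_eq_left <|
    (min_le_right _ _).trans (div_nonpos_of_nonpos_of_nonneg (by linarith) hε.le)
  have hχ_high : ∀ y, ℓ - ε ≤ y → χ y = 1 := fun y hy => by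
    have : 1 ≤ (y - (ℓ - 2 * ε)) / ε := by rw [le_div_iff₀ hε]; linarith
    simp only [χ, min_eq_left this, zero_le_one, max_eq_right]
  have hχ : Continuous χ := continuous_const.max (continuous_const.min (by fun_prop))
  have hJγ : Continuous fun t => J (γ t) := hJ.comp_continuous γ.continuous hγU
  have hvγ : Continuous fun t => v (γ t) := hv.comp_continuous γ.continuous hγU
  have hχγ : Continuous fun t => τ * χ (J (γ t)) :=
    continuous_const.mul (hχ.comp hJγ)
  have hfix : ∀ x, J x ≤ ℓ - 2 * ε → x - (τ * χ (J x)) • v x = x := fun x hx => by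
    rw [hχ_low _ hx, mul_zero, zero_smul, sub_zero]
  refine ⟨⟨⟨fun t => γ t - (τ * χ (J (γ t))) • v (γ t),
    γ.continuous.sub (hχγ.smul hvγ)⟩, ?_, ?_⟩, fun t => ?_⟩
  · simpa using hfix a ha
  · simpa using hfix e he
  · change γ t - (τ * χ (J (γ t))) • v (γ t) ∈ U ∧ J (γ t - (τ * χ (J (γ t))) • v (γ t)) ≤ ℓ - ε
    rcases le_total (J (γ t)) (ℓ - 2 * ε) with hlow | hhigh
    · rw [hfix _ hlow]
      exact ⟨hγU t, by linarith⟩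
    · obtain ⟨hU, hle⟩ := hstep _ (hγK t hhigh) _ (hχ_mem (J (γ t)))
      refine ⟨hU, ?_⟩
      rcases le_total (ℓ - ε) (J (γ t)) with htop | hmid
      · rw [hχ_high _ htop, mul_one] at hle ⊢
        linarith [hγ t]
      · linarith [mul_nonneg hδ (hχ_mem (J (γ t))).1]

variable {ι : Type*} [Fintype ι]

/-- `J` is continuous on `U` with the continuous gradient field `g`, expressed through
directional derivatives. -/
structure HasContGradientOn (J : (ι → ℝ) → ℝ) (g : (ι → ℝ) → ι → ℝ) (U : Set (ι → ℝ)) : Prop where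
  continuousOn : ContinuousOn J U
  continuousOn_gradient : ContinuousOn g U
  hasDerivAt : ∀ x ∈ U, ∀ w : ι → ℝ, HasDerivAt (fun s : ℝ => J (x + s • w)) (g x ⬝ᵥ w) 0

namespace HasContGradientOn

variable {U K : Set (ι → ℝ)} {J E Q : (ι → ℝ) → ℝ} {g gE gQ : (ι → ℝ) → ι → ℝ}

theorem sub_const_mul (hE : HasContGradientOn E gE U) (hQ : HasContGradientOn Q gQ U) (lam : ℝ) :
    HasContGradientOn (fun x => E x - lam * Q x) (fun x => gE x - lam • gQ x) U where
  continuousOn := hE.continuousOn.sub (hQ.continuousOn.const_mul lam)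
  continuousOn_gradient := hE.continuousOn_gradient.sub (hQ.continuousOn_gradient.const_smul lam)
  hasDerivAt x hx w := by
    rw [sub_dotProduct, smul_dotProduct]
    exact (hE.hasDerivAt x hx w).sub ((hQ.hasDerivAt x hx w).const_mul lam)

theorem hasDerivAt_line (hJ : HasContGradientOn J g U) {x w : ι → ℝ} {s : ℝ} (hs : x + s • w ∈ U) :
    HasDerivAt (fun y : ℝ => J (x + y • w)) (g (x + s • w) ⬝ᵥ w) s := by
  have hshift := (hJ.hasDerivAt _ hs w).scomp_of_eq s ((hasDerivAt_id s).sub_const s) (by simp)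
  rw [one_smul] at hshift
  refine hshift.congr_of_eventuallyEq (Eventually.of_forall fun y => ?_)
  simp only [Function.comp_apply, id_eq, sub_smul]
  congr 1
  abel

theorem sub_le_of_le_dotProduct (hJ : HasContGradientOn J g U) {x w : ι → ℝ} {δ τ : ℝ}
    (hU : ∀ s ∈ Icc 0 τ, x - s • w ∈ U) (hδ : ∀ s ∈ Icc 0 τ, δ ≤ g (x - s • w) ⬝ᵥ w) :
    ∀ s ∈ Icc 0 τ, J (x - s • w) ≤ J x - δ * s := by
  intro s hs
  have hderiv : ∀ y ∈ Icc 0 τ,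
      HasDerivAt (fun y : ℝ => J (x - y • w)) (-(g (x - y • w) ⬝ᵥ w)) y := fun y hy => by
    have hline := hJ.hasDerivAt_line (x := x) (w := -w) (s := y)
      (by simpa [← sub_eq_add_neg] using hU y hy)
    simpa only [smul_neg, ← sub_eq_add_neg, dotProduct_neg] using hline
  have hmvt := (convex_Icc 0 τ).image_sub_le_mul_sub_of_deriv_le (C := -δ)
    (fun y hy => (hderiv y hy).continuousAt.continuousWithinAt)
    (fun y hy => (hderiv y (interior_subset hy)).differentiableAt.differentiableWithinAt)
    (fun y hy => by
      rw [(hderiv y (interior_subset hy)).deriv]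
      exact neg_le_neg (hδ y (interior_subset hy)))
    0 ⟨le_rfl, hs.1.trans hs.2⟩ s hs hs.1
  simp only [zero_smul, sub_zero] at hmvt
  linarith

theorem exists_descent (hJ : HasContGradientOn J g U) (hU : IsOpen U) (hK : IsCompact K)
    (hKU : K ⊆ U) (hcrit : ∀ x ∈ K, g x ≠ 0) :
    ∃ δ > 0, ∃ τ > 0, ∀ x ∈ K, ∀ s ∈ Icc 0 τ,
      x - s • g x ∈ U ∧ J (x - s • g x) ≤ J x - δ * s := by
  obtain ⟨δ, hδ, hδK⟩ : ∃ δ > 0, ∀ x ∈ K, 2 * δ ≤ g x ⬝ᵥ g x := by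
    have hgg : ContinuousOn (fun x => g x ⬝ᵥ g x) K :=
      (continuous_id.dotProduct continuous_id).comp_continuousOn (hJ.continuousOn_gradient.mono hKU)
    have hpos : ∀ x ∈ K, 0 < g x ⬝ᵥ g x := fun x hx =>
      (dotProduct_self_star_nonneg (g x)).lt_of_ne' (mt dotProduct_self_eq_zero.1 (hcrit x hx))
    obtain ⟨δ, hδ, hle⟩ := hK.exists_forall_le' hgg hpos
    exact ⟨δ / 2, half_pos hδ, fun x hx => by linarith [hle x hx]⟩
  have hlocal : ∀ x ∈ K, ∀ᶠ z : ℝ × (ι → ℝ) in 𝓝 (0, x),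
      z.2 - z.1 • g z.2 ∈ U ∧ δ < g (z.2 - z.1 • g z.2) ⬝ᵥ g z.2 := by
    intro x hx
    have hg := hJ.continuousOn_gradient.continuousAt (hU.mem_nhds (hKU hx))
    have hg₂ : ContinuousAt (fun z : ℝ × (ι → ℝ) => g z.2) (0, x) :=
      ContinuousAt.comp (f := Prod.snd) (x := ((0 : ℝ), x)) hg continuousAt_snd
    have hstep : ContinuousAt (fun z : ℝ × (ι → ℝ) => z.2 - z.1 • g z.2) (0, x) :=
      continuousAt_snd.sub (continuousAt_fst.smul hg₂)
    have hgstep : ContinuousAt (fun z : ℝ × (ι → ℝ) => g (z.2 - z.1 • g z.2)) (0, x) :=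
      ContinuousAt.comp_of_eq hg hstep (by simp)
    have hdot : ContinuousAt (fun z : ℝ × (ι → ℝ) => g (z.2 - z.1 • g z.2) ⬝ᵥ g z.2) (0, x) :=
      (continuous_fst.dotProduct continuous_snd).continuousAt.comp (hgstep.prodMk hg₂)
    refine (hstep.eventually_mem ?_).and (hdot.eventually_const_lt ?_)
    · simpa using hU.mem_nhds (hKU hx)
    · simp only [zero_smul, sub_zero]
      linarith [hδK x hx]
  obtain ⟨τ, hτ, hball⟩ := Metric.eventually_nhds_iff.1
    (hK.eventually_forall_of_forall_eventually
      (P := fun s x => x - s • g x ∈ U ∧ δ < g (x - s • g x) ⬝ᵥ g x) hlocal)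
  have huniform : ∀ x ∈ K, ∀ s ∈ Icc 0 (τ / 2),
      x - s • g x ∈ U ∧ δ < g (x - s • g x) ⬝ᵥ g x := fun x hx s hs =>
    hball (by rw [Real.dist_eq, sub_zero, abs_of_nonneg hs.1]; linarith [hs.2]) x hx
  refine ⟨δ, hδ, τ / 2, half_pos hτ, fun x hx s hs => ⟨(huniform x hx s hs).1, ?_⟩⟩
  exact hJ.sub_le_of_le_dotProduct (fun s hs => (huniform x hx s hs).1)
    (fun s hs => (huniform x hx s hs).2.le) s hs

/-- Struwe's monotonicity trick: `Q` stays bounded along the almost optimal parts of almost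
optimal paths for nearby parameters, since there `(lam - lam') * Q` is of order `lam - lam'`. -/
theorem exists_critical_point_of_passLevel_slope (hE : HasContGradientOn E gE U)
    (hQ : HasContGradientOn Q gQ U) (hU : IsOpen U) (hQ0 : ∀ x ∈ U, 0 ≤ Q x)
    (hQc : ∀ M, IsCompact {x | x ∈ U ∧ Q x ≤ M}) {a e : ι → ℝ} (hae : JoinedIn U a e)
    {α lam M : ℝ} (hα : 0 < α) (ha : E a - lam * Q a ≤ 0) (he : E e - lam * Q e ≤ 0)
    (hlow : α ∈ lowerBounds (pathBounds U (fun x => E x - lam * Q x) a e))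
    (hslope : ∃ᶠ lam' in 𝓝[<] lam, passLevel U (fun x => E x - lam' * Q x) a e
      ≤ passLevel U (fun x => E x - lam * Q x) a e + M * (lam - lam')) :
    ∃ x ∈ U, Q x ≤ M + 3 ∧ α / 2 ≤ E x - lam * Q x ∧
      E x - lam * Q x ≤ passLevel U (fun x => E x - lam * Q x) a e + 1 ∧ gE x = lam • gQ x := by
  set J : (ι → ℝ) → ℝ := fun x => E x - lam * Q x with hJdef
  have hJ : HasContGradientOn J (fun x => gE x - lam • gQ x) U := hE.sub_const_mul hQ lam
  set ℓ := passLevel U J a e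
  have hαℓ : α ≤ ℓ := le_csInf (pathBounds_nonempty hJ.continuousOn hae) hlow
  by_contra! hcon
  set K : Set (ι → ℝ) := {x | x ∈ U ∧ Q x ≤ M + 3} ∩ J ⁻¹' Icc (α / 2) (ℓ + 1)
  have hKU : K ⊆ U := fun x hx => hx.1.1
  have hKc : IsCompact K := (hQc (M + 3)).of_isClosed_subset
    ((hJ.continuousOn.mono fun x hx => hx.1).preimage_isClosed_of_isClosed
      (hQc (M + 3)).isClosed isClosed_Icc) inter_subset_left
  obtain ⟨δ, hδ, τ, hτ, hstep⟩ := hJ.exists_descent hU hKc hKU fun x hx =>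
    sub_ne_zero.2 (hcon x hx.1.1 hx.1.2 hx.2.1 hx.2.2)
  obtain ⟨lam', hlevel, hα', hM', hδτ, hlt⟩ := (hslope.and_eventually
    ((eventually_mul_sub_lt 2 (half_pos hα)).and ((eventually_mul_sub_lt (M + 1) one_pos).and
      ((eventually_mul_sub_lt (M + 2) (mul_pos hδ hτ)).and self_mem_nhdsWithin)))).exists
  set ε := lam - lam' with hε
  have hε0 : 0 < ε := sub_pos.2 hlt
  obtain ⟨γ, hγ⟩ := exists_path_le_passLevel_add (hE.sub_const_mul hQ lam').continuousOn hae hε0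
  have hJγ : ∀ t, J (γ t) + ε * Q (γ t) ≤ ℓ + (M + 1) * ε := fun t => by
    have := (hγ t).2
    simp only [hJdef, hε] at this hlevel ⊢
    linarith
  have hεQ : ∀ t, 0 ≤ ε * Q (γ t) := fun t => mul_nonneg hε0.le (hQ0 _ (hγ t).1)
  have hγK : ∀ t, ℓ - 2 * ε ≤ J (γ t) → γ t ∈ K := fun t ht => by
    refine ⟨⟨(hγ t).1, le_of_mul_le_mul_left ?_ hε0⟩, ?_, ?_⟩
    · linarith [hJγ t]
    · linarith
    · linarith [hJγ t, hεQ t]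
  have hbdd : BddBelow (pathBounds U J a e) := ⟨α, hlow⟩
  have hle : ℓ ≤ ℓ - ε := csInf_le hbdd <|
    sub_mem_pathBounds_of_descent hJ.continuousOn hJ.continuousOn_gradient hε0 hδ.le hτ.le hstep γ
      (fun t => (hγ t).1) (fun t => by linarith [hJγ t, hεQ t]) hγK
      (by linarith [hα', hαℓ, ha]) (by linarith [hα', hαℓ, he])
  linarith

end HasContGradientOn

/-- The slopes of the mountain pass levels are almost everywhere bounded along a subsequence. -/
theorem ae_exists_frequently_critical_point {ι : ℕ → Type*} [∀ n, Fintype (ι n)]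
    {U : ∀ n, Set (ι n → ℝ)} {E Q : ∀ n, (ι n → ℝ) → ℝ} {gE gQ : ∀ n, (ι n → ℝ) → ι n → ℝ}
    {a e : ∀ n, ι n → ℝ} {lam₁ lam₂ α C : ℝ} (hU : ∀ n, IsOpen (U n))
    (hE : ∀ n, HasContGradientOn (E n) (gE n) (U n))
    (hQ : ∀ n, HasContGradientOn (Q n) (gQ n) (U n))
    (hQc : ∀ n M, IsCompact {x | x ∈ U n ∧ Q n x ≤ M}) (h₁ : 0 ≤ lam₁) (h₁₂ : lam₁ ≤ lam₂)
    (hα : 0 < α) (hpass : ∀ n, HasPassGeometry (U n) (E n) (Q n) (a n) (e n) lam₁ lam₂ α C) :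
    ∀ᵐ lam ∂volume.restrict (Ioo lam₁ lam₂), ∃ M, ∃ᶠ n in atTop, ∃ x ∈ U n, Q n x ≤ M ∧
      0 < E n x - lam * Q n x ∧ E n x - lam * Q n x ≤ C + 1 ∧ gE n x = lam • gQ n x := by
  set level : ℕ → ℝ → ℝ := fun n lam => passLevel (U n) (fun x => E n x - lam * Q n x) (a n) (e n)
  have hsub : Icc lam₁ lam₂ ⊆ Icc 0 lam₂ := Icc_subset_Icc_left h₁
  have hmono (n : ℕ) : MonotoneOn (fun lam => -level n lam) (Icc lam₁ lam₂) :=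
    ((hpass n).antitoneOn_passLevel.mono hsub).neg
  have hC (n : ℕ) : -level n lam₂ - -level n lam₁ ≤ C - α := by
    linarith [((hpass n).passLevel_mem_Icc (hsub (left_mem_Icc.2 h₁₂))).2,
      ((hpass n).passLevel_mem_Icc (hsub (right_mem_Icc.2 h₁₂))).1]
  filter_upwards [ae_exists_frequently_sub_le_mul h₁₂ hmono hC, ae_restrict_mem measurableSet_Ioo]
    with lam ⟨M, hM⟩ hlam
  refine ⟨M + 3, hM.mono fun n hn => ?_⟩
  obtain ⟨x, hx, hQx, hlow, hup, hcrit⟩ :=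
    (hE n).exists_critical_point_of_passLevel_slope (M := M) (hQ n) (hU n) (hpass n).nonneg
      (hQc n) (hpass n).joinedIn hα ((hpass n).left_sub_nonpos hlam.1.le)
      ((hpass n).right_sub_nonpos hlam.1.le) ((hpass n).mem_lowerBounds_sub hlam.2.le)
      (hn.mono fun lam' hlam' => by linarith).frequently
  have := ((hpass n).passLevel_mem_Icc (hsub (Ioo_subset_Icc_self hlam))).2
  exact ⟨x, hx, hQx, by linarith, by linarith, hcrit⟩

end MountainPass

section CyclicSums

variable {N : ℕ} [NeZero N]

theorem sum_add_right (f : ZMod N → ℝ) (k : ZMod N) : ∑ j, f (j + k) = ∑ j, f j :=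
  Equiv.sum_comp (Equiv.addRight k) f

theorem sum_range_natCast (f : ZMod N → ℝ) : ∑ i ∈ Finset.range N, f i = ∑ j, f j := by
  refine Finset.sum_nbij (fun i => (i : ZMod N)) (by simp) ?_ ?_ (by simp)
  · intro a ha b hb hab
    simp only [Finset.coe_range, mem_Iio] at ha hb
    simpa [ZMod.val_natCast, Nat.mod_eq_of_lt ha, Nat.mod_eq_of_lt hb] using congrArg ZMod.val hab
  · intro j _
    exact ⟨j.val, by simpa using ZMod.val_lt j, by simp⟩

theorem abs_sub_le_sum_abs_sub (f : ZMod N → ℝ) (j k : ZMod N) :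
    |f j - f k| ≤ ∑ i, |f (i + 1) - f i| := by
  have telescope (n : ℕ) :
      |f (k + n) - f k| ≤ ∑ i ∈ Finset.range n, |f (k + i + 1) - f (k + i)| := by
    have h := Finset.sum_range_sub (fun i : ℕ => f (k + i)) n
    simp only [Nat.cast_zero, add_zero, Nat.cast_succ, ← add_assoc] at h
    exact h ▸ Finset.abs_sum_le_sum_abs _ _
  calc |f j - f k|
      = |f (k + (j - k).val) - f k| := by simp
    _ ≤ ∑ i ∈ Finset.range (j - k).val, |f (k + i + 1) - f (k + i)| := telescope _
    _ ≤ ∑ i ∈ Finset.range N, |f (k + i + 1) - f (k + i)| :=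
        Finset.sum_le_sum_of_subset_of_nonneg (Finset.range_mono (ZMod.val_lt _).le)
          fun _ _ _ => abs_nonneg _
    _ = ∑ i, |f (k + i + 1) - f (k + i)| :=
        sum_range_natCast fun i : ZMod N => |f (k + i + 1) - f (k + i)|
    _ = ∑ i, |f (i + 1) - f i| := by
        simpa only [add_comm k] using sum_add_right (fun i => |f (i + 1) - f i|) k

theorem exists_card_mul_le_sum (f : ZMod N → ℝ) : ∃ k, N * f k ≤ ∑ j, f j := by
  obtain ⟨k, -, hk⟩ := Finset.exists_min_image Finset.univ f Finset.univ_nonempty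
  refine ⟨k, ?_⟩
  simpa using Finset.card_nsmul_le_sum Finset.univ f (f k) hk

/-- The autocorrelation of a sequence on the cyclic group `ℤ/N`; every quadratic form commuting
with translations is a linear functional of it. -/
def autocorr (η : ZMod N → ℝ) (m : ZMod N) : ℝ := ∑ j, η j * η (j + m)

theorem autocorr_zero (η : ZMod N → ℝ) : autocorr η 0 = ∑ j, η j ^ 2 := by
  simp [autocorr, sq]

theorem autocorr_neg (η : ZMod N → ℝ) (m : ZMod N) : autocorr η (-m) = autocorr η m := by
  unfold autocorr
  rw [← sum_add_right (fun j => η j * η (j + -m)) m]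
  exact Finset.sum_congr rfl fun j _ => by simp [mul_comm]

theorem abs_autocorr_le (η : ZMod N → ℝ) (m : ZMod N) : |autocorr η m| ≤ ∑ j, η j ^ 2 := by
  calc |autocorr η m|
      ≤ ∑ j, |η j * η (j + m)| := Finset.abs_sum_le_sum_abs _ _
    _ ≤ ∑ j, (η j ^ 2 + η (j + m) ^ 2) / 2 := by
        refine Finset.sum_le_sum fun j _ => abs_le.2 ⟨?_, ?_⟩ <;>
          nlinarith [sq_nonneg (η j + η (j + m)), sq_nonneg (η j - η (j + m))]
    _ = ∑ j, η j ^ 2 := by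
        rw [← Finset.sum_div, Finset.sum_add_distrib, sum_add_right (fun j => η j ^ 2),
          add_self_div_two]

/-- The discrete Fourier transform of a real sequence on `ℤ/N`, with the opposite sign convention
in the exponent to `ZMod.dft`. -/
noncomputable def cyclicTransform (η : ZMod N → ℝ) (k : ZMod N) : ℂ :=
  ∑ j, (η j : ℂ) * ZMod.stdAddChar (k * j)

theorem sum_stdAddChar_mul_normSq_cyclicTransform (η : ZMod N → ℝ) (m : ZMod N) :
    ∑ k, ZMod.stdAddChar (k * m) * (Complex.normSq (cyclicTransform η k) : ℂ) =
      N * (autocorr η m : ℂ) := by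
  set ψ := ZMod.stdAddChar (N := N)
  have expand (k : ZMod N) : ψ (k * m) * (Complex.normSq (cyclicTransform η k) : ℂ) =
      ∑ j, ∑ l, ((η j : ℂ) * η l) * ψ (k * (m + j - l)) := by
    rw [← Complex.mul_conj]
    simp only [cyclicTransform, map_sum, map_mul, Complex.conj_ofReal]
    rw [Finset.sum_mul_sum, Finset.mul_sum]
    simp only [Finset.mul_sum]
    refine Finset.sum_congr rfl fun j _ => Finset.sum_congr rfl fun l _ => ?_
    rw [← AddChar.map_neg_eq_conj, show k * (m + j - l) = k * m + (k * j + -(k * l)) by ring,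
      AddChar.map_add_eq_mul, AddChar.map_add_eq_mul]
    ring
  have orthogonality (j : ZMod N) :
      ∑ k, ∑ l, ((η j : ℂ) * η l) * ψ (k * (m + j - l)) = N * ((η j : ℂ) * η (j + m)) := by
    rw [Finset.sum_comm]
    simp only [← Finset.mul_sum, ψ, AddChar.sum_mulShift _ (ZMod.isPrimitive_stdAddChar N)]
    rw [Finset.sum_eq_single (j + m)]
    · simp only [add_comm m j, sub_self, if_true, ZMod.card]; ring
    · intro l _ hl
      have : m + j - l ≠ 0 := fun h => hl (by rw [add_comm j, sub_eq_zero.1 h])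
      simp [this]
    · simp
  simp only [expand]
  rw [Finset.sum_comm, Finset.sum_congr rfl fun j _ => orthogonality j, ← Finset.mul_sum]
  simp [autocorr]

theorem re_stdAddChar_mul_intCast (k : ZMod N) (m : ℤ) :
    (ZMod.stdAddChar (k * (m : ZMod N))).re = Real.cos (2 * Real.pi * k.valMinAbs / N * m) := by
  rw [show k * (m : ZMod N) = ((k.valMinAbs * m : ℤ) : ZMod N) by push_cast; simp,
    ZMod.stdAddChar_coe, ← Complex.exp_ofReal_mul_I_re]
  push_cast
  ring_nf

theorem exists_autocorr_eq_sum_cos (η : ZMod N → ℝ) : ∃ P : ZMod N → ℝ, (∀ k, 0 ≤ P k) ∧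
    ∀ m : ℤ, autocorr η (m : ZMod N) = ∑ k, P k * Real.cos (2 * Real.pi * k.valMinAbs / N * m) := by
  have hN : (N : ℝ) ≠ 0 := NeZero.ne _
  refine ⟨fun k => Complex.normSq (cyclicTransform η k) / N,
    fun k => div_nonneg (Complex.normSq_nonneg _) N.cast_nonneg, fun m => ?_⟩
  have h := congrArg Complex.re (sum_stdAddChar_mul_normSq_cyclicTransform η (m : ZMod N))
  simp only [Complex.re_sum, Complex.re_mul_ofReal, re_stdAddChar_mul_intCast] at h
  rw [Complex.natCast_re] at h
  calc autocorr η m = N * autocorr η m / N := by field_simp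
    _ = _ := by
      rw [← h, Finset.sum_div]
      exact Finset.sum_congr rfl fun k _ => by ring

theorem abs_two_pi_mul_valMinAbs_div_le (k : ZMod N) :
    |2 * Real.pi * (k.valMinAbs : ℝ) / N| ≤ Real.pi := by
  have hN : (0 : ℝ) < N := by exact_mod_cast NeZero.pos N
  obtain ⟨hl, hu⟩ := ZMod.valMinAbs_mem_Ioc k
  have hl' : -(N : ℝ) ≤ k.valMinAbs * 2 := by exact_mod_cast hl.le
  have hu' : (k.valMinAbs : ℝ) * 2 ≤ N := by exact_mod_cast hu
  rw [abs_le, le_div_iff₀ hN, div_le_iff₀ hN]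
  constructor <;> nlinarith [Real.pi_pos]

end CyclicSums

section StepFunctions

variable {W : ℝ → ℝ} {h C : ℝ}

theorem measurable_comp_floor_div {β : Type*} [MeasurableSpace β] (h : ℝ) (f : ℤ → β) :
    Measurable fun t : ℝ => f ⌊t / h⌋ :=
  (measurable_of_countable f).comp (Int.measurable_floor.comp (measurable_id.div_const h))

theorem integrable_mul_comp_floor_div (hW : Integrable W) (h : ℝ) {f : ℤ → ℝ}
    (hf : ∀ n, |f n| ≤ C) : Integrable fun t => W t * f ⌊t / h⌋ :=
  hW.mul_bdd (c := C) (measurable_comp_floor_div h f).aestronglyMeasurable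
    (Eventually.of_forall fun _ => hf _)

theorem abs_integral_mul_comp_floor_div_le (hW : Integrable W) (h : ℝ) {f : ℤ → ℝ}
    (hf : ∀ n, |f n| ≤ C) : |∫ t, W t * f ⌊t / h⌋| ≤ (∫ t, |W t|) * C := by
  rw [← integral_mul_const]
  refine abs_integral_le_integral_abs.trans
    (integral_mono (integrable_mul_comp_floor_div hW h hf).abs (hW.abs.mul_const _) fun t => ?_)
  simp only [abs_mul]
  exact mul_le_mul_of_nonneg_left (hf _) (abs_nonneg _)

end StepFunctions

section Symbol

variable {W : ℝ → ℝ}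

/-- The cosine transform, which is the Fourier transform when `W` is even. -/
noncomputable def cosTransform (W : ℝ → ℝ) (ξ : ℝ) : ℝ := ∫ t, W t * Real.cos (ξ * t)

theorem integrable_mul_cos (hW : Integrable W) (ξ : ℝ) :
    Integrable fun t => W t * Real.cos (ξ * t) :=
  hW.mul_bdd (c := 1) (by fun_prop) (Eventually.of_forall fun _ => Real.abs_cos_le_one _)

theorem cosTransform_sub_le_integral_cos_floor (hW : Integrable W) {h R ξ : ℝ} (hh : 0 < h)
    (hξ : |ξ| ≤ R) :
    cosTransform W ξ - (∫ t, |W t|) * (R * h) ≤ ∫ t, W t * Real.cos (ξ * h * ⌊t / h⌋) := by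
  have hint : Integrable fun t => W t * Real.cos (ξ * h * ⌊t / h⌋) :=
    integrable_mul_comp_floor_div hW h (f := fun n => Real.cos (ξ * h * n))
      fun _ => Real.abs_cos_le_one _
  suffices cosTransform W ξ - ∫ t, W t * Real.cos (ξ * h * ⌊t / h⌋) ≤ ∫ t, |W t| * (R * h) by
    rw [integral_mul_const] at this
    linarith
  rw [cosTransform, ← integral_sub (integrable_mul_cos hW ξ) hint]
  refine integral_mono ((integrable_mul_cos hW ξ).sub hint) (hW.abs.mul_const _) fun t => ?_
  have hphase : |ξ * t - ξ * h * ⌊t / h⌋| ≤ R * h := by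
    rw [show ξ * t - ξ * h * ⌊t / h⌋ = ξ * (h * Int.fract (t / h)) by
      rw [← Int.self_sub_floor]; field_simp, abs_mul,
      abs_of_nonneg (mul_nonneg hh.le (Int.fract_nonneg _))]
    exact mul_le_mul hξ (mul_le_of_le_one_right hh.le (Int.fract_lt_one _).le)
      (mul_nonneg hh.le (Int.fract_nonneg _)) ((abs_nonneg _).trans hξ)
  calc W t * Real.cos (ξ * t) - W t * Real.cos (ξ * h * ⌊t / h⌋)
      ≤ |W t * (Real.cos (ξ * t) - Real.cos (ξ * h * ⌊t / h⌋))| := by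
        rw [← mul_sub]; exact le_abs_self _
    _ ≤ |W t| * (R * h) := by
        rw [abs_mul]
        gcongr
        exact (Real.abs_cos_sub_cos_le _ _).trans hphase

theorem two_div_pi_sq_mul_sq_le {h ξ : ℝ} (hh : 0 < h) (hξ : |ξ * h| ≤ Real.pi) :
    2 / Real.pi ^ 2 * ξ ^ 2 ≤ (1 - Real.cos (ξ * h)) / h ^ 2 := by
  rw [le_div_iff₀ (by positivity)]
  have := Real.cos_le_one_sub_mul_cos_sq hξ
  nlinarith

theorem sq_div_two_sub_le {h R ξ : ℝ} (hh : 0 < h) (hξ : |ξ| ≤ R) (hhR : h * R ≤ 1) :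
    ξ ^ 2 / 2 - h ^ 2 * R ^ 4 ≤ (1 - Real.cos (ξ * h)) / h ^ 2 := by
  have hle : |ξ * h| ≤ h * R := by
    rw [abs_mul, abs_of_pos hh, mul_comm]; gcongr
  have hcos := (abs_le.1 (Real.cos_bound (hle.trans hhR))).2
  have hquartic : |ξ * h| ^ 4 ≤ h ^ 4 * R ^ 4 := by
    rw [← mul_pow]; gcongr
  have hnn : 0 ≤ |ξ * h| ^ 4 := by positivity
  rw [le_div_iff₀ (by positivity)]
  nlinarith

/-- High frequencies are controlled by the discrete Laplacian alone; at low frequencies both terms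
converge to their continuous counterparts as the mesh tends to zero. -/
theorem exists_forall_le_symbol (hW : Integrable W) {σ ε : ℝ}
    (hσ : ∀ ξ, σ ≤ cosTransform W ξ + ξ ^ 2 / 2) (hε : 0 < ε) :
    ∃ h₀ > 0, ∀ h, 0 < h → h < h₀ → ∀ θ, |θ| ≤ Real.pi →
      σ - ε ≤ (1 - Real.cos θ) / h ^ 2 + ∫ t, W t * Real.cos (θ * ⌊t / h⌋) := by
  set w := ∫ t, |W t|
  have hw : 0 ≤ w := integral_nonneg fun _ => abs_nonneg _
  set R := Real.pi * (|σ| + w + 1) with hR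
  have hR1 : 1 ≤ R := by nlinarith [abs_nonneg σ, Real.pi_gt_three]
  refine ⟨min (1 / R) (min (ε / (2 * R ^ 4)) (ε / (2 * (R * w + 1)))), by positivity, ?_⟩
  intro h hh hlt θ hθ
  obtain ⟨h₁, h₂, h₃⟩ : h * R ≤ 1 ∧ h * (2 * R ^ 4) ≤ ε ∧ h * (2 * (R * w + 1)) ≤ ε := by
    simp only [lt_min_iff] at hlt
    exact ⟨(le_div_iff₀ (by positivity)).1 hlt.1.le, (le_div_iff₀ (by positivity)).1 hlt.2.1.le,
      (le_div_iff₀ (by positivity)).1 hlt.2.2.le⟩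
  obtain ⟨ξ, rfl⟩ : ∃ ξ, θ = ξ * h := ⟨θ / h, by field_simp⟩
  rcases le_total R |ξ| with hξ | hξ
  · have hlaplace := two_div_pi_sq_mul_sq_le hh hθ
    have hpot := (abs_le.1 (abs_integral_mul_comp_floor_div_le hW h (C := 1)
      (f := fun n => Real.cos (ξ * h * n)) fun _ => Real.abs_cos_le_one _)).1
    have hlarge : |σ| + w + 1 ≤ 2 / Real.pi ^ 2 * ξ ^ 2 :=
      calc |σ| + w + 1 ≤ 2 * (|σ| + w + 1) ^ 2 := by nlinarith [abs_nonneg σ]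
        _ = 2 / Real.pi ^ 2 * R ^ 2 := by rw [hR]; field_simp
        _ ≤ 2 / Real.pi ^ 2 * ξ ^ 2 := by rw [← sq_abs ξ]; gcongr
    linarith [le_abs_self σ]
  · have hlaplace := sq_div_two_sub_le hh hξ h₁
    have hpot := cosTransform_sub_le_integral_cos_floor hW hh hξ
    have hsmall : h ^ 2 * R ^ 4 ≤ ε / 2 := by
      have : h ≤ 1 := by nlinarith
      have : h ^ 2 * R ^ 4 ≤ h * R ^ 4 := by gcongr; nlinarith
      linarith
    nlinarith [hσ ξ]

end Symbol

section LatticeForms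

variable {N : ℕ} {A : Type*} [AddGroupWithOne A] {W : ℝ → ℝ} {h C : ℝ}

/-- The symmetrised translation by `n` sites of a sequence on the lattice `A`, which is `ZMod N` or
`ℤ` below. -/
noncomputable def symmShift (η : A → ℝ) (j : A) (n : ℤ) : ℝ :=
  (η (j - n) + η (j + n)) / 2

/-- The convolution `W ⋆ η` on the lattice of mesh `h`. The symmetrisation makes it a symmetric
operator, although the floor function is not odd. -/
noncomputable def latticeConv (W : ℝ → ℝ) (h : ℝ) (η : A → ℝ) (j : A) : ℝ :=
  ∫ t, W t * symmShift η j ⌊t / h⌋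

theorem abs_symmShift_le {η : A → ℝ} (hC : ∀ j, |η j| ≤ C) (j : A) (n : ℤ) :
    |symmShift η j n| ≤ C := by
  have h₁ := abs_le.1 (hC (j - n))
  have h₂ := abs_le.1 (hC (j + n))
  unfold symmShift
  rw [abs_le]
  constructor <;> linarith

theorem abs_latticeConv_le (hW : Integrable W) (h : ℝ) {η : A → ℝ} (hC : ∀ j, |η j| ≤ C)
    (j : A) : |latticeConv W h η j| ≤ (∫ t, |W t|) * C :=
  abs_integral_mul_comp_floor_div_le hW h (abs_symmShift_le hC j)

variable [NeZero N]

theorem integrable_mul_symmShift (hW : Integrable W) (h : ℝ) (η : ZMod N → ℝ) (j : ZMod N) :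
    Integrable fun t => W t * symmShift η j ⌊t / h⌋ :=
  integrable_mul_comp_floor_div hW h (abs_symmShift_le
    (fun i => Finset.single_le_sum (f := fun i => |η i|) (fun _ _ => abs_nonneg _)
      (Finset.mem_univ i)) j)

theorem isLinearMap_latticeConv (hW : Integrable W) (h : ℝ) :
    IsLinearMap ℝ (latticeConv W h : (ZMod N → ℝ) → ZMod N → ℝ) where
  map_add η ζ := by
    funext j
    simp only [latticeConv, Pi.add_apply]
    rw [← integral_add (integrable_mul_symmShift hW h η j) (integrable_mul_symmShift hW h ζ j)]
    congr 1 with t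
    simp only [symmShift, Pi.add_apply]
    ring
  map_smul s η := by
    funext j
    simp only [latticeConv, Pi.smul_apply, smul_eq_mul]
    rw [← integral_const_mul]
    congr 1 with t
    simp only [symmShift, Pi.smul_apply, smul_eq_mul]
    ring

theorem sum_mul_latticeConv (hW : Integrable W) (h : ℝ) (η ζ : ZMod N → ℝ) :
    ∑ j, ζ j * latticeConv W h η j = ∫ t, W t * ∑ j, ζ j * symmShift η j ⌊t / h⌋ := by
  simp only [latticeConv, ← integral_const_mul]
  rw [← integral_finsetSum _ fun j _ => (integrable_mul_symmShift hW h η j).const_mul _]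
  congr 1 with t
  rw [Finset.mul_sum]
  exact Finset.sum_congr rfl fun j _ => mul_left_comm _ _ _

theorem sum_mul_symmShift_comm (η ζ : ZMod N → ℝ) (n : ℤ) :
    ∑ j, ζ j * symmShift η j n = ∑ j, η j * symmShift ζ j n := by
  have transpose (η ζ : ZMod N → ℝ) : ∑ j, ζ j * η (j - n) = ∑ j, η j * ζ (j + n) := by
    rw [← sum_add_right (fun j => ζ j * η (j - n)) n]
    exact Finset.sum_congr rfl fun j _ => by simp [mul_comm]
  have split (η ζ : ZMod N → ℝ) : ∑ j, ζ j * symmShift η j n =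
      (∑ j, ζ j * η (j - n) + ∑ j, ζ j * η (j + n)) / 2 := by
    rw [← Finset.sum_add_distrib, Finset.sum_div]
    exact Finset.sum_congr rfl fun j _ => by simp only [symmShift]; ring
  rw [split, split, transpose η ζ, transpose ζ η, add_comm]

theorem sum_mul_latticeConv_comm (hW : Integrable W) (h : ℝ) (η ζ : ZMod N → ℝ) :
    ∑ j, ζ j * latticeConv W h η j = ∑ j, η j * latticeConv W h ζ j := by
  simp only [sum_mul_latticeConv hW, sum_mul_symmShift_comm η ζ]

/-- The squared `ℓ²` norm of the difference quotients of a lattice sequence of mesh `h`. -/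
noncomputable def dirichletSum (h : ℝ) (η : ZMod N → ℝ) : ℝ := ∑ j, ((η (j + 1) - η j) / h) ^ 2

/-- The squared `ℓ²` norm of a lattice sequence. -/
def sqSum (η : ZMod N → ℝ) : ℝ := ∑ j, η j ^ 2

/-- The quadratic form of the convolution operator `latticeConv W h`. -/
noncomputable def interactionForm (W : ℝ → ℝ) (h : ℝ) (η : ZMod N → ℝ) : ℝ :=
  ∑ j, η j * latticeConv W h η j

theorem dirichletSum_nonneg (h : ℝ) (η : ZMod N → ℝ) : 0 ≤ dirichletSum h η :=
  Finset.sum_nonneg fun _ _ => sq_nonneg _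

theorem sqSum_nonneg (η : ZMod N → ℝ) : 0 ≤ sqSum η := Finset.sum_nonneg fun _ _ => sq_nonneg _

theorem dirichletSum_eq (h : ℝ) (η : ZMod N → ℝ) :
    dirichletSum h η = 2 * (sqSum η - autocorr η 1) / h ^ 2 := by
  have expand (j : ZMod N) : ((η (j + 1) - η j) / h) ^ 2 =
      (η (j + 1) ^ 2 + η j ^ 2 - 2 * (η j * η (j + 1))) / h ^ 2 := by ring
  simp only [dirichletSum, expand]
  rw [← Finset.sum_div, Finset.sum_sub_distrib, Finset.sum_add_distrib,
    sum_add_right (fun j => η j ^ 2), ← Finset.mul_sum, autocorr, sqSum]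
  ring

theorem interactionForm_eq (hW : Integrable W) (h : ℝ) (η : ZMod N → ℝ) :
    interactionForm W h η = ∫ t, W t * autocorr η (⌊t / h⌋ : ℤ) := by
  rw [interactionForm, sum_mul_latticeConv hW]
  congr 1 with t
  have : ∑ j, η j * symmShift η j ⌊t / h⌋ =
      (autocorr η (-(⌊t / h⌋ : ℤ)) + autocorr η (⌊t / h⌋ : ℤ)) / 2 := by
    rw [autocorr, autocorr, ← Finset.sum_add_distrib, Finset.sum_div]
    exact Finset.sum_congr rfl fun j _ => by simp only [symmShift, sub_eq_add_neg]; ring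
  rw [this, autocorr_neg, add_self_div_two]

theorem abs_interactionForm_le (hW : Integrable W) (h : ℝ) (η : ZMod N → ℝ) :
    |interactionForm W h η| ≤ (∫ t, |W t|) * sqSum η := by
  rw [interactionForm_eq hW]
  exact abs_integral_mul_comp_floor_div_le hW h (f := fun n => autocorr η (n : ZMod N))
    fun n => abs_autocorr_le η _

theorem mul_sqSum_le_of_le_symbol (hW : Integrable W) {b : ℝ}
    (hb : ∀ θ, |θ| ≤ Real.pi →
      b ≤ (1 - Real.cos θ) / h ^ 2 + ∫ t, W t * Real.cos (θ * ⌊t / h⌋))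
    (η : ZMod N → ℝ) : b * sqSum η ≤ dirichletSum h η / 2 + interactionForm W h η := by
  obtain ⟨P, hP₀, hP⟩ := exists_autocorr_eq_sum_cos η
  set θ : ZMod N → ℝ := fun k => 2 * Real.pi * k.valMinAbs / N
  have hnorm : sqSum η = ∑ k, P k := by simpa [autocorr_zero, sqSum] using hP 0
  have hone : autocorr η 1 = ∑ k, P k * Real.cos (θ k) := by simpa using hP 1
  have hform : interactionForm W h η = ∑ k, P k * ∫ t, W t * Real.cos (θ k * ⌊t / h⌋) := by
    simp only [interactionForm_eq hW, hP, ← integral_const_mul]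
    rw [← integral_finsetSum]
    · congr 1 with t
      rw [Finset.mul_sum]
      exact Finset.sum_congr rfl fun k _ => mul_left_comm _ _ _
    · exact fun k _ => (integrable_mul_comp_floor_div hW h (f := fun n => Real.cos (θ k * n))
        fun _ => Real.abs_cos_le_one _).const_mul _
  calc b * sqSum η = ∑ k, P k * b := by rw [hnorm, mul_comm, Finset.sum_mul]
    _ ≤ ∑ k, P k * ((1 - Real.cos (θ k)) / h ^ 2 + ∫ t, W t * Real.cos (θ k * ⌊t / h⌋)) :=
        Finset.sum_le_sum fun k _ =>
          mul_le_mul_of_nonneg_left (hb _ (abs_two_pi_mul_valMinAbs_div_le k)) (hP₀ k)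
    _ = dirichletSum h η / 2 + interactionForm W h η := by
        rw [dirichletSum_eq, hform, hnorm, hone]
        simp only [mul_add, Finset.sum_add_distrib, mul_div_assoc', mul_sub, mul_one,
          ← Finset.sum_div, Finset.sum_sub_distrib]
        ring

end LatticeForms

/-- Coercivity of the lattice energy linearised at the constant state, with a margin: after giving
up the fraction `s` of the kinetic term it still dominates `μ` times the squared `ℓ²` norm and `κ`
times the squared `H¹` norm. -/
def IsCoercive (W : ℝ → ℝ) (μ s κ h : ℝ) (N : ℕ) [NeZero N] : Prop :=
  ∀ η : ZMod N → ℝ, μ * sqSum η + κ * (dirichletSum h η + sqSum η) ≤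
    (1 - s) / 2 * dirichletSum h η + interactionForm W h η

theorem exists_isCoercive {W : ℝ → ℝ} (hW : Integrable W) {σ μ : ℝ}
    (hσ : ∀ ξ, σ ≤ cosTransform W ξ + ξ ^ 2 / 2) (hμ₀ : 0 ≤ μ) (hμ : μ < σ) :
    ∃ s κ h₀ : ℝ, 0 < s ∧ s < 1 ∧ 0 < κ ∧ 0 < h₀ ∧
      ∀ h, 0 < h → h < h₀ → ∀ (N : ℕ) [NeZero N], IsCoercive W μ s κ h N := by
  set w := ∫ t, |W t|
  have : 0 ≤ w := integral_nonneg fun _ => abs_nonneg _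
  obtain ⟨ε, rfl⟩ : ∃ ε, σ = μ + 4 * ε := ⟨(σ - μ) / 4, by ring⟩
  have hε : 0 < ε := by linarith
  obtain ⟨h₀, hh₀, hsymbol⟩ := exists_forall_le_symbol hW hσ hε
  obtain ⟨s, hs, hs₁, hs₂⟩ : ∃ s > 0, s ≤ 1 / 4 ∧ s * (2 * (μ + 4 * ε + w)) ≤ ε :=
    ⟨min (1 / 4) (ε / (2 * (μ + 4 * ε + w))), by positivity, min_le_left _ _,
      (le_div_iff₀ (by positivity)).1 (min_le_right _ _)⟩
  obtain ⟨κ, hκ, hκ₁, hκ₂⟩ : ∃ κ > 0, κ ≤ s / 2 ∧ κ ≤ ε :=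
    ⟨min (s / 2) ε, by positivity, min_le_left _ _, min_le_right _ _⟩
  refine ⟨s, κ, h₀, hs, by linarith, hκ, hh₀, fun h hh hlt N _ η => ?_⟩
  have hn := sqSum_nonneg η
  have hd := dirichletSum_nonneg h η
  have hgap := mul_le_mul_of_nonneg_left
    (mul_sqSum_le_of_le_symbol hW (hsymbol h hh hlt) η) (by linarith : 0 ≤ 1 - 2 * s)
  have hform := mul_le_mul_of_nonneg_left
    (abs_le.1 (abs_interactionForm_le hW h η)).1 (by linarith : 0 ≤ 2 * s)
  have hκd : κ * dirichletSum h η ≤ s / 2 * dirichletSum h η := by gcongr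
  have hκn : κ * sqSum η ≤ ε * sqSum η := by gcongr
  have hsn : s * (2 * (μ + 4 * ε + w)) * sqSum η ≤ ε * sqSum η := by gcongr
  have : 0 ≤ s * ε * sqSum η := by positivity
  have : 0 ≤ ε * sqSum η := by positivity
  nlinarith

section LatticeFunctionals

variable {N : ℕ} {W : ℝ → ℝ} {h : ℝ}

/-- The open set of everywhere positive moduli `ρ`, on which the phase energy is finite. -/
def positiveCone (N : ℕ) : Set (ZMod N → ℝ) := {ρ | ∀ j, 0 < ρ j}

/-- The mass defect `1 - ρ²` of a modulus `ρ`, on a lattice or on the line. -/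
def massDefect {ι : Type*} (ρ : ι → ℝ) (j : ι) : ℝ := 1 - ρ j ^ 2

theorem isOpen_positiveCone [NeZero N] : IsOpen (positiveCone N) := by
  simp only [positiveCone, ofPred_forall]
  exact isOpen_iInter_of_finite fun j => isOpen_lt continuous_const (continuous_apply j)

theorem continuousOn_inv_apply (j : ZMod N) :
    ContinuousOn (fun ρ : ZMod N → ℝ => (ρ j)⁻¹) (positiveCone N) :=
  ContinuousOn.inv₀ (by fun_prop) fun _ hρ => (hρ j).ne'

theorem hasDerivAt_apply_add_smul {ι : Type*} (ρ w : ι → ℝ) (j : ι) :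
    HasDerivAt (fun s : ℝ => (ρ + s • w) j) (w j) 0 := by
  simpa using ((hasDerivAt_id (0 : ℝ)).mul_const (w j)).const_add (ρ j)

theorem hasDerivAt_massDefect (ρ w : ZMod N → ℝ) :
    HasDerivAt (fun s : ℝ => massDefect (ρ + s • w)) (fun j => -2 * ρ j * w j) 0 := by
  refine hasDerivAt_pi.2 fun j =>
    (((hasDerivAt_apply_add_smul ρ w j).pow 2).const_sub 1).congr_deriv ?_
  simp

variable [NeZero N]

/-- The lattice version of the hydrodynamic energy `∫ ρ'² / 2 + ∫ (W ⋆ (1 - ρ²)) (1 - ρ²) / 4`. -/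
noncomputable def latticeEnergy (W : ℝ → ℝ) (h : ℝ) (ρ : ZMod N → ℝ) : ℝ :=
  h * (dirichletSum h ρ / 2 + interactionForm W h (massDefect ρ) / 4)

/-- The lattice version of `∫ (ρ - 1 / ρ)²`. For `u = ρ exp (i θ)` solving the equation with speed
`c`, the kinetic energy `∫ ρ² θ'² / 2` of the phase is `c² / 8` times this integral. -/
noncomputable def phaseEnergy (h : ℝ) (ρ : ZMod N → ℝ) : ℝ := h * ∑ j, (ρ j - (ρ j)⁻¹) ^ 2

/-- The gradient of `latticeEnergy W h`. -/
noncomputable def energyGradient (W : ℝ → ℝ) (h : ℝ) (ρ : ZMod N → ℝ) (j : ZMod N) : ℝ :=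
  h * (-(ρ (j + 1) - 2 * ρ j + ρ (j - 1)) / h ^ 2 - ρ j * latticeConv W h (massDefect ρ) j)

/-- The gradient of `phaseEnergy h`. -/
noncomputable def phaseGradient (h : ℝ) (ρ : ZMod N → ℝ) (j : ZMod N) : ℝ :=
  h * (2 * (ρ j - (ρ j)⁻¹) * (1 + (ρ j)⁻¹ ^ 2))

theorem sum_sub_mul_succ (ρ w : ZMod N → ℝ) :
    ∑ j, (ρ (j + 1) - ρ j) * w (j + 1) = ∑ j, (ρ j - ρ (j - 1)) * w j := by
  simpa using sum_add_right (fun j => (ρ j - ρ (j - 1)) * w j) 1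

theorem sum_neg_laplacian_mul (ρ w : ZMod N → ℝ) :
    ∑ j, -(ρ (j + 1) - 2 * ρ j + ρ (j - 1)) * w j =
      ∑ j, (ρ (j + 1) - ρ j) * (w (j + 1) - w j) := by
  simp only [mul_sub (_ - _), Finset.sum_sub_distrib]
  rw [sum_sub_mul_succ, ← Finset.sum_sub_distrib]
  exact Finset.sum_congr rfl fun j _ => by ring

theorem hasDerivAt_dirichletSum (h : ℝ) (ρ w : ZMod N → ℝ) :
    HasDerivAt (fun s : ℝ => dirichletSum h (ρ + s • w))
      (2 / h ^ 2 * ∑ j, -(ρ (j + 1) - 2 * ρ j + ρ (j - 1)) * w j) 0 := by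
  rw [sum_neg_laplacian_mul, Finset.mul_sum]
  refine HasDerivAt.fun_sum fun j _ =>
    ((((hasDerivAt_apply_add_smul ρ w (j + 1)).sub
      (hasDerivAt_apply_add_smul ρ w j)).div_const h).pow 2).congr_deriv ?_
  simp
  ring

theorem hasDerivAt_interactionForm (hW : Integrable W) (h : ℝ) {f : ℝ → ZMod N → ℝ}
    {f' : ZMod N → ℝ} {s : ℝ} (hf : HasDerivAt f f' s) :
    HasDerivAt (fun s => interactionForm W h (f s))
      (2 * ∑ j, f' j * latticeConv W h (f s) j) s := by
  have hconv : HasDerivAt (fun s => latticeConv W h (f s)) (latticeConv W h f') s :=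
    (((isLinearMap_latticeConv hW h).mk'
      _).toContinuousLinearMap.hasFDerivAt (x := f s)).comp_hasDerivAt s hf
  refine (HasDerivAt.fun_sum fun j _ =>
    (hasDerivAt_pi.1 hf j).mul (hasDerivAt_pi.1 hconv j)).congr_deriv ?_
  rw [Finset.sum_add_distrib, sum_mul_latticeConv_comm hW h f' (f s), two_mul]

theorem hasContGradientOn_latticeEnergy (hW : Integrable W) (h : ℝ) (U : Set (ZMod N → ℝ)) :
    HasContGradientOn (latticeEnergy W h) (energyGradient W h) U := by
  have hconv (j : ZMod N) : Continuous fun ρ => latticeConv W h (massDefect ρ) j :=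
    (continuous_apply j).comp <| ((isLinearMap_latticeConv hW h).mk'
      _).continuous_of_finiteDimensional.comp (by unfold massDefect; fun_prop)
  refine ⟨Continuous.continuousOn ?_, Continuous.continuousOn ?_, fun ρ _ w => ?_⟩
  · unfold latticeEnergy dirichletSum interactionForm massDefect at *
    fun_prop
  · unfold energyGradient
    fun_prop
  · refine ((((hasDerivAt_dirichletSum h ρ w).div_const 2).add ((hasDerivAt_interactionForm hW h
      (hasDerivAt_massDefect ρ w)).div_const 4)).const_mul h).congr_deriv ?_
    simp only [dotProduct, energyGradient, zero_smul, add_zero, Finset.mul_sum, Finset.sum_div,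
      ← Finset.sum_add_distrib]
    exact Finset.sum_congr rfl fun j _ => by ring

theorem hasContGradientOn_phaseEnergy (h : ℝ) :
    HasContGradientOn (phaseEnergy h) (phaseGradient h) (positiveCone N) := by
  have hinv := continuousOn_inv_apply (N := N)
  refine ⟨?_, continuousOn_pi.2 fun j => ?_, fun ρ hρ w => ?_⟩
  · exact continuousOn_const.mul (continuousOn_finsetSum _ fun j _ => by have := hinv j; fun_prop)
  · have := hinv j
    unfold phaseGradient
    fun_prop
  · refine ((HasDerivAt.fun_sum fun j _ => ((hasDerivAt_apply_add_smul ρ w j).fun_sub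
      ((hasDerivAt_apply_add_smul ρ w j).fun_inv (by simpa using (hρ j).ne'))).fun_pow
        2).const_mul h).congr_deriv ?_
    simp only [dotProduct, phaseGradient, Finset.mul_sum]
    refine Finset.sum_congr rfl fun j _ => ?_
    have := (hρ j).ne'
    simp
    field_simp
    ring

theorem phaseEnergy_nonneg (hh : 0 ≤ h) (ρ : ZMod N → ℝ) : 0 ≤ phaseEnergy h ρ :=
  mul_nonneg hh (Finset.sum_nonneg fun _ _ => sq_nonneg _)

theorem sub_inv_sq_le_of_phaseEnergy_le (hh : 0 < h) {ρ : ZMod N → ℝ} {M : ℝ}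
    (hM : phaseEnergy h ρ ≤ M) (j : ZMod N) : (ρ j - (ρ j)⁻¹) ^ 2 ≤ M / h := by
  rw [le_div_iff₀' hh]
  refine le_trans (mul_le_mul_of_nonneg_left ?_ hh.le) hM
  exact Finset.single_le_sum (f := fun j => (ρ j - (ρ j)⁻¹) ^ 2) (fun _ _ => sq_nonneg _)
    (Finset.mem_univ j)

theorem le_two_add_of_sub_inv_sq_le {x K : ℝ} (hx : 0 < x) (h : (x - x⁻¹) ^ 2 ≤ K) :
    x ≤ 2 + K := by
  by_contra! hlt
  have hK : 0 ≤ K := (sq_nonneg _).trans h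
  have : x⁻¹ < 1 := inv_lt_one_of_one_lt₀ (by linarith)
  nlinarith

theorem mem_Icc_of_sub_inv_sq_le {x K : ℝ} (hx : 0 < x) (h : (x - x⁻¹) ^ 2 ≤ K) :
    x ∈ Icc (2 + K)⁻¹ (2 + K) := by
  refine ⟨?_, le_two_add_of_sub_inv_sq_le hx h⟩
  have hK : 0 ≤ K := (sq_nonneg _).trans h
  rw [inv_le_comm₀ (by positivity) hx]
  exact le_two_add_of_sub_inv_sq_le (inv_pos.2 hx) (by rwa [inv_inv, ← neg_sub, neg_sq])

theorem isCompact_phaseEnergy_le (hh : 0 < h) (M : ℝ) :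
    IsCompact {ρ | ρ ∈ positiveCone N ∧ phaseEnergy h ρ ≤ M} := by
  rcases lt_or_ge M 0 with hM | hM
  · convert isCompact_empty
    exact eq_empty_iff_forall_notMem.2 fun ρ hρ =>
      (hρ.2.trans_lt hM).not_ge (phaseEnergy_nonneg hh.le ρ)
  set K := M / h
  have hK : 0 < (2 + K)⁻¹ := by positivity
  set box : Set (ZMod N → ℝ) := Icc (fun _ => (2 + K)⁻¹) (fun _ => 2 + K)
  have hpos : box ⊆ positiveCone N := fun ρ hρ j => hK.trans_le (hρ.1 j)
  have heq : {ρ | ρ ∈ positiveCone N ∧ phaseEnergy h ρ ≤ M} = box ∩ phaseEnergy h ⁻¹' Iic M := by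
    ext ρ
    refine ⟨fun ⟨hρ, hle⟩ => ?_, fun ⟨hρ, hle⟩ => ⟨hpos hρ, hle⟩⟩
    have hIcc (j : ZMod N) := mem_Icc_of_sub_inv_sq_le (hρ j)
      (sub_inv_sq_le_of_phaseEnergy_le hh hle j)
    exact ⟨⟨fun j => (hIcc j).1, fun j => (hIcc j).2⟩, hle⟩
  rw [heq]
  exact isCompact_Icc.of_isClosed_subset (((hasContGradientOn_phaseEnergy
    h).continuousOn.mono hpos).preimage_isClosed_of_isClosed isClosed_Icc isClosed_Iic)
    inter_subset_left

end LatticeFunctionals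

section LocalEstimates

variable {N : ℕ} [NeZero N] {W : ℝ → ℝ} {h μ s κ r c : ℝ} {ρ : ZMod N → ℝ}

theorem abs_sq_sub_sq_le {h a : ℝ} (hh : 0 < h) (ha : 0 < a) (x y : ℝ) :
    |x ^ 2 - y ^ 2| ≤ h * (a / 2 * ((x - y) / h) ^ 2 + a⁻¹ * (x ^ 2 + y ^ 2)) := by
  have hsq : h * (a / 2 * ((x - y) / h) ^ 2 + a⁻¹ * (x ^ 2 + y ^ 2)) - |x - y| * |x + y| =
      h * ((a * (|x - y| / h) - |x + y|) ^ 2 + (x - y) ^ 2) / (2 * a) := by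
    have h₁ : |x - y| ^ 2 = (x - y) ^ 2 := sq_abs _
    have h₂ : |x + y| ^ 2 = (x + y) ^ 2 := sq_abs _
    field_simp
    linear_combination (-a ^ 2) * h₁ - h ^ 2 * h₂
  rw [show x ^ 2 - y ^ 2 = (x - y) * (x + y) by ring, abs_mul, ← sub_nonneg, hsq]
  positivity

theorem sq_apply_le (hh : 0 < h) (hN : 1 ≤ N * h) {a : ℝ} (ha : 0 < a) (η : ZMod N → ℝ)
    (j : ZMod N) :
    η j ^ 2 ≤ h * sqSum η + h * (a / 2 * dirichletSum h η + 2 * a⁻¹ * sqSum η) := by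
  obtain ⟨k, hk⟩ := exists_card_mul_le_sum fun j => η j ^ 2
  have hmin : η k ^ 2 ≤ h * sqSum η := by
    have : h * (N * η k ^ 2) ≤ h * sqSum η := mul_le_mul_of_nonneg_left hk hh.le
    nlinarith [sq_nonneg (η k)]
  have hvar : |η j ^ 2 - η k ^ 2| ≤ h * (a / 2 * dirichletSum h η + 2 * a⁻¹ * sqSum η) :=
    calc |η j ^ 2 - η k ^ 2| ≤ ∑ i, |η (i + 1) ^ 2 - η i ^ 2| :=
          abs_sub_le_sum_abs_sub (fun j => η j ^ 2) j k
      _ ≤ ∑ i, h * (a / 2 * ((η (i + 1) - η i) / h) ^ 2 + a⁻¹ * (η (i + 1) ^ 2 + η i ^ 2)) :=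
          Finset.sum_le_sum fun i _ => abs_sq_sub_sq_le hh ha _ _
      _ = h * (a / 2 * dirichletSum h η + 2 * a⁻¹ * sqSum η) := by
          rw [← Finset.mul_sum, Finset.sum_add_distrib, ← Finset.mul_sum, ← Finset.mul_sum,
            Finset.sum_add_distrib, sum_add_right (fun i => η i ^ 2), dirichletSum, sqSum]
          ring
  linarith [le_abs_self (η j ^ 2 - η k ^ 2)]

/-- The radius `r` is so small that the coercivity of the linearised energy with constants `μ` and
`s` is inherited by the action of speed `c` at all moduli within uniform distance `r` of `1`. -/
structure IsCoerciveRadius (μ s c r : ℝ) : Prop where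
  pos : 0 < r
  lt_one : r < 1
  nonneg : 0 ≤ μ
  le_one : s ≤ 1
  kinetic : (1 - s) * (1 + r) ^ 4 ≤ 1
  phase : c ^ 2 / 2 ≤ μ * (1 - r) ^ 4

theorem sub_inv_sq {x : ℝ} (hx : x ≠ 0) : (x - x⁻¹) ^ 2 = (1 - x ^ 2) ^ 2 * x⁻¹ ^ 2 := by
  field_simp
  ring

namespace IsCoerciveRadius

theorem one_sub_pos (hr : IsCoerciveRadius μ s c r) : 0 < 1 - r := sub_pos.2 hr.lt_one

theorem mem_Icc {x : ℝ} (hx : |x - 1| ≤ r) : x ∈ Icc (1 - r) (1 + r) := by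
  constructor <;> linarith [abs_le.1 hx]

theorem dirichletSum_massDefect_le (hr : IsCoerciveRadius μ s c r) (hρ : ∀ j, |ρ j - 1| ≤ r) :
    (1 - s) / 2 * dirichletSum h (massDefect ρ) ≤
      ∑ j, ((ρ (j + 1) - ρ j) / h) ^ 2 * (2 / (1 + r) ^ 2) := by
  have := hr.pos
  have := hr.one_sub_pos
  have hs : 0 ≤ 1 - s := sub_nonneg.2 hr.le_one
  rw [dirichletSum, Finset.mul_sum]
  refine Finset.sum_le_sum fun j _ => ?_
  have hfactor : (1 - s) / 2 * (ρ (j + 1) + ρ j) ^ 2 ≤ 2 / (1 + r) ^ 2 := by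
    rw [le_div_iff₀ (by positivity)]
    have hsum : (ρ (j + 1) + ρ j) ^ 2 ≤ (2 * (1 + r)) ^ 2 := by
      have h₁ := mem_Icc (hρ j)
      have h₂ := mem_Icc (hρ (j + 1))
      refine pow_le_pow_left₀ ?_ ?_ 2 <;> linarith [h₁.1, h₁.2, h₂.1, h₂.2]
    calc (1 - s) / 2 * (ρ (j + 1) + ρ j) ^ 2 * (1 + r) ^ 2
        ≤ (1 - s) / 2 * (2 * (1 + r)) ^ 2 * (1 + r) ^ 2 := by gcongr
      _ = 2 * ((1 - s) * (1 + r) ^ 4) := by ring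
      _ ≤ 2 := by linarith [hr.kinetic]
  calc (1 - s) / 2 * ((massDefect ρ (j + 1) - massDefect ρ j) / h) ^ 2
      = ((ρ (j + 1) - ρ j) / h) ^ 2 * ((1 - s) / 2 * (ρ (j + 1) + ρ j) ^ 2) := by
        unfold massDefect; ring
    _ ≤ _ := mul_le_mul_of_nonneg_left hfactor (sq_nonneg _)

theorem inv_sq_le (hr : IsCoerciveRadius μ s c r) {x : ℝ} (hx : |x - 1| ≤ r) :
    x⁻¹ ^ 2 ≤ (1 - r)⁻¹ ^ 2 := by
  have := hr.one_sub_pos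
  have := (mem_Icc hx).1
  have : 0 < x := by linarith
  gcongr

theorem mul_inv_sq_mul_one_add_inv_sq_le (hr : IsCoerciveRadius μ s c r) {x : ℝ}
    (hx : |x - 1| ≤ r) : c ^ 2 / 4 * (x⁻¹ ^ 2 * (1 + x⁻¹ ^ 2)) ≤ μ := by
  have hpos := hr.one_sub_pos
  have hone : 1 ≤ (1 - r)⁻¹ ^ 2 :=
    one_le_pow₀ ((one_le_inv₀ hpos).2 (by linarith [hr.pos]))
  have hinv := hr.inv_sq_le hx
  calc c ^ 2 / 4 * (x⁻¹ ^ 2 * (1 + x⁻¹ ^ 2))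
      ≤ c ^ 2 / 4 * ((1 - r)⁻¹ ^ 2 * ((1 - r)⁻¹ ^ 2 + (1 - r)⁻¹ ^ 2)) := by gcongr
    _ = c ^ 2 / 2 / (1 - r) ^ 4 := by field_simp; ring
    _ ≤ μ := (div_le_iff₀ (by positivity)).2 hr.phase

theorem mul_inv_sq_le (hr : IsCoerciveRadius μ s c r) {x : ℝ} (hx : |x - 1| ≤ r) :
    c ^ 2 / 2 * x⁻¹ ^ 2 ≤ μ := by
  have hpos := hr.one_sub_pos
  calc c ^ 2 / 2 * x⁻¹ ^ 2 ≤ μ * (1 - r) ^ 4 * (1 - r)⁻¹ ^ 2 :=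
        mul_le_mul hr.phase (hr.inv_sq_le hx) (by positivity) (mul_nonneg hr.nonneg (by positivity))
    _ = μ * (1 - r) ^ 2 := by field_simp
    _ ≤ μ := mul_le_of_le_one_right hr.nonneg (pow_le_one₀ hpos.le (by linarith [hr.pos]))

theorem mul_le_latticeEnergy_sub (hr : IsCoerciveRadius μ s c r)
    (hco : IsCoercive W μ s κ h N) (hh : 0 ≤ h) (hρ : ∀ j, |ρ j - 1| ≤ r) :
    h * κ / 4 * (dirichletSum h (massDefect ρ) + sqSum (massDefect ρ)) ≤
      latticeEnergy W h ρ - c ^ 2 / 8 * phaseEnergy h ρ := by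
  have hr₀ := hr.pos
  have hr₁ := hr.one_sub_pos
  have hkin : (1 - s) / 2 * dirichletSum h (massDefect ρ) ≤ 2 * dirichletSum h ρ := by
    refine (hr.dirichletSum_massDefect_le hρ).trans ?_
    rw [← Finset.sum_mul, mul_comm]
    refine mul_le_mul_of_nonneg_right ?_ (dirichletSum_nonneg h ρ)
    exact div_le_self zero_le_two (one_le_pow₀ (by linarith))
  have hphase : c ^ 2 / 2 * ∑ j, (ρ j - (ρ j)⁻¹) ^ 2 ≤ μ * sqSum (massDefect ρ) := by
    rw [sqSum, Finset.mul_sum, Finset.mul_sum]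
    refine Finset.sum_le_sum fun j _ => ?_
    have hpos : 0 < ρ j := by linarith [(mem_Icc (hρ j)).1]
    rw [sub_inv_sq hpos.ne', mul_left_comm, mul_comm μ]
    exact mul_le_mul_of_nonneg_left (hr.mul_inv_sq_le (hρ j)) (sq_nonneg _)
  have hquad := hco (massDefect ρ)
  calc h * κ / 4 * (dirichletSum h (massDefect ρ) + sqSum (massDefect ρ))
      = h * (κ / 4 * (dirichletSum h (massDefect ρ) + sqSum (massDefect ρ))) := by ring
    _ ≤ h * (dirichletSum h ρ / 2 + interactionForm W h (massDefect ρ) / 4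
          - c ^ 2 / 8 * ∑ j, (ρ j - (ρ j)⁻¹) ^ 2) :=
        mul_le_mul_of_nonneg_left (by linarith) hh
    _ = latticeEnergy W h ρ - c ^ 2 / 8 * phaseEnergy h ρ := by
        unfold latticeEnergy phaseEnergy; ring

end IsCoerciveRadius

/-- Testing the equation with `ρ - 1 / ρ`, for which `ρ (ρ - 1 / ρ)` is minus the mass defect. -/
theorem sum_eq_of_energyGradient_eq (hh : h ≠ 0) (hρ : ρ ∈ positiveCone N)
    (hcrit : energyGradient W h ρ = (c ^ 2 / 8) • phaseGradient h ρ) :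
    ∑ j, ((ρ (j + 1) - ρ j) / h) ^ 2 * (1 + (ρ (j + 1))⁻¹ * (ρ j)⁻¹)
        + interactionForm W h (massDefect ρ)
      = c ^ 2 / 4 * ∑ j, (ρ j - (ρ j)⁻¹) ^ 2 * (1 + (ρ j)⁻¹ ^ 2) := by
  set w : ZMod N → ℝ := fun j => ρ j - (ρ j)⁻¹
  have hkinetic : (h ^ 2)⁻¹ * ∑ j, -(ρ (j + 1) - 2 * ρ j + ρ (j - 1)) * w j =
      ∑ j, ((ρ (j + 1) - ρ j) / h) ^ 2 * (1 + (ρ (j + 1))⁻¹ * (ρ j)⁻¹) := by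
    rw [sum_neg_laplacian_mul, Finset.mul_sum]
    refine Finset.sum_congr rfl fun j _ => ?_
    have := (hρ j).ne'
    have := (hρ (j + 1)).ne'
    simp only [w]
    field_simp
    ring
  have hpotential : -∑ j, ρ j * w j * latticeConv W h (massDefect ρ) j =
      interactionForm W h (massDefect ρ) := by
    rw [interactionForm, ← Finset.sum_neg_distrib]
    refine Finset.sum_congr rfl fun j _ => ?_
    have := (hρ j).ne'
    simp only [w, massDefect]
    field_simp
    ring
  have hpointwise (j : ZMod N) : (h ^ 2)⁻¹ * (-(ρ (j + 1) - 2 * ρ j + ρ (j - 1)) * w j)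
      - ρ j * w j * latticeConv W h (massDefect ρ) j
      = c ^ 2 / 4 * (w j ^ 2 * (1 + (ρ j)⁻¹ ^ 2)) := by
    have := congrFun hcrit j
    simp only [energyGradient, phaseGradient, Pi.smul_apply, smul_eq_mul] at this
    refine mul_left_cancel₀ hh ?_
    linear_combination w j * this
  rw [← hkinetic, ← hpotential, Finset.mul_sum, Finset.mul_sum, ← sub_eq_add_neg,
    ← Finset.sum_sub_distrib]
  exact Finset.sum_congr rfl fun j _ => hpointwise j

namespace IsCoerciveRadius

theorem sqSum_massDefect_eq_zero (hr : IsCoerciveRadius μ s c r)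
    (hco : IsCoercive W μ s κ h N) (hh : h ≠ 0) (hκ : 0 < κ) (hρ : ∀ j, |ρ j - 1| ≤ r)
    (hcrit : energyGradient W h ρ = (c ^ 2 / 8) • phaseGradient h ρ) :
    sqSum (massDefect ρ) = 0 := by
  have hr₀ := hr.pos
  have hpos (j : ZMod N) : 0 < ρ j := by linarith [(mem_Icc (hρ j)).1, hr.lt_one]
  have hkin : (1 - s) / 2 * dirichletSum h (massDefect ρ) ≤
      ∑ j, ((ρ (j + 1) - ρ j) / h) ^ 2 * (1 + (ρ (j + 1))⁻¹ * (ρ j)⁻¹) := by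
    refine (hr.dirichletSum_massDefect_le hρ).trans (Finset.sum_le_sum fun j _ =>
      mul_le_mul_of_nonneg_left ?_ (sq_nonneg _))
    have hinv (j : ZMod N) : (1 + r)⁻¹ ≤ (ρ j)⁻¹ := inv_anti₀ (hpos j) (mem_Icc (hρ j)).2
    calc 2 / (1 + r) ^ 2 = (1 + r)⁻¹ * (1 + r)⁻¹ + (1 + r)⁻¹ * (1 + r)⁻¹ := by field_simp; ring
      _ ≤ 1 * 1 + (ρ (j + 1))⁻¹ * (ρ j)⁻¹ := by
          have hle : (1 + r)⁻¹ ≤ 1 := inv_le_one_of_one_le₀ (by linarith)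
          exact add_le_add (mul_le_mul hle hle (by positivity) zero_le_one)
            (mul_le_mul (hinv _) (hinv _) (by positivity) (inv_pos.2 (hpos _)).le)
      _ = _ := by ring
  have hphase : c ^ 2 / 4 * ∑ j, (ρ j - (ρ j)⁻¹) ^ 2 * (1 + (ρ j)⁻¹ ^ 2) ≤
      μ * sqSum (massDefect ρ) := by
    rw [sqSum, Finset.mul_sum, Finset.mul_sum]
    refine Finset.sum_le_sum fun j _ => ?_
    rw [sub_inv_sq (hpos j).ne', mul_assoc, mul_left_comm, mul_comm μ]
    exact mul_le_mul_of_nonneg_left (hr.mul_inv_sq_mul_one_add_inv_sq_le (hρ j)) (sq_nonneg _)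
  have htest := sum_eq_of_energyGradient_eq hh hpos hcrit
  have hle : κ * (dirichletSum h (massDefect ρ) + sqSum (massDefect ρ)) ≤ 0 := by
    linarith [hco (massDefect ρ)]
  nlinarith [sqSum_nonneg (massDefect ρ), dirichletSum_nonneg h (massDefect ρ)]

theorem exists_lt_abs_sub_one (hr : IsCoerciveRadius μ s c r) (hco : IsCoercive W μ s κ h N)
    (hW : Integrable W) (hh : 0 < h) (hκ : 0 < κ) (hρ : ρ ∈ positiveCone N)
    (hcrit : energyGradient W h ρ = (c ^ 2 / 8) • phaseGradient h ρ)
    (hJ : 0 < latticeEnergy W h ρ - c ^ 2 / 8 * phaseEnergy h ρ) : ∃ j, r < |ρ j - 1| := by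
  by_contra! hclose
  have hzero := hr.sqSum_massDefect_eq_zero hco hh.ne' hκ hclose hcrit
  have hone : ρ = 1 := by
    funext j
    have := (Finset.sum_eq_zero_iff_of_nonneg fun _ _ => sq_nonneg _).1 hzero j (Finset.mem_univ j)
    have hj : 1 - ρ j ^ 2 = 0 := pow_eq_zero_iff two_ne_zero |>.1 this
    exact (pow_eq_one_iff_of_nonneg (hρ j).le two_ne_zero).1 (by linarith)
  have hform : interactionForm W h (massDefect ρ) = 0 := by
    simpa [hzero] using abs_interactionForm_le hW h (massDefect ρ)
  have hkin : dirichletSum h ρ = 0 := by simp [dirichletSum, hone]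
  have hphase := mul_nonneg (sq_nonneg c) (phaseEnergy_nonneg hh.le ρ)
  rw [latticeEnergy, hform, hkin] at hJ
  linarith

end IsCoerciveRadius

end LocalEstimates

section TestPath

/-- The tent of height and half-width `1` centred at `1`. -/
noncomputable def tent (x : ℝ) : ℝ := max 0 (1 - |x - 1|)

theorem tent_mem_Icc (x : ℝ) : tent x ∈ Icc 0 1 :=
  ⟨le_max_left _ _, max_le zero_le_one (by linarith [abs_nonneg (x - 1)])⟩

theorem tent_zero : tent 0 = 0 := by simp [tent]

theorem tent_one : tent 1 = 1 := by simp [tent]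

theorem tent_of_two_le {x : ℝ} (hx : 2 ≤ x) : tent x = 0 :=
  max_eq_left (by linarith [le_abs_self (x - 1)])

theorem abs_tent_sub_le (x y : ℝ) : |tent x - tent y| ≤ |x - y| := by
  calc |tent x - tent y| ≤ |(1 - |x - 1|) - (1 - |y - 1|)| := by
        simpa only [tent, max_comm] using abs_max_sub_max_le_abs (1 - |x - 1|) (1 - |y - 1|) 0
    _ = |(|y - 1| - |x - 1|)| := by ring_nf
    _ ≤ |(y - 1) - (x - 1)| := abs_abs_sub_abs_le _ _
    _ = |x - y| := by rw [abs_sub_comm]; ring_nf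

variable {N : ℕ} {W : ℝ → ℝ} {h : ℝ}

theorem card_filter_val_lt_le [NeZero N] (m : ℕ) : #{j : ZMod N | j.val < m} ≤ m := by
  refine (Finset.card_le_card_of_injOn ZMod.val (fun j hj => ?_)
    (ZMod.val_injective N).injOn).trans (Finset.card_range m).le
  simpa using hj

/-- The tent sampled on the lattice of mesh `h`. -/
noncomputable def latticeTent (N : ℕ) (h : ℝ) (j : ZMod N) : ℝ := tent (h * j.val)

theorem latticeTent_mem_Icc (h : ℝ) (j : ZMod N) : latticeTent N h j ∈ Icc 0 1 := tent_mem_Icc _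

theorem latticeTent_eq_zero {n : ℕ} (hn : n * h = 1) (hh : 0 ≤ h) {j : ZMod N}
    (hj : 2 * n ≤ j.val) : latticeTent N h j = 0 := by
  have : (2 * n : ℝ) ≤ j.val := by exact_mod_cast hj
  exact tent_of_two_le (by nlinarith)

theorem latticeTent_add_one [NeZero N] {n : ℕ} (hn : n * h = 1) (hN : 2 * n ≤ N) (hh : 0 ≤ h)
    (j : ZMod N) :
    latticeTent N h (j + 1) = tent (h * j.val + h) := by
  have hval : (j + 1).val = (j.val + 1) % N := by
    rw [← ZMod.val_natCast]
    simp
  rw [latticeTent, hval]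
  rcases (Nat.succ_le_of_lt (ZMod.val_lt j)).lt_or_eq with hlt | heq
  · rw [Nat.mod_eq_of_lt hlt]
    push_cast
    rw [mul_add_one]
  · have hwrap : j.val + 1 = N := heq
    have : (2 * n : ℝ) ≤ j.val + 1 := by exact_mod_cast hwrap ▸ hN
    rw [hwrap, Nat.mod_self, Nat.cast_zero, mul_zero, tent_zero, tent_of_two_le (by nlinarith)]

theorem exists_latticeTent_eq_one {n : ℕ} (hn : n * h = 1) (hN : n < N) :
    ∃ k, latticeTent N h k = 1 :=
  ⟨n, by rw [latticeTent, ZMod.val_natCast_of_lt hN, mul_comm, hn, tent_one]⟩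

theorem card_latticeTent_ne_zero_le [NeZero N] {n : ℕ} (hn : n * h = 1) (hh : 0 ≤ h) :
    #{j | latticeTent N h j ≠ 0} ≤ 2 * n := by
  refine (Finset.card_le_card fun j => ?_).trans (card_filter_val_lt_le (N := N) (2 * n))
  simpa using fun hj => lt_of_not_ge fun hle => hj (latticeTent_eq_zero hn hh hle)

theorem dirichletSum_latticeTent_le [NeZero N] {n : ℕ} (hn : n * h = 1) (hN : 2 * n ≤ N)
    (hh : 0 < h) :
    dirichletSum h (latticeTent N h) ≤ 2 * n := by
  have hle (j : ZMod N) : ((latticeTent N h (j + 1) - latticeTent N h j) / h) ^ 2 ≤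
      if j.val < 2 * n then 1 else 0 := by
    rw [latticeTent_add_one hn hN hh.le]
    split_ifs with hj
    · rw [div_pow, div_le_one (by positivity), sq_le_sq]
      simpa [latticeTent] using abs_tent_sub_le (h * j.val + h) (h * j.val)
    · have : (2 * n : ℝ) ≤ j.val := by exact_mod_cast not_lt.1 hj
      rw [latticeTent_eq_zero hn hh.le (not_lt.1 hj), tent_of_two_le (by nlinarith)]
      simp
  calc dirichletSum h (latticeTent N h) ≤ ∑ j : ZMod N, if j.val < 2 * n then (1 : ℝ) else 0 :=
        Finset.sum_le_sum fun j _ => hle j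
    _ = #{j : ZMod N | j.val < 2 * n} := Finset.sum_boole _ _
    _ ≤ 2 * n := by exact_mod_cast card_filter_val_lt_le (2 * n)

theorem dirichletSum_one_sub_smul [NeZero N] (h τ : ℝ) (φ : ZMod N → ℝ) :
    dirichletSum h (1 - τ • φ) = τ ^ 2 * dirichletSum h φ := by
  rw [dirichletSum, dirichletSum, Finset.mul_sum]
  refine Finset.sum_congr rfl fun j _ => ?_
  simp only [Pi.sub_apply, Pi.one_apply, Pi.smul_apply, smul_eq_mul]
  ring

theorem sqSum_massDefect_one_sub_smul_le [NeZero N] {τ : ℝ} {φ : ZMod N → ℝ} (hτ : τ ∈ Icc 0 1)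
    (hφ : ∀ j, φ j ∈ Icc 0 1) : sqSum (massDefect (1 - τ • φ)) ≤ #{j | φ j ≠ 0} := by
  rw [← Finset.sum_boole]
  refine Finset.sum_le_sum fun j _ => ?_
  simp only [massDefect, Pi.sub_apply, Pi.one_apply, Pi.smul_apply, smul_eq_mul]
  split_ifs with hj
  · have h₀ : 0 ≤ τ * φ j := mul_nonneg hτ.1 (hφ j).1
    have h₁ : τ * φ j ≤ 1 := mul_le_one₀ hτ.2 (hφ j).1 (hφ j).2
    exact pow_le_one₀ (by nlinarith) (by nlinarith)
  · simp [not_not.1 hj]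

theorem latticeEnergy_one_sub_smul_le [NeZero N] (hW : Integrable W) (hh : 0 ≤ h) {τ : ℝ}
    {φ : ZMod N → ℝ} (hτ : τ ∈ Icc 0 1) (hφ : ∀ j, φ j ∈ Icc 0 1) :
    latticeEnergy W h (1 - τ • φ) ≤
      h * (dirichletSum h φ / 2 + (∫ t, |W t|) * #{j | φ j ≠ 0} / 4) := by
  have hkin : dirichletSum h (1 - τ • φ) ≤ dirichletSum h φ := by
    rw [dirichletSum_one_sub_smul]
    exact mul_le_of_le_one_left (dirichletSum_nonneg h φ) (pow_le_one₀ hτ.1 hτ.2)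
  have hint : interactionForm W h (massDefect (1 - τ • φ)) ≤ (∫ t, |W t|) * #{j | φ j ≠ 0} :=
    (le_abs_self _).trans <| (abs_interactionForm_le hW h _).trans <|
      mul_le_mul_of_nonneg_left (sqSum_massDefect_one_sub_smul_le hτ hφ)
        (integral_nonneg fun _ => abs_nonneg _)
  unfold latticeEnergy
  gcongr

theorem latticeEnergy_one_sub_smul_latticeTent_le [NeZero N] (hW : Integrable W) {n : ℕ}
    (hn : n * h = 1) (hN : 2 * n ≤ N) (hh : 0 < h) {τ : ℝ} (hτ : τ ∈ Icc 0 1) :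
    latticeEnergy W h (1 - τ • latticeTent N h) ≤ 1 + ∫ t, |W t| := by
  have hw : 0 ≤ ∫ t, |W t| := integral_nonneg fun _ => abs_nonneg _
  have hsupp : (#{j | latticeTent N h j ≠ 0} : ℝ) ≤ 2 * n := by
    exact_mod_cast card_latticeTent_ne_zero_le (N := N) hn hh.le
  calc latticeEnergy W h (1 - τ • latticeTent N h)
      ≤ h * (2 * n / 2 + (∫ t, |W t|) * (2 * n) / 4) := by
        refine (latticeEnergy_one_sub_smul_le hW hh.le hτ (latticeTent_mem_Icc h)).trans ?_
        gcongr
        exact dirichletSum_latticeTent_le hn hN hh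
    _ = n * h * (1 + (∫ t, |W t|) / 2) := by ring
    _ ≤ 1 + ∫ t, |W t| := by rw [hn]; linarith

theorem le_sub_inv_sq {K : ℝ} (hK : 0 ≤ K) : K ≤ ((2 + K)⁻¹ - (2 + K)⁻¹⁻¹) ^ 2 := by
  have : (2 + K)⁻¹ ≤ 1 := inv_le_one_of_one_le₀ (by linarith)
  rw [inv_inv]
  nlinarith

/-- Lowering `1` at one site to almost `0` makes the phase energy arbitrarily large at a bounded
cost in energy. -/
theorem exists_path_latticeEnergy_le [NeZero N] (hW : Integrable W) {n : ℕ} (hn : n * h = 1)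
    (hN : 2 * n ≤ N) (hh : 0 < h) {K : ℝ} (hK : 0 ≤ K) :
    ∃ e : ZMod N → ℝ, 1 + ∫ t, |W t| ∈ pathBounds (positiveCone N) (latticeEnergy W h) 1 e ∧
      K ≤ phaseEnergy h e ∧ ∃ k, 1 / 2 ≤ |e k - 1| := by
  have hn₀ : 0 < n := by
    rcases n.eq_zero_or_pos with rfl | hn₀
    · simp at hn
    · exact hn₀
  obtain ⟨k, hk⟩ := exists_latticeTent_eq_one hn (by lia : n < N)
  set ε := (2 + K / h)⁻¹
  have hε : 0 < ε := by positivity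
  have hε₂ : ε ≤ 1 / 2 := by
    rw [one_div]
    exact inv_anti₀ two_pos (by linarith [div_nonneg hK hh.le])
  have hτ (t : unitInterval) : (t * (1 - ε) : ℝ) ∈ Icc 0 (1 - ε) :=
    ⟨mul_nonneg t.2.1 (by linarith), mul_le_of_le_one_left (by linarith) t.2.2⟩
  have hek : (1 - (1 - ε) • latticeTent N h) k = ε := by simp [hk]
  let γ : Path (1 : ZMod N → ℝ) (1 - (1 - ε) • latticeTent N h) :=
    { toFun := fun t => 1 - (t * (1 - ε) : ℝ) • latticeTent N h
      continuous_toFun := by fun_prop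
      source' := by simp
      target' := by simp }
  refine ⟨_, ⟨γ, fun t => ⟨fun j => ?_, ?_⟩⟩, ?_, k, ?_⟩
  · have hφ := latticeTent_mem_Icc (N := N) h j
    have := mul_le_mul (hτ t).2 hφ.2 hφ.1 (by linarith)
    simp only [γ, Path.coe_mk', ContinuousMap.coe_mk, Pi.sub_apply, Pi.one_apply, Pi.smul_apply,
      smul_eq_mul]
    linarith
  · exact latticeEnergy_one_sub_smul_latticeTent_le hW hn hN hh
      (Icc_subset_Icc_right (by linarith) (hτ t))
  · have hle := sub_inv_sq_le_of_phaseEnergy_le (ρ := 1 - (1 - ε) • latticeTent N h) hh le_rfl k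
    rw [hek] at hle
    exact (div_le_div_iff_of_pos_right hh).1 ((le_sub_inv_sq (div_nonneg hK hh.le)).trans hle)
  · rw [hek, abs_sub_comm, abs_of_nonneg] <;> linarith

end TestPath

section LatticeCriticalPoints

variable {N : ℕ} {W : ℝ → ℝ} {h μ s κ r c : ℝ}

theorem exists_norm_path_sub_eq {E : Type*} [SeminormedAddCommGroup E] {a b : E} (γ : Path a b)
    {r : ℝ} (hr₀ : 0 ≤ r) (hr : r ≤ ‖b - a‖) : ∃ t, ‖γ t - a‖ = r := by
  have hcont : Continuous fun t => ‖γ t - a‖ := by fun_prop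
  exact intermediate_value_univ 0 1 hcont ⟨by simpa using hr₀, by simpa using hr⟩

theorem sq_le_massDefect_sq {ρ : ZMod N → ℝ} {j : ZMod N} (hr : IsCoerciveRadius μ s c r)
    (hj : |ρ j - 1| = r) : r ^ 2 ≤ massDefect ρ j ^ 2 := by
  have hpos : 0 ≤ ρ j := by linarith [(IsCoerciveRadius.mem_Icc hj.le).1, hr.lt_one]
  have hfactor : massDefect ρ j = (1 - ρ j) * (1 + ρ j) := by unfold massDefect; ring
  calc r ^ 2 = (1 - ρ j) ^ 2 * 1 := by rw [← hj, sq_abs]; ring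
    _ ≤ (1 - ρ j) ^ 2 * (1 + ρ j) ^ 2 := by gcongr; exact one_le_pow₀ (by linarith)
    _ = massDefect ρ j ^ 2 := by rw [hfactor, mul_pow]

/-- Every path leaving the ball of radius `r` about `1` crosses its boundary sphere, where the
action is bounded below. -/
theorem IsCoerciveRadius.mem_lowerBounds_pathBounds [NeZero N] (hr : IsCoerciveRadius μ s c r)
    (hco : IsCoercive W μ s κ h N) (hh : 0 < h) (hN : 1 ≤ N * h) (hκ : 0 ≤ κ)
    (U : Set (ZMod N → ℝ)) {e : ZMod N → ℝ} {k : ZMod N} (hk : r ≤ |e k - 1|) :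
    κ * r ^ 2 / 8 ∈ lowerBounds
      (pathBounds U (fun ρ => latticeEnergy W h ρ - c ^ 2 / 8 * phaseEnergy h ρ) 1 e) := by
  rintro m ⟨γ, hγ⟩
  obtain ⟨t, ht⟩ := exists_norm_path_sub_eq γ hr.pos.le (hk.trans (norm_le_pi_norm (e - 1) k))
  have hclose (j : ZMod N) : |γ t j - 1| ≤ r := ht ▸ norm_le_pi_norm (γ t - 1) j
  obtain ⟨j, hj⟩ : ∃ j, r ≤ |γ t j - 1| := by
    by_contra! hlt
    exact ((pi_norm_lt_iff hr.pos).2 hlt).ne ht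
  have hdefect := (sq_le_massDefect_sq hr ((hclose j).antisymm hj)).trans
    (sq_apply_le hh hN two_pos (massDefect (γ t)) j)
  have hkin := mul_nonneg hh.le (dirichletSum_nonneg h (massDefect (γ t)))
  calc κ * r ^ 2 / 8
      ≤ κ / 8 * (2 * (h * (dirichletSum h (massDefect (γ t)) + sqSum (massDefect (γ t))))) := by
        rw [mul_div_right_comm]
        gcongr
        linarith
    _ = h * κ / 4 * (dirichletSum h (massDefect (γ t)) + sqSum (massDefect (γ t))) := by ring
    _ ≤ m := (hr.mul_le_latticeEnergy_sub hco hh.le hclose).trans (hγ t).2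

theorem exists_isCoerciveRadius (hs : 0 < s) (hs₁ : s ≤ 1) (hμ : 0 ≤ μ) (hc : c ^ 2 / 2 < μ) :
    ∃ r < 1 / 2, IsCoerciveRadius μ s c r := by
  have hkin : ∀ᶠ r in 𝓝 (0 : ℝ), (1 - s) * (1 + r) ^ 4 < 1 := by
    have : ContinuousAt (fun r : ℝ => (1 - s) * (1 + r) ^ 4) 0 := by fun_prop
    exact this.eventually_lt_const (by simpa using hs)
  have hphase : ∀ᶠ r in 𝓝 (0 : ℝ), c ^ 2 / 2 < μ * (1 - r) ^ 4 := by
    have : ContinuousAt (fun r : ℝ => μ * (1 - r) ^ 4) 0 := by fun_prop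
    exact this.eventually_const_lt (by simpa using hc)
  obtain ⟨r, ⟨h₁, h₂, h₃⟩, h₀⟩ := ((hkin.and (hphase.and
    (eventually_lt_nhds one_half_pos))).filter_mono nhdsWithin_le_nhds |>.and
    (self_mem_nhdsWithin (s := Ioi (0 : ℝ)))).exists
  exact ⟨r, h₃, h₀, by linarith, hμ, hs₁, h₁.le, h₂.le⟩

theorem exists_isCoercive_isCoerciveRadius (hW : Integrable W) {σ : ℝ}
    (hσ : ∀ ξ, σ ≤ cosTransform W ξ + ξ ^ 2 / 2) (hc : c ^ 2 / 2 < σ) :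
    ∃ μ s κ r h₀ : ℝ, 0 < κ ∧ 0 < h₀ ∧ r < 1 / 2 ∧ IsCoerciveRadius μ s c r ∧
      ∀ h, 0 < h → h < h₀ → ∀ (N : ℕ) [NeZero N], IsCoercive W μ s κ h N := by
  obtain ⟨μ, hcμ, hμσ⟩ := exists_between hc
  have hμ : 0 ≤ μ := (by positivity : 0 ≤ c ^ 2 / 2).trans hcμ.le
  obtain ⟨s, κ, h₀, hs, hs₁, hκ, hh₀, hco⟩ := exists_isCoercive hW hσ hμ hμσ
  obtain ⟨r, hr₂, hr⟩ := exists_isCoerciveRadius hs hs₁.le hμ hcμ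
  exact ⟨μ, s, κ, r, h₀, hκ, hh₀, hr₂, hr, hco⟩

theorem IsCoerciveRadius.mono (hr : IsCoerciveRadius μ s c r) {c' : ℝ} (h : c' ^ 2 ≤ c ^ 2) :
    IsCoerciveRadius μ s c' r :=
  { hr with phase := le_trans (by gcongr) hr.phase }

theorem latticeEnergy_one [NeZero N] (W : ℝ → ℝ) (h : ℝ) :
    latticeEnergy W h (1 : ZMod N → ℝ) = 0 := by
  have hdefect : massDefect (1 : ZMod N → ℝ) = 0 := by funext j; simp [massDefect]
  simp [latticeEnergy, dirichletSum, interactionForm, hdefect]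

theorem IsCoerciveRadius.exists_hasPassGeometry [NeZero N] (hr : IsCoerciveRadius μ s c r)
    (hr₂ : r ≤ 1 / 2) (hco : IsCoercive W μ s κ h N) (hW : Integrable W) (hκ : 0 ≤ κ) {n : ℕ}
    (hn : n * h = 1) (hN : 2 * n ≤ N) (hh : 0 < h) {lam : ℝ} (hlam : 0 < lam) :
    ∃ e, HasPassGeometry (positiveCone N) (latticeEnergy W h) (phaseEnergy h) 1 e lam (c ^ 2 / 8)
      (κ * r ^ 2 / 8) (1 + ∫ t, |W t|) := by
  have : 0 ≤ ∫ t, |W t| := integral_nonneg fun _ => abs_nonneg _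
  have hNh : 1 ≤ N * h := by
    have : (2 * n : ℝ) ≤ N := by exact_mod_cast hN
    nlinarith
  obtain ⟨e, he, hphase, k, hk⟩ := exists_path_latticeEnergy_le (K := (1 + ∫ t, |W t|) / lam) hW hn
    hN hh (by positivity)
  have hE : latticeEnergy W h e ≤ 1 + ∫ t, |W t| := by
    obtain ⟨γ, hγ⟩ := he
    simpa using (hγ 1).2
  refine ⟨e, fun ρ _ => phaseEnergy_nonneg hh.le ρ, ?_, ?_, he,
    hr.mem_lowerBounds_pathBounds hco hh hNh hκ _ (hr₂.trans hk)⟩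
  · rw [latticeEnergy_one]
    exact mul_nonneg hlam.le (phaseEnergy_nonneg hh.le _)
  · exact hE.trans ((div_le_iff₀' hlam).1 hphase)

theorem ae_sq_div_eight_of_ae {p : ℝ → Prop} {a b : ℝ} (ha : 0 ≤ a)
    (hp : ∀ᵐ x ∂volume.restrict (Ioo (a ^ 2 / 8) (b ^ 2 / 8)), p x) :
    ∀ᵐ x ∂volume.restrict (Ioo a b), p (x ^ 2 / 8) := by
  rw [ae_restrict_iff' measurableSet_Ioo, ae_iff] at hp ⊢
  simp only [Classical.not_imp] at hp ⊢
  have hdiff : DifferentiableOn ℝ (fun y : ℝ => √(8 * y))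
      {y | y ∈ Ioo (a ^ 2 / 8) (b ^ 2 / 8) ∧ ¬ p y} := fun y hy => by
    have : 0 < y := (by positivity : 0 ≤ a ^ 2 / 8).trans_lt hy.1.1
    exact ((differentiableAt_id.const_mul 8).sqrt (by positivity)).differentiableWithinAt
  refine measure_mono_null (fun x hx => ?_)
    (addHaar_image_eq_zero_of_differentiableOn_of_addHaar_eq_zero volume hdiff hp)
  obtain ⟨⟨hax, hxb⟩, hpx⟩ := hx
  have hx₀ : 0 ≤ x := ha.trans hax.le
  refine ⟨x ^ 2 / 8, ⟨⟨by gcongr, by gcongr⟩, hpx⟩, ?_⟩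
  change √(8 * (x ^ 2 / 8)) = x
  rw [mul_div_cancel₀ _ (by norm_num), Real.sqrt_sq hx₀]

/-- A critical point, on `ℤ / N` with mesh `h`, of the action of speed `c` which has phase energy
and energy at most `K` and is not uniformly within `r` of `1`. -/
structure IsLatticeSoliton [NeZero N] (W : ℝ → ℝ) (h c r K : ℝ) (ρ : ZMod N → ℝ) : Prop where
  mem_positiveCone : ρ ∈ positiveCone N
  phaseEnergy_le : phaseEnergy h ρ ≤ K
  latticeEnergy_le : latticeEnergy W h ρ ≤ K
  exists_lt_abs_sub_one : ∃ j, r < |ρ j - 1|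
  gradient_eq : energyGradient W h ρ = (c ^ 2 / 8) • phaseGradient h ρ

theorem ae_exists_frequently_isLatticeSoliton (hW : Integrable W) {σ : ℝ}
    (hσ : ∀ ξ, σ ≤ cosTransform W ξ + ξ ^ 2 / 2) {a b : ℝ} (ha : 0 < a) (hab : a ≤ b)
    (hb : b ^ 2 / 2 < σ) :
    ∃ r ∈ Ioo (0 : ℝ) (1 / 2), ∀ᵐ c ∂volume.restrict (Ioo a b), ∃ K, ∃ᶠ n : ℕ in atTop,
      ∃ ρ : ZMod ((n + 3) ^ 2) → ℝ, IsLatticeSoliton W (n + 3 : ℕ)⁻¹ c r K ρ := by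
  obtain ⟨μ, s, κ, r, h₀, hκ, hh₀, hr₂, hr, hco⟩ := exists_isCoercive_isCoerciveRadius hW hσ hb
  refine ⟨r, ⟨hr.pos, hr₂⟩, ?_⟩
  obtain ⟨m, hm⟩ := exists_nat_gt h₀⁻¹
  let N (n : ℕ) : ℕ := (n + m + 3) ^ 2
  let h (n : ℕ) : ℝ := ((n + m + 3 : ℕ) : ℝ)⁻¹
  have hh (n : ℕ) : 0 < h n := by positivity
  have hN (n : ℕ) : 2 * (n + m + 3) ≤ N n := by simp only [N]; nlinarith
  have hcoN (n : ℕ) : IsCoercive W μ s κ (h n) (N n) := by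
    refine hco _ (hh n) (inv_lt_of_inv_lt₀ hh₀ (hm.trans_le ?_)) _
    exact_mod_cast (by lia : m ≤ n + m + 3)
  have hlam : 0 < a ^ 2 / 8 := by positivity
  choose e he using fun n => hr.exists_hasPassGeometry hr₂.le (hcoN n) hW hκ.le
    (mul_inv_cancel₀ (by positivity)) (hN n) (hh n) hlam
  have hcrit := ae_exists_frequently_critical_point (fun _ => isOpen_positiveCone)
    (fun n => hasContGradientOn_latticeEnergy hW (h n) _)
    (fun n => hasContGradientOn_phaseEnergy (h n)) (fun n => isCompact_phaseEnergy_le (hh n))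
    hlam.le (by gcongr) (by have := hr.pos; positivity) he
  filter_upwards [ae_sq_div_eight_of_ae ha.le hcrit, ae_restrict_mem measurableSet_Ioo]
    with c ⟨M, hM⟩ hc
  set C := 1 + ∫ t, |W t|
  refine ⟨max M (C + 1 + c ^ 2 / 8 * M), (tendsto_add_atTop_nat m).frequently (hM.mono ?_)⟩
  rintro n ⟨ρ, hρ, hQ, hpos, hle, hgrad⟩
  have hcb : c ^ 2 ≤ b ^ 2 := pow_le_pow_left₀ (ha.trans hc.1).le hc.2.le 2
  refine ⟨ρ, hρ, hQ.trans (le_max_left _ _), le_trans ?_ (le_max_right _ _),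
    (hr.mono hcb).exists_lt_abs_sub_one (hcoN n) hW (hh n) hκ hρ hgrad hpos, hgrad⟩
  have : c ^ 2 / 8 * phaseEnergy (h n) ρ ≤ c ^ 2 / 8 * M := by gcongr
  linarith

end LatticeCriticalPoints

section UniformBounds

variable {N : ℕ} [NeZero N] {W : ℝ → ℝ} {h K : ℝ} {ρ : ZMod N → ℝ}

theorem sq_sub_one_le_sub_inv_sq {x : ℝ} (hx : 0 < x) : (x - 1) ^ 2 ≤ (x - x⁻¹) ^ 2 := by
  have hinv : x - x⁻¹ = (x - 1) * (1 + x⁻¹) := by field_simp; ring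
  rw [hinv, mul_pow]
  exact le_mul_of_one_le_right (sq_nonneg _) (one_le_pow₀ (by linarith [inv_pos.2 hx]))

theorem mul_sqSum_sub_one_le (hh : 0 ≤ h) (hρ : ρ ∈ positiveCone N) (hK : phaseEnergy h ρ ≤ K) :
    h * sqSum (ρ - 1) ≤ K :=
  (mul_le_mul_of_nonneg_left
    (Finset.sum_le_sum fun j _ => sq_sub_one_le_sub_inv_sq (hρ j)) hh).trans hK

theorem sq_sub_one_le (hh : 0 < h) (hN : 1 ≤ N * h) (hρ : ρ ∈ positiveCone N)
    (hK : phaseEnergy h ρ ≤ K) {a : ℝ} (ha : 0 < a) (j : ZMod N) :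
    (ρ j - 1) ^ 2 ≤ K + a / 2 * (h * dirichletSum h ρ) + 2 * a⁻¹ * K := by
  have hdir : dirichletSum h (ρ - 1) = dirichletSum h ρ := by simp [dirichletSum]
  have hsq : h * sqSum (ρ - 1) ≤ K := mul_sqSum_sub_one_le hh.le hρ hK
  calc (ρ j - 1) ^ 2
      ≤ h * sqSum (ρ - 1) + h * (a / 2 * dirichletSum h (ρ - 1) + 2 * a⁻¹ * sqSum (ρ - 1)) :=
        sq_apply_le hh hN ha (ρ - 1) j
    _ = h * sqSum (ρ - 1) + a / 2 * (h * dirichletSum h ρ) + 2 * a⁻¹ * (h * sqSum (ρ - 1)) := by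
        rw [hdir]; ring
    _ ≤ K + a / 2 * (h * dirichletSum h ρ) + 2 * a⁻¹ * K := by gcongr

theorem mul_sqSum_massDefect_le (hh : 0 ≤ h) (hρ : ρ ∈ positiveCone N)
    (hK : phaseEnergy h ρ ≤ K) {V : ℝ} (hV : ∀ j, (ρ j - 1) ^ 2 ≤ V) :
    h * sqSum (massDefect ρ) ≤ K * (8 + 2 * V) := by
  have hV₀ : 0 ≤ V := (sq_nonneg _).trans (hV 0)
  have hsum : sqSum (massDefect ρ) ≤ sqSum (ρ - 1) * (8 + 2 * V) := by
    rw [sqSum, sqSum, Finset.sum_mul]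
    refine Finset.sum_le_sum fun j _ => ?_
    calc massDefect ρ j ^ 2 = (ρ j - 1) ^ 2 * (ρ j + 1) ^ 2 := by simp only [massDefect]; ring
      _ ≤ (ρ j - 1) ^ 2 * (8 + 2 * V) := by
        gcongr
        nlinarith [hV j, sq_nonneg (ρ j - 3)]
  calc h * sqSum (massDefect ρ) ≤ h * (sqSum (ρ - 1) * (8 + 2 * V)) := by gcongr
    _ = h * sqSum (ρ - 1) * (8 + 2 * V) := (mul_assoc _ _ _).symm
    _ ≤ K * (8 + 2 * V) := by gcongr; exact mul_sqSum_sub_one_le hh hρ hK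

theorem mul_dirichletSum_le (hW : Integrable W) (hh : 0 < h) (hN : 1 ≤ N * h)
    (hρ : ρ ∈ positiveCone N) (hK : phaseEnergy h ρ ≤ K) (hE : latticeEnergy W h ρ ≤ K) :
    h * dirichletSum h ρ ≤
      4 * K * (1 + 2 * (∫ t, |W t|) + (∫ t, |W t|) * K * (1 / 2 + (1 + (∫ t, |W t|) * K))) := by
  set w := ∫ t, |W t|
  have hw : 0 ≤ w := integral_nonneg fun _ => abs_nonneg _
  have hK₀ : 0 ≤ K := (phaseEnergy_nonneg hh.le ρ).trans hK
  set Y := h * dirichletSum h ρ with hY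
  have hY₀ : 0 ≤ Y := mul_nonneg hh.le (dirichletSum_nonneg h ρ)
  -- With this `a`, the Dirichlet term produced by the interaction is at most half of `Y / 2`.
  set a := (1 + w * K)⁻¹
  have ha : 0 < a := by positivity
  have hwa : w * K * a ≤ 1 := by
    rw [← div_eq_mul_inv, div_le_one (by positivity)]
    linarith
  have hmass : h * sqSum (massDefect ρ) ≤ K * (8 + 2 * (K + a / 2 * Y + 2 * a⁻¹ * K)) :=
    mul_sqSum_massDefect_le hh.le hρ hK (sq_sub_one_le hh hN hρ hK ha)
  have hint : -(w * (h * sqSum (massDefect ρ))) ≤ h * interactionForm W h (massDefect ρ) := by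
    have := mul_le_mul_of_nonneg_left (neg_le_of_abs_le
      (abs_interactionForm_le hW h (massDefect ρ))) hh.le
    linarith
  have hen : Y / 2 + h * interactionForm W h (massDefect ρ) / 4 ≤ K := by
    rw [latticeEnergy] at hE
    linarith
  have hmass' := mul_le_mul_of_nonneg_left hmass hw
  have habs : w * K * a * Y ≤ 1 * Y := by gcongr
  simp only [a, inv_inv] at hmass' habs
  linarith

theorem abs_sub_inv_le_add {x y z : ℝ} (hy : 0 < y) (hyx : y ≤ x) (hxz : x ≤ z) :
    |x - x⁻¹| ≤ |y - y⁻¹| + |z - z⁻¹| := by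
  have hinv_y : x⁻¹ ≤ y⁻¹ := inv_anti₀ hy hyx
  have hinv_z : z⁻¹ ≤ x⁻¹ := inv_anti₀ (hy.trans_le hyx) hxz
  rw [abs_le]
  constructor <;> linarith [neg_abs_le (y - y⁻¹), le_abs_self (z - z⁻¹), abs_nonneg (y - y⁻¹),
    abs_nonneg (z - z⁻¹)]

theorem abs_log_sub_half_sq_sub_le {x y : ℝ} (hx : 0 < x) (hy : 0 < y) :
    |(Real.log y - y ^ 2 / 2) - (Real.log x - x ^ 2 / 2)| ≤
      |y - x| * (|x - x⁻¹| + |y - y⁻¹|) := by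
  have hderiv (t : ℝ) (ht : t ∈ uIcc x y) : HasDerivWithinAt
      (fun t => Real.log t - t ^ 2 / 2) (t⁻¹ - t) (uIcc x y) t := by
    have ht₀ : t ≠ 0 := ((lt_min hx hy).trans_le ht.1).ne'
    refine (((Real.hasDerivAt_log ht₀).sub
      ((hasDerivAt_pow 2 t).div_const 2)).congr_deriv ?_).hasDerivWithinAt
    simp
  have hbound (t : ℝ) (ht : t ∈ uIcc x y) : ‖t⁻¹ - t‖ ≤ |x - x⁻¹| + |y - y⁻¹| := by
    rw [Real.norm_eq_abs, abs_sub_comm]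
    rcases mem_uIcc.1 ht with h | h
    · exact abs_sub_inv_le_add hx h.1 h.2
    · exact (abs_sub_inv_le_add hy h.1 h.2).trans_eq (add_comm _ _)
  rw [mul_comm]
  exact (convex_uIcc x y).norm_image_sub_le_of_norm_hasDerivWithin_le hderiv hbound
    left_mem_uIcc right_mem_uIcc

theorem abs_log_sub_half_sq_sub_le_of_phaseEnergy_le (hh : 0 < h) (hρ : ρ ∈ positiveCone N)
    (hK : phaseEnergy h ρ ≤ K) (j k : ZMod N) :
    |(Real.log (ρ j) - ρ j ^ 2 / 2) - (Real.log (ρ k) - ρ k ^ 2 / 2)| ≤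
      h * dirichletSum h ρ / 2 + 2 * K := by
  have young (D p q : ℝ) : |D| * (|p| + |q|) ≤ D ^ 2 / 2 + (p ^ 2 + q ^ 2) := by
    rw [← sq_abs D, ← sq_abs p, ← sq_abs q]
    nlinarith [sq_nonneg (|D| - (|p| + |q|)), sq_nonneg (|p| - |q|)]
  have hstep (i : ZMod N) :
      |(Real.log (ρ (i + 1)) - ρ (i + 1) ^ 2 / 2) - (Real.log (ρ i) - ρ i ^ 2 / 2)| ≤
        h * (((ρ (i + 1) - ρ i) / h) ^ 2 / 2 +
          ((ρ i - (ρ i)⁻¹) ^ 2 + (ρ (i + 1) - (ρ (i + 1))⁻¹) ^ 2)) := by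
    refine (abs_log_sub_half_sq_sub_le (hρ i) (hρ (i + 1))).trans ?_
    have hdiff : |ρ (i + 1) - ρ i| = h * |(ρ (i + 1) - ρ i) / h| := by
      rw [abs_div, abs_of_pos hh, mul_div_cancel₀ _ hh.ne']
    rw [hdiff, mul_assoc]
    exact mul_le_mul_of_nonneg_left (young _ _ _) hh.le
  refine (abs_sub_le_sum_abs_sub (fun i => Real.log (ρ i) - ρ i ^ 2 / 2) j k).trans
    ((Finset.sum_le_sum fun i _ => hstep i).trans ?_)
  rw [← Finset.mul_sum, Finset.sum_add_distrib, Finset.sum_add_distrib, ← Finset.sum_div,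
    sum_add_right (fun i => (ρ i - (ρ i)⁻¹) ^ 2)]
  rw [phaseEnergy] at hK
  rw [dirichletSum]
  linarith

theorem neg_le_log_apply (hh : 0 < h) (hN : 1 ≤ N * h) (hρ : ρ ∈ positiveCone N)
    (hK : phaseEnergy h ρ ≤ K) (j : ZMod N) :
    -(Real.log (2 + K) + (2 + K) ^ 2 / 2 + h * dirichletSum h ρ / 2 + 2 * K) ≤
      Real.log (ρ j) := by
  have hK₀ : 0 ≤ K := (phaseEnergy_nonneg hh.le ρ).trans hK
  obtain ⟨k, hk⟩ := exists_card_mul_le_sum fun j => (ρ j - (ρ j)⁻¹) ^ 2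
  have hsite : (ρ k - (ρ k)⁻¹) ^ 2 ≤ K := by
    have : h * (N * (ρ k - (ρ k)⁻¹) ^ 2) ≤ phaseEnergy h ρ := mul_le_mul_of_nonneg_left hk hh.le
    nlinarith [sq_nonneg (ρ k - (ρ k)⁻¹)]
  obtain ⟨hlow, hupp⟩ := mem_Icc_of_sub_inv_sq_le (hρ k) hsite
  have hlog : -Real.log (2 + K) ≤ Real.log (ρ k) := by
    rw [← Real.log_inv]
    exact Real.log_le_log (by positivity) hlow
  have hsq : ρ k ^ 2 ≤ (2 + K) ^ 2 := pow_le_pow_left₀ (hρ k).le hupp 2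
  have hvar := neg_le_of_abs_le (abs_log_sub_half_sq_sub_le_of_phaseEnergy_le hh hρ hK j k)
  linarith [sq_nonneg (ρ j)]

theorem exists_uniform_bounds (hW : Integrable W) (K : ℝ) :
    ∃ C, 1 ≤ C ∧ ∀ (N : ℕ) [NeZero N] (h : ℝ), 0 < h → 1 ≤ N * h → ∀ ρ ∈ positiveCone N,
      phaseEnergy h ρ ≤ K → latticeEnergy W h ρ ≤ K →
      h * dirichletSum h ρ ≤ C ∧ h * sqSum (massDefect ρ) ≤ C ∧ ∀ j, ρ j ∈ Icc C⁻¹ C := by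
  rcases lt_or_ge K 0 with hK₀ | hK₀
  · exact ⟨1, le_rfl, fun N _ h hh _ ρ _ hK => absurd ((phaseEnergy_nonneg hh.le ρ).trans hK)
      hK₀.not_ge⟩
  set w := ∫ t, |W t|
  have : 0 ≤ w := integral_nonneg fun _ => abs_nonneg _
  set Y := 4 * K * (1 + 2 * w + w * K * (1 / 2 + (1 + w * K)))
  have hY : 0 ≤ Y := by positivity
  set V := 3 * K + Y / 2
  have hV : 0 ≤ V := by positivity
  set L := Real.log (2 + K) + (2 + K) ^ 2 / 2 + Y / 2 + 2 * K
  have hL : 0 < Real.exp L := Real.exp_pos L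
  have hZ : 0 ≤ K * (8 + 2 * V) := by positivity
  set C := 2 + Y + K * (8 + 2 * V) + V + Real.exp L
  refine ⟨C, by linarith, fun N _ h hh hN ρ hρ hK hE => ?_⟩
  have hdir : h * dirichletSum h ρ ≤ Y := mul_dirichletSum_le hW hh hN hρ hK hE
  have hdev (j : ZMod N) : (ρ j - 1) ^ 2 ≤ V :=
    (sq_sub_one_le hh hN hρ hK one_pos j).trans (by simp only [V]; linarith)
  refine ⟨by linarith, (mul_sqSum_massDefect_le hh.le hρ hK hdev).trans (by linarith),
    fun j => ⟨?_, ?_⟩⟩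
  · have hlog : -L ≤ Real.log (ρ j) :=
      le_trans (by simp only [L]; linarith) (neg_le_log_apply hh hN hρ hK j)
    calc C⁻¹ ≤ (Real.exp L)⁻¹ := inv_anti₀ hL (by linarith)
      _ = Real.exp (-L) := (Real.exp_neg L).symm
      _ ≤ ρ j := (Real.le_log_iff_exp_le (hρ j)).1 hlog
  · nlinarith [hdev j, sq_nonneg (ρ j - 2)]

end UniformBounds

section ProfileOnIntegers

variable {A : Type*} [AddGroupWithOne A] {N : ℕ} {W : ℝ → ℝ} {h c r C K : ℝ}

/-- The right-hand side `F` of the discrete profile equation `-ρ'' = F(ρ)`, at speed `c`. -/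
noncomputable def latticeForce (W : ℝ → ℝ) (h c : ℝ) (R : A → ℝ) (j : A) : ℝ :=
  R j * latticeConv W h (massDefect R) j + c ^ 2 / 4 * (R j - (R j)⁻¹ ^ 3)

theorem abs_massDefect_le {ι : Type*} {R : ι → ℝ} (hC : 0 < C) {j : ι} (hR : R j ∈ Icc C⁻¹ C) :
    |massDefect R j| ≤ 1 + C ^ 2 := by
  have : R j ^ 2 ≤ C ^ 2 := pow_le_pow_left₀ ((inv_pos.2 hC).trans_le hR.1).le hR.2 2
  rw [massDefect, abs_le]
  constructor <;> linarith [sq_nonneg (R j), sq_nonneg C]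

theorem abs_latticeForce_le (hW : Integrable W) (h c : ℝ) (hC : 0 < C) {R : A → ℝ}
    (hR : ∀ j, R j ∈ Icc C⁻¹ C) (j : A) :
    |latticeForce W h c R j| ≤
      C * ((∫ t, |W t|) * (1 + C ^ 2)) + c ^ 2 / 4 * (C + C ^ 3) := by
  have hpos : 0 < R j := (inv_pos.2 hC).trans_le (hR j).1
  have hconv : |latticeConv W h (massDefect R) j| ≤ (∫ t, |W t|) * (1 + C ^ 2) :=
    abs_latticeConv_le hW h (fun i => abs_massDefect_le hC (hR i)) j
  have hmod : |R j| ≤ C := (abs_of_pos hpos).trans_le (hR j).2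
  have hinv : |(R j)⁻¹ ^ 3| ≤ C ^ 3 := by
    rw [abs_of_pos (by positivity)]
    exact pow_le_pow_left₀ (inv_pos.2 hpos).le (inv_le_of_inv_le₀ hC (hR j).1) 3
  refine (abs_add_le _ _).trans ?_
  rw [abs_mul, abs_mul, abs_of_nonneg (by positivity : 0 ≤ c ^ 2 / 4)]
  gcongr
  exact (abs_sub _ _).trans (add_le_add hmod hinv)

/-- A modulus `R` on `ℤ` with slope `D` which solves the discrete profile equation of mesh `h` and
speed `c`, is not within `r` of `1` at the origin, and whose bounds, including those of the squared
norms over windows of `P` sites, are controlled by `C`. -/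
structure IsLatticeProfile (W : ℝ → ℝ) (h c r C : ℝ) (P : ℕ) (R D : ℤ → ℝ) : Prop where
  modulus_sub : ∀ j, R (j + 1) - R j = h * D j
  slope_sub : ∀ j, D (j + 1) - D j = h * -latticeForce W h c R (j + 1)
  modulus_mem : ∀ j, R j ∈ Icc C⁻¹ C
  abs_slope_le : ∀ j, |D j| ≤ C
  le_abs_sub_one : r ≤ |R 0 - 1|
  sum_slope_sq_le : ∀ k : ℤ, h * ∑ i ∈ Finset.range P, D (k + i) ^ 2 ≤ C
  sum_massDefect_sq_le : ∀ k : ℤ, h * ∑ i ∈ Finset.range P, massDefect R (k + i) ^ 2 ≤ C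

theorem sum_range_intCast [NeZero N] (f : ZMod N → ℝ) (k : ℤ) :
    ∑ i ∈ Finset.range N, f ((k + i : ℤ) : ZMod N) = ∑ j, f j := by
  rw [← sum_add_right f k, ← sum_range_natCast]
  exact Finset.sum_congr rfl fun i _ => by push_cast; rw [add_comm]

theorem abs_sub_le_mul_abs_mul_sub (hh : 0 ≤ h) {X : ℤ → ℝ}
    (hX : ∀ j, |X (j + 1) - X j| ≤ h * K) (i j : ℤ) : |X i - X j| ≤ K * |i * h - j * h| := by
  wlog hij : j ≤ i generalizing i j
  · rw [abs_sub_comm, abs_sub_comm ((i : ℝ) * h)]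
    exact this j i (le_of_not_ge hij)
  obtain ⟨k, rfl⟩ := Int.le.dest hij
  have hsum := dist_le_range_sum_of_dist_le (f := fun n : ℕ => X (j + n)) (d := fun _ => h * K) k
    fun {n} _ => by
      rw [dist_comm, Real.dist_eq]
      simpa [add_assoc] using hX (j + n)
  rw [dist_comm, Real.dist_eq] at hsum
  calc |X (j + k) - X j| ≤ k * (h * K) := by simpa using hsum
    _ = K * |((j + k : ℤ) : ℝ) * h - j * h| := by
      rw [← sub_mul, abs_mul, abs_of_nonneg hh]
      simp
      ring

theorem abs_sub_increment_le {m : ℕ} (hm : m * h = 1) {X D : ℤ → ℝ}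
    (hX : ∀ j, X (j + 1) - X j = h * D j) (hD : ∀ j, |D (j + 1) - D j| ≤ h * K) (j : ℤ) :
    |X (j + m) - X j - D j| ≤ K := by
  have hh : 0 < h := pos_of_mul_pos_right (hm ▸ one_pos) (Nat.cast_nonneg m)
  have hK : 0 ≤ K := nonneg_of_mul_nonneg_right ((abs_nonneg _).trans (hD 0)) hh
  have htel : X (j + m) - X j = ∑ i ∈ Finset.range m, h * D (j + i) := by
    have := Finset.sum_range_sub (fun i : ℕ => X (j + i)) m
    rw [Nat.cast_zero, add_zero] at this
    rw [← this]
    exact Finset.sum_congr rfl fun i _ => by rw [← hX]; push_cast; rw [add_assoc]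
  have hconst : D j = ∑ _i ∈ Finset.range m, h * D j := by
    rw [Finset.sum_const, Finset.card_range, nsmul_eq_mul, ← mul_assoc, hm, one_mul]
  rw [htel, hconst, ← Finset.sum_sub_distrib]
  calc |∑ i ∈ Finset.range m, (h * D (j + i) - h * D j)|
      ≤ ∑ i ∈ Finset.range m, |h * D (j + i) - h * D j| := Finset.abs_sum_le_sum_abs _ _
    _ ≤ ∑ _i ∈ Finset.range m, h * K := by
      refine Finset.sum_le_sum fun i hi => ?_
      have him : (i : ℝ) * h ≤ 1 := by
        rw [← hm]
        exact mul_le_mul_of_nonneg_right (by exact_mod_cast (Finset.mem_range.1 hi).le) hh.le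
      rw [← mul_sub, abs_mul, abs_of_pos hh]
      refine mul_le_mul_of_nonneg_left ((abs_sub_le_mul_abs_mul_sub hh.le hD _ _).trans ?_) hh.le
      refine mul_le_of_le_one_right hK ?_
      rw [← sub_mul, Int.cast_add, add_sub_cancel_left, Int.cast_natCast,
        abs_of_nonneg (by positivity)]
      exact him
    _ = K := by rw [Finset.sum_const, Finset.card_range, nsmul_eq_mul, ← mul_assoc, hm, one_mul]

theorem second_difference_eq (hh : h ≠ 0) {ρ : ZMod N → ℝ} {j : ZMod N} (hρ : ρ j ≠ 0)
    (hcrit : energyGradient W h ρ j = c ^ 2 / 8 * phaseGradient h ρ j) :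
    (ρ (j + 1) - ρ j) / h - (ρ j - ρ (j - 1)) / h = h * -latticeForce W h c ρ j := by
  have hphase : (ρ j - (ρ j)⁻¹) * (1 + (ρ j)⁻¹ ^ 2) = ρ j - (ρ j)⁻¹ ^ 3 := by
    field_simp
    ring
  rw [energyGradient, phaseGradient, neg_div] at hcrit
  rw [latticeForce, ← hphase]
  have hlap : h * ((ρ (j + 1) - 2 * ρ j + ρ (j - 1)) / h ^ 2) =
      (ρ (j + 1) - ρ j) / h - (ρ j - ρ (j - 1)) / h := by
    field_simp
    ring
  linear_combination -hcrit - hlap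

theorem latticeForce_intCast_add (W : ℝ → ℝ) (h c : ℝ) (ρ : ZMod N → ℝ) (j₀ : ZMod N) (j : ℤ) :
    latticeForce W h c (fun i : ℤ => ρ (i + j₀)) j = latticeForce W h c ρ (j + j₀) := by
  simp only [latticeForce, latticeConv, symmShift, massDefect]
  push_cast
  simp only [sub_add_eq_add_sub, add_right_comm]

theorem IsLatticeSoliton.exists_isLatticeProfile [NeZero N] {ρ : ZMod N → ℝ}
    (hρ : IsLatticeSoliton W h c r K ρ) (hW : Integrable W) {m : ℕ} (hm : m * h = 1) (hC : 0 < C)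
    (hdir : h * dirichletSum h ρ ≤ C) (hmass : h * sqSum (massDefect ρ) ≤ C)
    (hmod : ∀ j, ρ j ∈ Icc C⁻¹ C) :
    ∃ R D, IsLatticeProfile W h c r
      (C * ((∫ t, |W t|) * (1 + C ^ 2)) + c ^ 2 / 4 * (C + C ^ 3) + 2 * C) N R D := by
  set F := C * ((∫ t, |W t|) * (1 + C ^ 2)) + c ^ 2 / 4 * (C + C ^ 3)
  have hh : 0 < h := pos_of_mul_pos_right (hm ▸ one_pos) (Nat.cast_nonneg m)
  obtain ⟨j₀, hj₀⟩ := hρ.exists_lt_abs_sub_one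
  let slope (j : ZMod N) : ℝ := (ρ (j + 1) - ρ j) / h
  let R (j : ℤ) : ℝ := ρ (j + j₀)
  let D (j : ℤ) : ℝ := slope (j + j₀)
  have hcast (j : ℤ) : ((j + 1 : ℤ) : ZMod N) + j₀ = j + j₀ + 1 := by push_cast; ring
  have hRD (j : ℤ) : R (j + 1) - R j = h * D j := by
    simp only [R, D, slope, hcast]
    rw [mul_div_cancel₀ _ hh.ne']
  have hD (j : ℤ) : D (j + 1) - D j = h * -latticeForce W h c R (j + 1) := by
    have := second_difference_eq hh.ne' (hρ.mem_positiveCone (j + j₀ + 1)).ne'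
      (congrFun hρ.gradient_eq _)
    rw [add_sub_cancel_right] at this
    rw [latticeForce_intCast_add, hcast, ← this]
    simp only [D, slope, hcast]
  have hforce (j : ℤ) : |D (j + 1) - D j| ≤ h * F := by
    rw [hD, abs_mul, abs_neg, abs_of_pos hh]
    exact mul_le_mul_of_nonneg_left (abs_latticeForce_le hW h c hC (fun i => hmod _) _) hh.le
  have hF : 0 ≤ F := (abs_nonneg _).trans (abs_latticeForce_le hW h c hC hmod 0)
  have hFC : C ≤ F + 2 * C := by linarith
  refine ⟨R, D, hRD, hD, fun j => ⟨(inv_anti₀ hC hFC).trans (hmod _).1, (hmod _).2.trans hFC⟩,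
    fun j => ?_, by simpa [R] using hj₀.le, fun k => ?_, fun k => ?_⟩
  · have hinc := abs_le.1 (abs_sub_increment_le hm hRD hforce j)
    have hR (i : ℤ) : R i ∈ Icc 0 C := ⟨(hρ.mem_positiveCone _).le, (hmod _).2⟩
    rw [abs_le]
    constructor <;> linarith [(hR j).1, (hR j).2, (hR (j + m)).1, (hR (j + m)).2]
  · rw [sum_range_intCast (fun j => slope (j + j₀) ^ 2) k, sum_add_right (fun j => slope j ^ 2)]
    exact hdir.trans hFC
  · change h * ∑ i ∈ Finset.range N, massDefect ρ (((k + i : ℤ) : ZMod N) + j₀) ^ 2 ≤ _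
    rw [sum_range_intCast (fun j => massDefect ρ (j + j₀) ^ 2) k,
      sum_add_right (fun j => massDefect ρ j ^ 2)]
    exact hmass.trans hFC

theorem exists_isLatticeProfile (hW : Integrable W) (c r K : ℝ) :
    ∃ C, 1 ≤ C ∧ ∀ (N : ℕ) [NeZero N] (m : ℕ) (h : ℝ), m * h = 1 → 1 ≤ N * h →
      ∀ ρ : ZMod N → ℝ, IsLatticeSoliton W h c r K ρ → ∃ R D, IsLatticeProfile W h c r C N R D := by
  obtain ⟨C, hC, hbound⟩ := exists_uniform_bounds hW K
  refine ⟨C * ((∫ t, |W t|) * (1 + C ^ 2)) + c ^ 2 / 4 * (C + C ^ 3) + 2 * C, ?_,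
    fun N _ m h hm hN ρ hρ => ?_⟩
  · have : 0 ≤ ∫ t, |W t| := integral_nonneg fun _ => abs_nonneg _
    have : 0 ≤ C * ((∫ t, |W t|) * (1 + C ^ 2)) + c ^ 2 / 4 * (C + C ^ 3) := by positivity
    linarith
  · have hh : 0 < h := pos_of_mul_pos_right (hm ▸ one_pos) (Nat.cast_nonneg m)
    obtain ⟨hdir, hmass, hmod⟩ :=
      hbound N h hh hN ρ hρ.mem_positiveCone hρ.phaseEnergy_le hρ.latticeEnergy_le
    exact hρ.exists_isLatticeProfile hW hm (one_pos.trans_le hC) hdir hmass hmod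

end ProfileOnIntegers

section StepIntegrals

variable {h C : ℝ} {X Y : ℤ → ℝ}

theorem intervalIntegrable_comp_floor_div (h : ℝ) (hY : ∀ j, |Y j| ≤ C) (a b : ℝ) :
    IntervalIntegrable (fun s => Y ⌊s / h⌋) volume a b :=
  (intervalIntegrable_const (c := C)).mono_fun (measurable_comp_floor_div h Y).aestronglyMeasurable
    (Eventually.of_forall fun _ => (hY _).trans (le_abs_self C))

theorem integral_comp_floor_div_cell (hh : 0 < h) (Y : ℤ → ℝ) (j : ℤ) :
    ∫ s in (j * h)..((j + 1 : ℤ) * h), Y ⌊s / h⌋ = h * Y j := by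
  have hle : (j : ℝ) * h ≤ (j + 1 : ℤ) * h := by gcongr; simp
  have hfloor (s : ℝ) (hs : s ∈ Ioo (j * h) ((j + 1 : ℤ) * h)) : Y ⌊s / h⌋ = Y j := by
    congr 1
    rw [Int.floor_eq_iff, le_div_iff₀ hh, div_lt_iff₀ hh]
    exact ⟨hs.1.le, by simpa using hs.2⟩
  rw [intervalIntegral.integral_of_le hle, integral_Ioc_eq_integral_Ioo,
    setIntegral_congr_fun measurableSet_Ioo hfloor, setIntegral_const,
    Real.volume_real_Ioo_of_le hle, smul_eq_mul]
  push_cast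
  ring

theorem integral_comp_floor_div (hh : 0 < h) (hY : ∀ j, |Y j| ≤ C) (k : ℤ) (n : ℕ) :
    ∫ s in (k * h)..((k + n : ℤ) * h), Y ⌊s / h⌋ = h * ∑ i ∈ Finset.range n, Y (k + i) := by
  have hsum := intervalIntegral.sum_integral_adjacent_intervals (f := fun s => Y ⌊s / h⌋)
    (a := fun i : ℕ => ((k + i : ℤ) : ℝ) * h) (n := n)
    fun _ _ => intervalIntegrable_comp_floor_div h hY _ _
  rw [Nat.cast_zero, add_zero] at hsum
  rw [← hsum, Finset.mul_sum]
  refine Finset.sum_congr rfl fun i _ => ?_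
  rw [← integral_comp_floor_div_cell hh, add_assoc, Nat.cast_succ]

theorem sub_eq_integral_comp_floor_div (hh : 0 < h) (hY : ∀ j, |Y j| ≤ C)
    (hX : ∀ j, X (j + 1) - X j = h * Y j) (i j : ℤ) :
    X i - X j = ∫ s in (j * h)..(i * h), Y ⌊s / h⌋ := by
  wlog hij : j ≤ i generalizing i j
  · rw [intervalIntegral.integral_symm, ← this j i (le_of_not_ge hij), neg_sub]
  obtain ⟨n, rfl⟩ := Int.le.dest hij
  have htel := Finset.sum_range_sub (fun n : ℕ => X (j + n)) n
  rw [Nat.cast_zero, add_zero] at htel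
  rw [integral_comp_floor_div hh hY, Finset.mul_sum, ← htel]
  exact Finset.sum_congr rfl fun m _ => by rw [← hX, Nat.cast_succ, add_assoc]

end StepIntegrals

section LatticeConvergence

variable {h : ℕ → ℝ} {X Y : ℕ → ℤ → ℝ} {x y : ℝ → ℝ} {C K : ℝ}

/-- Convergence of functions `X n` on the lattices `h n • ℤ` to a function `x` on the line, in the
sense of continuous convergence: `X n (j n) → x s` whenever the lattice points `j n * h n` tend to
`s`. -/
def LatticeTendsto (h : ℕ → ℝ) (X : ℕ → ℤ → ℝ) (x : ℝ → ℝ) : Prop :=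
  ∀ (s : ℝ) (j : ℕ → ℤ), Tendsto (fun n => j n * h n) atTop (𝓝 s) →
    Tendsto (fun n => X n (j n)) atTop (𝓝 (x s))

theorem tendsto_floor_div_mul (hh : ∀ n, 0 < h n) (h₀ : Tendsto h atTop (𝓝 0)) (s : ℝ) :
    Tendsto (fun n => ⌊s / h n⌋ * h n) atTop (𝓝 s) := by
  have hlow : Tendsto (fun n => s - h n) atTop (𝓝 s) := by
    simpa using tendsto_const_nhds.sub h₀
  refine tendsto_of_tendsto_of_tendsto_of_le_of_le hlow tendsto_const_nhds (fun n => ?_) fun n => ?_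
  · have := (div_lt_iff₀ (hh n)).1 (Int.lt_floor_add_one (s / h n))
    linarith
  · exact (le_div_iff₀ (hh n)).1 (Int.floor_le (s / h n))

theorem LatticeTendsto.tendsto_floor (hX : LatticeTendsto h X x) (hh : ∀ n, 0 < h n)
    (h₀ : Tendsto h atTop (𝓝 0)) (s : ℝ) :
    Tendsto (fun n => X n ⌊s / h n⌋) atTop (𝓝 (x s)) :=
  hX s _ (tendsto_floor_div_mul hh h₀ s)

theorem LatticeTendsto.tendsto_zero (hX : LatticeTendsto h X x) :
    Tendsto (fun n => X n 0) atTop (𝓝 (x 0)) :=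
  hX 0 (fun _ => 0) (by simp)

theorem LatticeTendsto.continuous (hX : LatticeTendsto h X x) (hh : ∀ n, 0 < h n)
    (h₀ : Tendsto h atTop (𝓝 0)) (hK : ∀ n j, |X n (j + 1) - X n j| ≤ h n * K) :
    Continuous x := by
  have hK₀ : 0 ≤ K := nonneg_of_mul_nonneg_right ((abs_nonneg _).trans (hK 0 0)) (hh 0)
  refine (LipschitzWith.of_dist_le_mul (K := ⟨K, hK₀⟩) fun s t => ?_).continuous
  have hdist (s t : ℝ) := (tendsto_floor_div_mul hh h₀ s).dist (tendsto_floor_div_mul hh h₀ t)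
  exact le_of_tendsto_of_tendsto'
    ((hX.tendsto_floor hh h₀ s).dist (hX.tendsto_floor hh h₀ t)) ((hdist s t).const_mul K)
    fun n => abs_sub_le_mul_abs_mul_sub (hh n).le (hK n) _ _

theorem cauchySeq_of_forall_exists_eventually_dist_lt {α : Type*} [PseudoMetricSpace α]
    {u : ℕ → α} (hu : ∀ ε > 0, ∃ v, CauchySeq v ∧ ∀ᶠ n in atTop, dist (u n) (v n) < ε) :
    CauchySeq u := by
  refine Metric.cauchySeq_iff.2 fun ε hε => ?_
  obtain ⟨v, hv, huv⟩ := hu (ε / 3) (by positivity)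
  obtain ⟨N₁, hN₁⟩ := Metric.cauchySeq_iff.1 hv (ε / 3) (by positivity)
  obtain ⟨N₂, hN₂⟩ := eventually_atTop.1 huv
  refine ⟨max N₁ N₂, fun m hm n hn => ?_⟩
  have hm₂ := hN₂ m ((le_max_right _ _).trans hm)
  have hn₂ := hN₂ n ((le_max_right _ _).trans hn)
  have hmn := hN₁ m ((le_max_left _ _).trans hm) n ((le_max_left _ _).trans hn)
  rw [dist_comm] at hn₂
  linarith [dist_triangle4 (u m) (v m) (v n) (u n)]

theorem exists_subseq_forall_tendsto {ι : Type*} [Countable ι] {v : ℕ → ι → ℝ}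
    (hv : ∀ n i, |v n i| ≤ C) :
    ∃ φ : ℕ → ℕ, StrictMono φ ∧ ∀ i, ∃ l, Tendsto (fun n => v (φ n) i) atTop (𝓝 l) := by
  obtain ⟨l, _, φ, hφ, hl⟩ := (isCompact_univ_pi fun _ : ι => isCompact_Icc).tendsto_subseq
    (x := v) fun n i _ => abs_le.1 (hv n i)
  exact ⟨φ, hφ, fun i => ⟨l i, tendsto_pi_nhds.1 hl i⟩⟩

theorem exists_subseq_latticeTendsto (hh : ∀ n, 0 < h n) (h₀ : Tendsto h atTop (𝓝 0))
    (hC : ∀ n j, |X n j| ≤ C) (hK : ∀ n j, |X n (j + 1) - X n j| ≤ h n * K) :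
    ∃ φ : ℕ → ℕ, StrictMono φ ∧ ∃ x, LatticeTendsto (h ∘ φ) (X ∘ φ) x := by
  have hK₀ : 0 ≤ K := nonneg_of_mul_nonneg_right ((abs_nonneg _).trans (hK 0 0)) (hh 0)
  obtain ⟨φ, hφ, hrat⟩ := exists_subseq_forall_tendsto
    (v := fun n (q : ℚ) => X n ⌊q / h n⌋) fun n q => hC n _
  have hfloor := tendsto_floor_div_mul (fun n => hh (φ n)) (h₀.comp hφ.tendsto_atTop)
  have hlip (n : ℕ) := abs_sub_le_mul_abs_mul_sub (hh (φ n)).le (hK (φ n))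
  have hcauchy (s : ℝ) : CauchySeq fun n => X (φ n) ⌊s / h (φ n)⌋ := by
    refine cauchySeq_of_forall_exists_eventually_dist_lt fun ε hε => ?_
    obtain ⟨q, hsq, hqs⟩ := exists_rat_btwn (show s < s + ε / (K + 1) by
      linarith [show 0 < ε / (K + 1) by positivity])
    have hqK : K * |s - q| < ε := by
      rw [abs_sub_comm, abs_of_pos (sub_pos.2 hsq)]
      have : (q - s) * (K + 1) < ε := (lt_div_iff₀ (by positivity)).1 (by linarith)
      nlinarith
    obtain ⟨l, hl⟩ := hrat q
    refine ⟨_, hl.cauchySeq, ?_⟩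
    filter_upwards [(((hfloor s).sub (hfloor q)).abs.const_mul K).eventually_lt_const hqK]
      with n hn
    exact (hlip n _ _).trans_lt hn
  choose x hx using fun s => cauchySeq_tendsto_of_complete (hcauchy s)
  refine ⟨φ, hφ, x, fun s j hj => ?_⟩
  have hbound : Tendsto (fun n => K * |j n * h (φ n) - ⌊s / h (φ n)⌋ * h (φ n)|) atTop (𝓝 0) := by
    simpa using ((hj.sub (hfloor s)).abs).const_mul K
  simpa using (squeeze_zero_norm (fun n => hlip n _ _) hbound).add (hx s)

theorem LatticeTendsto.tendsto_intervalIntegral (hX : LatticeTendsto h X x) (hh : ∀ n, 0 < h n)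
    (h₀ : Tendsto h atTop (𝓝 0)) (hC : ∀ n j, |X n j| ≤ C) (a b : ℝ) :
    Tendsto (fun n => ∫ s in a..b, X n ⌊s / h n⌋) atTop (𝓝 (∫ s in a..b, x s)) :=
  intervalIntegral.tendsto_integral_filter_of_dominated_convergence (fun _ => C)
    (Eventually.of_forall fun n => (measurable_comp_floor_div (h n) (X n)).aestronglyMeasurable)
    (Eventually.of_forall fun n => Eventually.of_forall fun _ _ => hC n _)
    intervalIntegrable_const
    (Eventually.of_forall fun s _ => hX.tendsto_floor hh h₀ s)

theorem LatticeTendsto.primitive (hY : LatticeTendsto h Y y) (hh : ∀ n, 0 < h n)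
    (h₀ : Tendsto h atTop (𝓝 0)) (hC : ∀ n j, |Y n j| ≤ C)
    (hX : ∀ n j, X n (j + 1) - X n j = h n * Y n j) {x₀ : ℝ}
    (hx₀ : Tendsto (fun n => X n 0) atTop (𝓝 x₀)) :
    LatticeTendsto h X fun s => x₀ + ∫ t in (0 : ℝ)..s, y t := by
  intro s j hj
  have hsplit (n : ℕ) : X n (j n) =
      X n 0 + ((∫ t in (0 : ℝ)..s, Y n ⌊t / h n⌋) + ∫ t in s..(j n * h n), Y n ⌊t / h n⌋) := by
    have hint := intervalIntegrable_comp_floor_div (h n) (hC n)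
    have hsub := sub_eq_integral_comp_floor_div (hh n) (hC n) (hX n) (j n) 0
    rw [Int.cast_zero, zero_mul] at hsub
    rw [intervalIntegral.integral_add_adjacent_intervals (hint _ _) (hint _ _), ← hsub,
      add_sub_cancel]
  have hrest : Tendsto (fun n => ∫ t in s..(j n * h n), Y n ⌊t / h n⌋) atTop (𝓝 0) := by
    refine squeeze_zero_norm (a := fun n => C * |j n * h n - s|) (fun n =>
      intervalIntegral.norm_integral_le_of_norm_le_const fun _ _ => hC n _) ?_
    simpa using ((hj.sub_const s).abs).const_mul C
  simp only [hsplit]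
  simpa using hx₀.add ((hY.tendsto_intervalIntegral hh h₀ hC 0 s).add hrest)

theorem LatticeTendsto.memLp_two (hX : LatticeTendsto h X x) (hh : ∀ n, 0 < h n)
    (h₀ : Tendsto h atTop (𝓝 0)) (hC : ∀ n j, |X n j| ≤ C) (hx : Continuous x) {P : ℕ → ℕ}
    (hP : Tendsto (fun n => h n * P n) atTop atTop)
    (hK : ∀ n (k : ℤ), h n * ∑ i ∈ Finset.range (P n), X n (k + i) ^ 2 ≤ K) :
    MemLp x 2 volume := by
  have hsq : LatticeTendsto h (fun n j => X n j ^ 2) fun s => x s ^ 2 :=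
    fun s j hj => (hX s j hj).pow 2
  have hsqC (n : ℕ) (j : ℤ) : |X n j ^ 2| ≤ C ^ 2 := by
    rw [abs_pow]
    exact pow_le_pow_left₀ (abs_nonneg _) (hC n j) 2
  have hbound (A : ℝ) (hA : 0 ≤ A) : ∫ s in (-A)..A, x s ^ 2 ≤ K := by
    refine le_of_tendsto (hsq.tendsto_intervalIntegral hh h₀ hsqC (-A) A) ?_
    filter_upwards [hP.eventually_ge_atTop (2 * A + 1), h₀.eventually_le_const one_pos]
      with n hPn hn
    have hlow := (le_div_iff₀ (hh n)).1 (Int.floor_le (-A / h n))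
    have hupp := (div_lt_iff₀ (hh n)).1 (Int.lt_floor_add_one (-A / h n))
    refine le_trans ?_
      ((integral_comp_floor_div (hh n) (hsqC n) ⌊-A / h n⌋ (P n)).trans_le (hK n _))
    refine intervalIntegral.integral_mono_interval hlow (by linarith) ?_
      (Eventually.of_forall fun _ => sq_nonneg _)
      (intervalIntegrable_comp_floor_div (h n) (hsqC n) _ _)
    push_cast
    linarith
  rw [memLp_two_iff_integrable_sq hx.aestronglyMeasurable]
  refine integrable_of_intervalIntegral_norm_bounded (l := atTop) K
    (fun A => ((hx.pow 2).intervalIntegrable (-A) A).1) tendsto_neg_atTop_atBot tendsto_id ?_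
  filter_upwards [eventually_ge_atTop 0] with A hA
  simpa using hbound A hA

end LatticeConvergence

section ContinuumLimit

variable {W η ρ : ℝ → ℝ} {h : ℕ → ℝ} {X R D : ℕ → ℤ → ℝ} {x : ℝ → ℝ} {c r C : ℝ}

/-- The convolution `W ⋆ η` on the line. -/
noncomputable def lineConv (W η : ℝ → ℝ) (x : ℝ) : ℝ :=
  ∫ t, W t * η (x - t)

theorem integrable_mul_of_abs_le (hW : Integrable W) (hη : Continuous η) (hC : ∀ x, |η x| ≤ C) :
    Integrable fun t => W t * η t :=
  hW.mul_bdd hη.aestronglyMeasurable (Eventually.of_forall hC)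

theorem continuous_lineConv (hW : Integrable W) (hη : Continuous η) (hC : ∀ x, |η x| ≤ C) :
    Continuous (lineConv W η) := by
  refine continuous_of_dominated (bound := fun t => |W t| * C) (fun x => ?_)
    (fun x => Eventually.of_forall fun t => ?_) (hW.abs.mul_const C)
    (Eventually.of_forall fun t => by fun_prop)
  · exact hW.aestronglyMeasurable.mul
      (hη.comp (continuous_const.sub continuous_id)).aestronglyMeasurable
  · rw [norm_mul]
    exact mul_le_mul_of_nonneg_left (hC _) (norm_nonneg _)

theorem integral_mul_symm_eq_lineConv (hW : Integrable W) (hW_even : ∀ t, W (-t) = W t)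
    (hη : Continuous η) (hC : ∀ x, |η x| ≤ C) (x : ℝ) :
    ∫ t, W t * ((η (x - t) + η (x + t)) / 2) = lineConv W η x := by
  have hleft : Integrable fun t => W t * η (x - t) :=
    integrable_mul_of_abs_le hW (hη.comp (continuous_const.sub continuous_id)) fun _ => hC _
  have hright : Integrable fun t => W t * η (x + t) :=
    integrable_mul_of_abs_le hW (hη.comp (continuous_const.add continuous_id)) fun _ => hC _
  have hreflect : ∫ t, W t * η (x + t) = lineConv W η x := by
    rw [← integral_neg_eq_self, lineConv]
    simp only [hW_even, ← sub_eq_add_neg]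
  calc ∫ t, W t * ((η (x - t) + η (x + t)) / 2)
      = ∫ t, (W t * η (x - t) / 2 + W t * η (x + t) / 2) := by congr 1 with t; ring
    _ = lineConv W η x / 2 + (∫ t, W t * η (x + t)) / 2 := by
      rw [integral_add (hleft.div_const 2) (hright.div_const 2), integral_div, integral_div,
        lineConv]
    _ = lineConv W η x := by rw [hreflect, add_halves]

theorem LatticeTendsto.latticeConv (hX : LatticeTendsto h X x) (hW : Integrable W)
    (hW_even : ∀ t, W (-t) = W t) (hh : ∀ n, 0 < h n) (h₀ : Tendsto h atTop (𝓝 0))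
    (hC : ∀ n j, |X n j| ≤ C) (hx : Continuous x) :
    LatticeTendsto h (fun n => latticeConv W (h n) (X n)) (lineConv W x) := by
  intro s j hj
  have hfloor := tendsto_floor_div_mul hh h₀
  have hxC (s : ℝ) : |x s| ≤ C :=
    le_of_tendsto' (hX.tendsto_floor hh h₀ s).abs fun n => hC n _
  rw [← integral_mul_symm_eq_lineConv hW hW_even hx hxC]
  refine tendsto_integral_of_dominated_convergence (fun t => |W t| * C) (fun n => ?_)
    (hW.abs.mul_const C) (fun n => Eventually.of_forall fun t => ?_)
    (Eventually.of_forall fun t => ?_)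
  · exact (integrable_mul_comp_floor_div hW (h n)
      (abs_symmShift_le (hC n) (j n))).aestronglyMeasurable
  · rw [norm_mul]
    exact mul_le_mul_of_nonneg_left (abs_symmShift_le (hC n) _ _) (norm_nonneg _)
  · have hsub : Tendsto (fun n => X n (j n - ⌊t / h n⌋)) atTop (𝓝 (x (s - t))) :=
      hX _ _ (by simpa [sub_mul] using hj.sub (hfloor t))
    have hadd : Tendsto (fun n => X n (j n + ⌊t / h n⌋)) atTop (𝓝 (x (s + t))) :=
      hX _ _ (by simpa [add_mul] using hj.add (hfloor t))
    exact ((hsub.add hadd).div_const 2).const_mul (W t)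

/-- The right-hand side `F` of the profile equation `-ρ'' = F(ρ)` on the line, at speed `c`. -/
noncomputable def profileForce (W : ℝ → ℝ) (c : ℝ) (ρ : ℝ → ℝ) (x : ℝ) : ℝ :=
  ρ x * lineConv W (massDefect ρ) x + c ^ 2 / 4 * (ρ x - (ρ x)⁻¹ ^ 3)

/-- A nontrivial modulus `ρ` with slope `G` which solves the profile equation on the line, has
finite energy and is controlled by `C`. -/
structure IsProfile (W : ℝ → ℝ) (c C : ℝ) (ρ G : ℝ → ℝ) : Prop where
  hasDerivAt_modulus : ∀ x, HasDerivAt ρ (G x) x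
  hasDerivAt_slope : ∀ x, HasDerivAt G (-profileForce W c ρ x) x
  modulus_mem : ∀ x, ρ x ∈ Icc C⁻¹ C
  abs_slope_le : ∀ x, |G x| ≤ C
  modulus_zero_ne_one : ρ 0 ≠ 1
  memLp_slope : MemLp G 2 volume
  memLp_massDefect : MemLp (massDefect ρ) 2 volume

theorem LatticeTendsto.massDefect (hR : LatticeTendsto h R ρ) :
    LatticeTendsto h (fun n => massDefect (R n)) (massDefect ρ) :=
  fun s j hj => ((hR s j hj).pow 2).const_sub 1

theorem LatticeTendsto.comp_add_one (hX : LatticeTendsto h X x) (h₀ : Tendsto h atTop (𝓝 0)) :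
    LatticeTendsto h (fun n j => X n (j + 1)) x :=
  fun s j hj => hX s (fun n => j n + 1) (by simpa [add_mul] using hj.add h₀)

theorem LatticeTendsto.modulus_mem (hR : LatticeTendsto h R ρ) (hh : ∀ n, 0 < h n)
    (h₀ : Tendsto h atTop (𝓝 0)) (hC : ∀ n j, R n j ∈ Icc C⁻¹ C) (s : ℝ) : ρ s ∈ Icc C⁻¹ C :=
  isClosed_Icc.mem_of_tendsto (hR.tendsto_floor hh h₀ s) (Eventually.of_forall fun n => hC n _)

theorem LatticeTendsto.latticeForce (hR : LatticeTendsto h R ρ) (hW : Integrable W)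
    (hW_even : ∀ t, W (-t) = W t) (hh : ∀ n, 0 < h n) (h₀ : Tendsto h atTop (𝓝 0))
    (hC₀ : 0 < C) (hC : ∀ n j, R n j ∈ Icc C⁻¹ C) (hρ : Continuous ρ) (c : ℝ) :
    LatticeTendsto h (fun n => latticeForce W (h n) c (R n)) (profileForce W c ρ) := by
  intro s j hj
  have hpos : 0 < ρ s := (inv_pos.2 hC₀).trans_le (hR.modulus_mem hh h₀ hC s).1
  have hconv := hR.massDefect.latticeConv hW hW_even hh h₀
    (fun n j => abs_massDefect_le hC₀ (hC n j)) (continuous_const.sub (hρ.pow 2)) s j hj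
  have hmod := hR s j hj
  exact (hmod.mul hconv).add ((hmod.sub ((hmod.inv₀ hpos.ne').pow 3)).const_mul _)

theorem continuous_profileForce (hW : Integrable W) (c : ℝ) (hC : 0 < C) (hρ : Continuous ρ)
    (hmem : ∀ x, ρ x ∈ Icc C⁻¹ C) : Continuous (profileForce W c ρ) := by
  have hinv : Continuous fun x => (ρ x)⁻¹ :=
    hρ.inv₀ fun x => ((inv_pos.2 hC).trans_le (hmem x).1).ne'
  have hconv : Continuous (lineConv W (massDefect ρ)) :=
    continuous_lineConv hW (continuous_const.sub (hρ.pow 2)) fun x => abs_massDefect_le hC (hmem x)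
  exact (hρ.mul hconv).add (continuous_const.mul (hρ.sub (hinv.pow 3)))

theorem hasDerivAt_add_primitive {f : ℝ → ℝ} (hf : Continuous f) (a x : ℝ) :
    HasDerivAt (fun x => a + ∫ t in (0 : ℝ)..x, f t) (f x) x :=
  (hf.integral_hasStrictDerivAt 0 x).hasDerivAt.const_add a

theorem IsLatticeProfile.abs_modulus_le {a : ℝ} {P : ℕ} {R D : ℤ → ℝ}
    (hRD : IsLatticeProfile W a c r C P R D) (hC : 0 < C) (j : ℤ) : |R j| ≤ C :=
  (abs_of_pos ((inv_pos.2 hC).trans_le (hRD.modulus_mem j).1)).trans_le (hRD.modulus_mem j).2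

theorem IsLatticeProfile.abs_modulus_sub_le {a : ℝ} {P : ℕ} {R D : ℤ → ℝ}
    (hRD : IsLatticeProfile W a c r C P R D) (ha : 0 ≤ a) (j : ℤ) :
    |R (j + 1) - R j| ≤ a * C := by
  rw [hRD.modulus_sub, abs_mul, abs_of_nonneg ha]
  exact mul_le_mul_of_nonneg_left (hRD.abs_slope_le j) ha

theorem exists_isProfile_of_latticeTendsto {P : ℕ → ℕ} (hW : Integrable W)
    (hW_even : ∀ t, W (-t) = W t) (hh : ∀ n, 0 < h n) (h₀ : Tendsto h atTop (𝓝 0)) (hr : 0 < r)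
    (hC : 0 < C) (hP : Tendsto (fun n => h n * P n) atTop atTop)
    (hRD : ∀ n, IsLatticeProfile W (h n) c r C (P n) (R n) (D n)) (hR : LatticeTendsto h R ρ)
    {d₀ : ℝ} (hd₀ : Tendsto (fun n => D n 0) atTop (𝓝 d₀)) : ∃ G, IsProfile W c C ρ G := by
  have hmem (n : ℕ) := (hRD n).modulus_mem
  have hρ : Continuous ρ := hR.continuous hh h₀ fun n => (hRD n).abs_modulus_sub_le (hh n).le
  have hforce := (hR.latticeForce hW hW_even hh h₀ hC hmem hρ c).comp_add_one h₀
  have hcont : Continuous (profileForce W c ρ) :=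
    continuous_profileForce hW c hC hρ (hR.modulus_mem hh h₀ hmem)
  let G (x : ℝ) : ℝ := d₀ + ∫ t in (0 : ℝ)..x, -profileForce W c ρ t
  have hG (x : ℝ) : HasDerivAt G (-profileForce W c ρ x) x :=
    hasDerivAt_add_primitive hcont.neg d₀ x
  have hGc : Continuous G := continuous_iff_continuousAt.2 fun x => (hG x).continuousAt
  have hD : LatticeTendsto h D G := LatticeTendsto.primitive
    (Y := fun n j => -latticeForce W (h n) c (R n) (j + 1)) (fun s j hj => (hforce s j hj).neg)
    hh h₀ (fun n j => (abs_neg _).trans_le (abs_latticeForce_le hW (h n) c hC (hmem n) _))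
    (fun n => (hRD n).slope_sub) hd₀
  have hρG : ρ = fun x => ρ 0 + ∫ t in (0 : ℝ)..x, G t := funext fun x =>
    tendsto_nhds_unique (hR.tendsto_floor hh h₀ x)
      ((hD.primitive hh h₀ (fun n => (hRD n).abs_slope_le) (fun n => (hRD n).modulus_sub)
        hR.tendsto_zero).tendsto_floor hh h₀ x)
  refine ⟨G, fun x => ?_, hG, hR.modulus_mem hh h₀ hmem, fun x => ?_, fun h₁ => ?_, ?_, ?_⟩
  · rw [hρG]
    exact hasDerivAt_add_primitive hGc (ρ 0) x
  · exact le_of_tendsto' (hD.tendsto_floor hh h₀ x).abs fun n => (hRD n).abs_slope_le _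
  · have hle : r ≤ |ρ 0 - 1| :=
      ge_of_tendsto' (hR.tendsto_zero.sub_const 1).abs fun n => (hRD n).le_abs_sub_one
    rw [h₁, sub_self, abs_zero] at hle
    exact hle.not_gt hr
  · exact hD.memLp_two hh h₀ (fun n => (hRD n).abs_slope_le) hGc hP
      fun n => (hRD n).sum_slope_sq_le
  · exact hR.massDefect.memLp_two hh h₀ (fun n j => abs_massDefect_le hC (hmem n j))
      (continuous_const.sub (hρ.pow 2)) hP fun n => (hRD n).sum_massDefect_sq_le

theorem exists_isProfile {P : ℕ → ℕ} (hW : Integrable W) (hW_even : ∀ t, W (-t) = W t)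
    (hh : ∀ n, 0 < h n) (h₀ : Tendsto h atTop (𝓝 0)) (hr : 0 < r) (hC : 0 < C)
    (hP : Tendsto (fun n => h n * P n) atTop atTop)
    (hRD : ∀ n, IsLatticeProfile W (h n) c r C (P n) (R n) (D n)) :
    ∃ ρ G, IsProfile W c C ρ G := by
  obtain ⟨φ, hφ, hslope⟩ := exists_subseq_forall_tendsto (v := fun n (_ : Unit) => D n 0)
    fun n _ => (hRD n).abs_slope_le 0
  obtain ⟨d₀, hd₀⟩ := hslope ()
  obtain ⟨ψ, hψ, ρ, hρ⟩ := exists_subseq_latticeTendsto (fun n => hh (φ n))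
    (h₀.comp hφ.tendsto_atTop) (fun n => (hRD (φ n)).abs_modulus_le hC)
    fun n => (hRD (φ n)).abs_modulus_sub_le (hh _).le
  have hφψ : Tendsto (φ ∘ ψ) atTop atTop := (hφ.comp hψ).tendsto_atTop
  exact ⟨ρ, exists_isProfile_of_latticeTendsto hW hW_even (fun n => hh _) (h₀.comp hφψ) hr hC
    (hP.comp hφψ) (fun n => hRD _) hρ (hd₀.comp hψ.tendsto_atTop)⟩

end ContinuumLimit

section BoundedDerivatives

variable {k : ℕ} {m C : ℝ} {W f g : ℝ → ℝ}

theorem exists_abs_add_le (hf : ∃ C, ∀ x, |f x| ≤ C) (hg : ∃ C, ∀ x, |g x| ≤ C) :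
    ∃ C, ∀ x, |f x + g x| ≤ C := by
  obtain ⟨A, hA⟩ := hf
  obtain ⟨B, hB⟩ := hg
  exact ⟨A + B, fun x => (abs_add_le _ _).trans (add_le_add (hA x) (hB x))⟩

theorem exists_abs_mul_le (hf : ∃ C, ∀ x, |f x| ≤ C) (hg : ∃ C, ∀ x, |g x| ≤ C) :
    ∃ C, ∀ x, |f x * g x| ≤ C := by
  obtain ⟨A, hA⟩ := hf
  obtain ⟨B, hB⟩ := hg
  refine ⟨A * B, fun x => ?_⟩
  rw [abs_mul]
  exact mul_le_mul (hA x) (hB x) (abs_nonneg _) ((abs_nonneg _).trans (hA x))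

theorem exists_abs_inv_le (hm : 0 < m) (hf : ∀ x, m ≤ f x) : ∃ C, ∀ x, |(f x)⁻¹| ≤ C := by
  refine ⟨m⁻¹, fun x => ?_⟩
  rw [abs_inv, abs_of_pos (hm.trans_le (hf x))]
  exact inv_anti₀ hm (hf x)

theorem abs_lineConv_le (hW : Integrable W) (hC : ∀ x, |f x| ≤ C) (x : ℝ) :
    |lineConv W f x| ≤ (∫ t, |W t|) * C := by
  rw [← integral_mul_const, lineConv, ← Real.norm_eq_abs]
  refine norm_integral_le_of_norm_le (hW.abs.mul_const C) (Eventually.of_forall fun t => ?_)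
  rw [norm_mul]
  exact mul_le_mul_of_nonneg_left (hC _) (norm_nonneg _)

theorem hasDerivAt_lineConv (hW : Integrable W) (hf : ∀ x, HasDerivAt f (g x) x)
    (hg : Continuous g) (hfC : ∃ C, ∀ x, |f x| ≤ C) (hgC : ∃ C, ∀ x, |g x| ≤ C) (x : ℝ) :
    HasDerivAt (lineConv W f) (lineConv W g x) x := by
  obtain ⟨A, hA⟩ := hfC
  obtain ⟨B, hB⟩ := hgC
  have hfc : Continuous f := continuous_iff_continuousAt.2 fun x => (hf x).continuousAt
  have hint {φ : ℝ → ℝ} {C : ℝ} (hφ : Continuous φ) (hC : ∀ x, |φ x| ≤ C) (x : ℝ) :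
      Integrable fun t => W t * φ (x - t) :=
    integrable_mul_of_abs_le hW (hφ.comp (continuous_const.sub continuous_id)) fun _ => hC _
  refine (hasDerivAt_integral_of_dominated_loc_of_deriv_le (F := fun x t => W t * f (x - t))
    (F' := fun x t => W t * g (x - t)) (bound := fun t => |W t| * B) univ_mem
    (Eventually.of_forall fun x => (hint hfc hA x).aestronglyMeasurable) (hint hfc hA x)
    (hint hg hB x).aestronglyMeasurable (Eventually.of_forall fun t y _ => ?_)
    (hW.abs.mul_const B) (Eventually.of_forall fun t y _ => ?_)).2
  · rw [norm_mul]
    exact mul_le_mul_of_nonneg_left (hB _) (norm_nonneg _)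
  · exact ((hf (y - t)).comp_sub_const y t).const_mul (W t)

/-- Functions of class `C^k` that are bounded together with their first `k` derivatives. The
regularity of a profile is bootstrapped in this class because convolution with an integrable kernel
preserves it. -/
def BoundedContDiff : ℕ → (ℝ → ℝ) → Prop
  | 0, f => (∃ C, ∀ x, |f x| ≤ C) ∧ Continuous f
  | k + 1, f => (∃ C, ∀ x, |f x| ≤ C) ∧ ∃ f', (∀ x, HasDerivAt f (f' x) x) ∧ BoundedContDiff k f'

namespace BoundedContDiff

theorem exists_abs_le : ∀ {k}, BoundedContDiff k f → ∃ C, ∀ x, |f x| ≤ C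
  | 0, hf => hf.1
  | _ + 1, hf => hf.1

theorem continuous : ∀ {k}, BoundedContDiff k f → Continuous f
  | 0, hf => hf.2
  | _ + 1, ⟨_, _, hf, _⟩ => continuous_iff_continuousAt.2 fun x => (hf x).continuousAt

theorem of_succ : ∀ {k f}, BoundedContDiff (k + 1) f → BoundedContDiff k f
  | 0, _, hf => ⟨hf.exists_abs_le, hf.continuous⟩
  | _ + 1, _, ⟨hC, f', hf, hf'⟩ => ⟨hC, f', hf, hf'.of_succ⟩

theorem const : ∀ k a, BoundedContDiff k fun _ => a
  | 0, a => ⟨⟨|a|, fun _ => le_rfl⟩, continuous_const⟩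
  | k + 1, a => ⟨⟨|a|, fun _ => le_rfl⟩, fun _ => 0, fun x => hasDerivAt_const x a, const k 0⟩

theorem add : ∀ {k f g}, BoundedContDiff k f → BoundedContDiff k g →
    BoundedContDiff k fun x => f x + g x
  | 0, _, _, ⟨hA, hf⟩, ⟨hB, hg⟩ => ⟨exists_abs_add_le hA hB, hf.add hg⟩
  | _ + 1, _, _, ⟨hA, _, hf, hf'⟩, ⟨hB, _, hg, hg'⟩ =>
    ⟨exists_abs_add_le hA hB, _, fun x => (hf x).add (hg x), hf'.add hg'⟩

theorem mul : ∀ {k f g}, BoundedContDiff k f → BoundedContDiff k g →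
    BoundedContDiff k fun x => f x * g x
  | 0, _, _, ⟨hA, hf⟩, ⟨hB, hg⟩ => ⟨exists_abs_mul_le hA hB, hf.mul hg⟩
  | _ + 1, _, _, hF@⟨hA, _, hf, hf'⟩, hG@⟨hB, _, hg, hg'⟩ =>
    ⟨exists_abs_mul_le hA hB, _, fun x => (hf x).mul (hg x),
      (hf'.mul hG.of_succ).add (hF.of_succ.mul hg')⟩

theorem const_mul (a : ℝ) (hf : BoundedContDiff k f) : BoundedContDiff k fun x => a * f x :=
  (const k a).mul hf

theorem const_add (a : ℝ) (hf : BoundedContDiff k f) : BoundedContDiff k fun x => a + f x :=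
  (const k a).add hf

theorem inv (hm : 0 < m) : ∀ {k f}, BoundedContDiff k f → (∀ x, m ≤ f x) →
    BoundedContDiff k fun x => (f x)⁻¹
  | 0, _, ⟨_, hf⟩, hmf => ⟨exists_abs_inv_le hm hmf, hf.inv₀ fun x => (hm.trans_le (hmf x)).ne'⟩
  | k + 1, f, hF@⟨_, f', hf, hf'⟩, hmf => by
    have hinv : BoundedContDiff k fun x => (f x)⁻¹ := hF.of_succ.inv hm hmf
    refine ⟨exists_abs_inv_le hm hmf, fun x => -1 * (f' x * ((f x)⁻¹ * (f x)⁻¹)), fun x => ?_,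
      (hf'.mul (hinv.mul hinv)).const_mul (-1)⟩
    refine ((hf x).fun_inv (hm.trans_le (hmf x)).ne').congr_deriv ?_
    ring

theorem lineConv (hW : Integrable W) : ∀ {k f}, BoundedContDiff k f →
    BoundedContDiff k (lineConv W f)
  | 0, _, ⟨⟨_, hC⟩, hf⟩ => ⟨⟨_, abs_lineConv_le hW hC⟩, continuous_lineConv hW hf hC⟩
  | _ + 1, _, ⟨⟨_, hC⟩, _, hf, hf'⟩ => ⟨⟨_, abs_lineConv_le hW hC⟩, _,
      hasDerivAt_lineConv hW hf hf'.continuous ⟨_, hC⟩ hf'.exists_abs_le, hf'.lineConv hW⟩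

theorem contDiff : ∀ {k f}, BoundedContDiff k f → ContDiff ℝ k f
  | 0, _, hf => contDiff_zero.2 hf.continuous
  | k + 1, _, ⟨_, _, hf, hf'⟩ => by
    rw [Nat.cast_succ]
    refine contDiff_succ_iff_deriv.2 ⟨fun x => (hf x).differentiableAt, by simp, ?_⟩
    rw [deriv_eq hf]
    exact hf'.contDiff

end BoundedContDiff

end BoundedDerivatives

section Regularity

variable {W ρ G : ℝ → ℝ} {c C : ℝ} {k : ℕ}

theorem BoundedContDiff.massDefect (hρ : BoundedContDiff k ρ) :
    BoundedContDiff k (massDefect ρ) := by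
  convert ((hρ.mul hρ).const_mul (-1)).const_add 1 using 2
  rw [DarkSoliton.massDefect]
  ring

theorem BoundedContDiff.profileForce (hρ : BoundedContDiff k ρ) (hW : Integrable W) (hC : 0 < C)
    (hmem : ∀ x, ρ x ∈ Icc C⁻¹ C) : BoundedContDiff k (profileForce W c ρ) := by
  have hinv := hρ.inv (inv_pos.2 hC) fun x => (hmem x).1
  convert (hρ.mul (hρ.massDefect.lineConv hW)).add
    ((hρ.add ((hinv.mul (hinv.mul hinv)).const_mul (-1))).const_mul (c ^ 2 / 4)) using 2
  rw [DarkSoliton.profileForce]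
  ring

theorem IsProfile.modulus_pos (hρ : IsProfile W c C ρ G) (hC : 0 < C) (x : ℝ) : 0 < ρ x :=
  (inv_pos.2 hC).trans_le (hρ.modulus_mem x).1

theorem IsProfile.boundedContDiff (hρ : IsProfile W c C ρ G) (hW : Integrable W) (hC : 0 < C) :
    ∀ k, BoundedContDiff k ρ ∧ BoundedContDiff k G := by
  have hmod : ∃ C, ∀ x, |ρ x| ≤ C :=
    ⟨C, fun x => (abs_of_pos (hρ.modulus_pos hC x)).trans_le (hρ.modulus_mem x).2⟩
  have hslope : ∃ C, ∀ x, |G x| ≤ C := ⟨C, hρ.abs_slope_le⟩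
  intro k
  induction k with
  | zero =>
    exact ⟨⟨hmod, continuous_iff_continuousAt.2 fun x => (hρ.hasDerivAt_modulus x).continuousAt⟩,
      hslope, continuous_iff_continuousAt.2 fun x => (hρ.hasDerivAt_slope x).continuousAt⟩
  | succ k ih =>
    have hforce : BoundedContDiff k fun x => -profileForce W c ρ x := by
      simpa only [neg_one_mul] using (ih.1.profileForce hW hC hρ.modulus_mem).const_mul (-1)
    exact ⟨⟨hmod, G, hρ.hasDerivAt_modulus, ih.2⟩, hslope, _, hρ.hasDerivAt_slope, hforce⟩

end Regularity

section MadelungTransform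

variable {W ρ G θ ω : ℝ → ℝ} {c C a b x : ℝ}

/-- The wave function `ρ e^{iθ}` with modulus `ρ` and phase `θ` (Madelung transform). -/
noncomputable def madelung (ρ θ : ℝ → ℝ) (x : ℝ) : ℂ :=
  ρ x * Complex.exp (Complex.I * θ x)

/-- The phase derivative `θ'` of a travelling wave of speed `c` and modulus `ρ`: the imaginary part
of the equation says that `ρ² (θ' + c / 2)` is constant, and the constant is `c / 2` since `ρ → 1`
at infinity. -/
noncomputable def phaseSpeed (c : ℝ) (ρ : ℝ → ℝ) (x : ℝ) : ℝ :=
  c / 2 * ((ρ x)⁻¹ ^ 2 - 1)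

/-- A wave function that solves the travelling wave equation of speed `c`, is smooth, bounded and
nonconstant, and has finite energy. -/
def IsDarkSoliton (W : ℝ → ℝ) (c : ℝ) (u : ℝ → ℂ) : Prop :=
  ContDiff ℝ (⊤ : ℕ∞) u ∧
  (∃ M : ℝ, ∀ x, ‖u x‖ ≤ M) ∧
  (∃ x y, u x ≠ u y) ∧
  MemLp (deriv u) 2 (volume : Measure ℝ) ∧
  MemLp (fun x : ℝ => 1 - ‖u x‖ ^ 2) 2 (volume : Measure ℝ) ∧
  (∀ x : ℝ,
    Complex.I * (c : ℂ) * deriv u x + deriv (deriv u) x +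
      (((∫ t : ℝ, W t * (1 - ‖u (x - t)‖ ^ 2)) : ℝ) : ℂ) * u x = 0)

theorem norm_exp_I_mul_ofReal (t : ℝ) : ‖Complex.exp (Complex.I * t)‖ = 1 := by
  rw [mul_comm, Complex.norm_exp_ofReal_mul_I]

theorem norm_madelung (hρ : 0 ≤ ρ x) (θ : ℝ → ℝ) : ‖madelung ρ θ x‖ = ρ x := by
  rw [madelung, norm_mul, norm_exp_I_mul_ofReal, mul_one, Complex.norm_of_nonneg hρ]

theorem contDiff_madelung {n : WithTop ℕ∞} (hρ : ContDiff ℝ n ρ) (hθ : ContDiff ℝ n θ) :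
    ContDiff ℝ n (madelung ρ θ) :=
  (Complex.ofRealCLM.contDiff.comp hρ).mul
    (contDiff_const.mul (Complex.ofRealCLM.contDiff.comp hθ)).cexp

theorem hasDerivAt_exp_I_mul (hθ : HasDerivAt θ b x) :
    HasDerivAt (fun x => Complex.exp (Complex.I * θ x))
      (Complex.exp (Complex.I * θ x) * (Complex.I * b)) x :=
  (hθ.ofReal_comp.const_mul Complex.I).cexp

theorem hasDerivAt_madelung (hρ : HasDerivAt ρ a x) (hθ : HasDerivAt θ b x) :
    HasDerivAt (madelung ρ θ) ((a + Complex.I * (ρ x * b)) * Complex.exp (Complex.I * θ x)) x := by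
  refine (hρ.ofReal_comp.mul (hasDerivAt_exp_I_mul hθ)).congr_deriv ?_
  ring

theorem hasDerivAt_deriv_madelung (hρ : ∀ x, HasDerivAt ρ (G x) x) (hG : HasDerivAt G a x)
    (hθ : ∀ x, HasDerivAt θ (ω x) x) (hω : HasDerivAt ω b x) :
    HasDerivAt (deriv (madelung ρ θ))
      ((a - ρ x * ω x ^ 2 + Complex.I * (2 * G x * ω x + ρ x * b)) *
        Complex.exp (Complex.I * θ x)) x := by
  have hderiv : deriv (madelung ρ θ) = fun x =>
      (G x + Complex.I * (ρ x * ω x)) * Complex.exp (Complex.I * θ x) :=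
    funext fun x => (hasDerivAt_madelung (hρ x) (hθ x)).deriv
  rw [hderiv]
  refine ((hG.ofReal_comp.add (((hρ x).ofReal_comp.mul hω.ofReal_comp).const_mul Complex.I)).mul
    (hasDerivAt_exp_I_mul (hθ x))).congr_deriv ?_
  simp only [Pi.add_apply, Pi.mul_apply]
  linear_combination (ρ x * ω x ^ 2 * Complex.exp (Complex.I * θ x)) * Complex.I_sq

theorem hasDerivAt_phaseSpeed (c : ℝ) (hρ : HasDerivAt ρ a x) (hx : ρ x ≠ 0) :
    HasDerivAt (phaseSpeed c ρ) (-c * a * (ρ x)⁻¹ ^ 3) x := by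
  refine ((((hρ.fun_inv hx).pow 2).sub_const 1).const_mul (c / 2)).congr_deriv ?_
  norm_num
  field_simp

theorem abs_mul_phaseSpeed_le (c : ℝ) (hC : 0 < C) (hx : ρ x ∈ Icc C⁻¹ C) :
    |ρ x * phaseSpeed c ρ x| ≤ |c| / 2 * C * |massDefect ρ x| := by
  have hpos : 0 < ρ x := (inv_pos.2 hC).trans_le hx.1
  have heq : ρ x * phaseSpeed c ρ x = c / 2 * (ρ x)⁻¹ * massDefect ρ x := by
    simp only [phaseSpeed, massDefect]
    field_simp
  rw [heq, abs_mul, abs_mul, abs_div, abs_inv, abs_of_pos hpos, abs_two]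
  have : (ρ x)⁻¹ ≤ C := inv_le_of_inv_le₀ hC hx.1
  gcongr

theorem travellingWave_eq_zero (W : ℝ → ℝ) (c : ℝ) (hpos : ∀ x, 0 < ρ x)
    (hρ : ∀ x, HasDerivAt ρ (G x) x) (hG : ∀ x, HasDerivAt G (-profileForce W c ρ x) x)
    (hθ : ∀ x, HasDerivAt θ (phaseSpeed c ρ x) x) (x : ℝ) :
    Complex.I * c * deriv (madelung ρ θ) x + deriv (deriv (madelung ρ θ)) x +
      lineConv W (massDefect ρ) x * madelung ρ θ x = 0 := by
  rw [(hasDerivAt_madelung (hρ x) (hθ x)).deriv, (hasDerivAt_deriv_madelung hρ (hG x) hθ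
    (hasDerivAt_phaseSpeed c (hρ x) (hpos x).ne')).deriv, madelung, phaseSpeed, profileForce]
  have : (ρ x : ℂ) ≠ 0 := Complex.ofReal_ne_zero.2 (hpos x).ne'
  push_cast
  field_simp
  ring_nf
  simp only [Complex.I_sq]
  ring

theorem eq_one_of_memLp_massDefect_const (ha : 0 ≤ a)
    (hmem : MemLp (massDefect fun _ : ℝ => a) 2 volume) : a = 1 := by
  have hzero : 1 - a ^ 2 = 0 :=
    ((memLp_const_iff (by norm_num) (by norm_num)).1 hmem).resolve_right (by simp)
  exact (pow_eq_one_iff_of_nonneg ha two_ne_zero).1 (by linarith)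

namespace IsProfile

theorem memLp_deriv_madelung (hρ : IsProfile W c C ρ G) (hC : 0 < C)
    (hθ : ∀ x, HasDerivAt θ (phaseSpeed c ρ x) x) : MemLp (deriv (madelung ρ θ)) 2 volume := by
  refine (hρ.memLp_slope.abs.add (hρ.memLp_massDefect.abs.const_mul (|c| / 2 * C))).mono'
    (measurable_deriv _).aestronglyMeasurable (Eventually.of_forall fun x => ?_)
  rw [(hasDerivAt_madelung (hρ.hasDerivAt_modulus x) (hθ x)).deriv, norm_mul,
    norm_exp_I_mul_ofReal, mul_one]
  refine (norm_add_le _ _).trans (add_le_add (Complex.norm_real _).le ?_)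
  rw [norm_mul, Complex.norm_I, one_mul, ← Complex.ofReal_mul, Complex.norm_real]
  exact abs_mul_phaseSpeed_le c hC (hρ.modulus_mem x)

theorem exists_madelung_ne (hρ : IsProfile W c C ρ G) (hC : 0 < C) (θ : ℝ → ℝ) :
    ∃ x y, madelung ρ θ x ≠ madelung ρ θ y := by
  by_contra! hconst
  have hmod : ρ = fun _ => ρ 0 := funext fun x => by
    rw [← norm_madelung (hρ.modulus_pos hC x).le θ, hconst x 0,
      norm_madelung (hρ.modulus_pos hC 0).le]
  have hmem := hρ.memLp_massDefect
  rw [hmod] at hmem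
  exact hρ.modulus_zero_ne_one (eq_one_of_memLp_massDefect_const (hρ.modulus_pos hC 0).le hmem)

theorem contDiff_modulus (hρ : IsProfile W c C ρ G) (hW : Integrable W) (hC : 0 < C) :
    ContDiff ℝ (⊤ : ℕ∞) ρ :=
  contDiff_infty.2 fun k => (hρ.boundedContDiff hW hC k).1.contDiff

theorem contDiff_phaseSpeed (hρ : IsProfile W c C ρ G) (hW : Integrable W) (hC : 0 < C) :
    ContDiff ℝ (⊤ : ℕ∞) (phaseSpeed c ρ) :=
  contDiff_const.mul ((((hρ.contDiff_modulus hW hC).inv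
    fun x => (hρ.modulus_pos hC x).ne').pow 2).sub contDiff_const)

theorem exists_isDarkSoliton (hρ : IsProfile W c C ρ G) (hW : Integrable W) (hC : 0 < C) :
    ∃ u, IsDarkSoliton W c u := by
  have hspeed : ContDiff ℝ (⊤ : ℕ∞) (phaseSpeed c ρ) := hρ.contDiff_phaseSpeed hW hC
  let θ (x : ℝ) : ℝ := 0 + ∫ t in (0 : ℝ)..x, phaseSpeed c ρ t
  have hθ : ∀ x, HasDerivAt θ (phaseSpeed c ρ x) x :=
    hasDerivAt_add_primitive hspeed.continuous 0
  have hθs : ContDiff ℝ (⊤ : ℕ∞) θ :=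
    contDiff_infty_iff_deriv.2 ⟨fun x => (hθ x).differentiableAt, by rwa [deriv_eq hθ]⟩
  have hnorm (x : ℝ) : ‖madelung ρ θ x‖ = ρ x := norm_madelung (hρ.modulus_pos hC x).le θ
  refine ⟨madelung ρ θ, contDiff_madelung (hρ.contDiff_modulus hW hC) hθs,
    ⟨C, fun x => (hnorm x).trans_le (hρ.modulus_mem x).2⟩, hρ.exists_madelung_ne hC θ,
    hρ.memLp_deriv_madelung hC hθ, ?_, fun x => ?_⟩
  · simp only [hnorm]
    exact hρ.memLp_massDefect
  · simp only [hnorm]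
    exact travellingWave_eq_zero W c (hρ.modulus_pos hC) hρ.hasDerivAt_modulus
      hρ.hasDerivAt_slope hθ x

end IsProfile

end MadelungTransform

section Existence

variable {W : ℝ → ℝ} {c r K σ a b : ℝ}

theorem re_integral_mul_exp_eq_cosTransform (hW : Integrable W) (ξ : ℝ) :
    (∫ x : ℝ, (W x : ℂ) * Complex.exp (-(Complex.I * (x : ℂ) * (ξ : ℂ)))).re =
      cosTransform W ξ := by
  have hexp (x : ℝ) : Complex.exp (-(Complex.I * x * ξ)) =
      Complex.exp (Complex.I * (-(ξ * x) : ℝ)) := by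
    congr 1
    push_cast
    ring
  have hcont : Continuous fun x : ℝ => Complex.exp (-(Complex.I * x * ξ)) := by fun_prop
  have hint : Integrable fun x : ℝ => (W x : ℂ) * Complex.exp (-(Complex.I * x * ξ)) :=
    hW.ofReal.mul_bdd (c := 1) hcont.aestronglyMeasurable
      (Eventually.of_forall fun x => by rw [hexp, norm_exp_I_mul_ofReal])
  calc (∫ x : ℝ, (W x : ℂ) * Complex.exp (-(Complex.I * x * ξ))).re
      = ∫ x : ℝ, ((W x : ℂ) * Complex.exp (-(Complex.I * x * ξ))).re :=
        (integral_re hint).symm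
    _ = cosTransform W ξ := by
      simp_rw [hexp, Complex.re_ofReal_mul, mul_comm Complex.I, Complex.exp_ofReal_mul_I_re,
        Real.cos_neg]
      rfl

theorem exists_isDarkSoliton_of_frequently (hW : Integrable W) (hW_even : ∀ t, W (-t) = W t)
    (hr : 0 < r) (hfreq : ∃ᶠ n : ℕ in atTop, ∃ ρ : ZMod ((n + 3) ^ 2) → ℝ,
      IsLatticeSoliton W (n + 3 : ℕ)⁻¹ c r K ρ) : ∃ u, IsDarkSoliton W c u := by
  obtain ⟨C, hC, hprofile⟩ := exists_isLatticeProfile hW c r K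
  obtain ⟨φ, hφ, hsol⟩ := extraction_of_frequently_atTop hfreq
  have hprod (n : ℕ) : ((n + 3 : ℕ) : ℝ)⁻¹ * ((n + 3) ^ 2 : ℕ) = (n + 3 : ℕ) := by
    rw [Nat.cast_pow, sq, inv_mul_cancel_left₀ (by positivity)]
  have hRD (k : ℕ) : ∃ R D,
      IsLatticeProfile W (φ k + 3 : ℕ)⁻¹ c r C ((φ k + 3) ^ 2) R D := by
    obtain ⟨ρ, hρ⟩ := hsol k
    refine hprofile _ (φ k + 3) _ (mul_inv_cancel₀ (by positivity)) ?_ ρ hρ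
    rw [mul_comm, hprod]
    exact_mod_cast Nat.le_add_left 1 _
  choose R D hRD using hRD
  have htop : Tendsto (fun k => ((φ k + 3 : ℕ) : ℝ)) atTop atTop :=
    tendsto_natCast_atTop_atTop.comp ((tendsto_add_atTop_nat 3).comp hφ.tendsto_atTop)
  obtain ⟨ρ, G, hρ⟩ := exists_isProfile hW hW_even (fun k => inv_pos.2 (by positivity))
    htop.inv_tendsto_atTop hr (one_pos.trans_le hC)
    (by simpa only [Pi.inv_apply, hprod] using htop) hRD
  exact hρ.exists_isDarkSoliton hW (one_pos.trans_le hC)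

theorem ae_mem_Ioo_exists_isDarkSoliton (hW : Integrable W) (hW_even : ∀ t, W (-t) = W t)
    (hσ : ∀ ξ, σ ≤ cosTransform W ξ + ξ ^ 2 / 2) (ha : 0 < a) (hab : a ≤ b)
    (hb : b ^ 2 / 2 < σ) : ∀ᵐ c : ℝ, c ∈ Ioo a b → ∃ u, IsDarkSoliton W c u := by
  obtain ⟨r, hr, hae⟩ := ae_exists_frequently_isLatticeSoliton hW hσ ha hab hb
  filter_upwards [(ae_restrict_iff' measurableSet_Ioo).1 hae] with c hc hcI
  obtain ⟨K, hfreq⟩ := hc hcI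
  exact exists_isDarkSoliton_of_frequently hW hW_even hr.1 hfreq

theorem ae_exists_isDarkSoliton (hW : Integrable W) (hW_even : ∀ t, W (-t) = W t)
    (hσ : ∀ ξ, σ ≤ cosTransform W ξ + ξ ^ 2 / 2) :
    ∀ᵐ c : ℝ, 0 < c → c ^ 2 < 2 * σ → ∃ u, IsDarkSoliton W c u := by
  have hrat : ∀ᵐ c : ℝ, ∀ a b : ℚ, 0 < (a : ℝ) → (a : ℝ) ≤ b → (b : ℝ) ^ 2 / 2 < σ →
      c ∈ Ioo (a : ℝ) b → ∃ u, IsDarkSoliton W c u := by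
    simp only [ae_all_iff, eventually_imp_distrib_left]
    exact fun a b ha hab hb => ae_mem_Ioo_exists_isDarkSoliton hW hW_even hσ ha hab hb
  filter_upwards [hrat] with c hc hc₀ hcσ
  obtain ⟨a, ha, hac⟩ := exists_rat_btwn hc₀
  obtain ⟨b, hcb, hb⟩ := exists_rat_btwn (Real.lt_sqrt_of_sq_lt hcσ)
  have hb₀ : (0 : ℝ) ≤ b := (hc₀.trans hcb).le
  exact hc a b ha (hac.trans hcb).le (by linarith [(Real.lt_sqrt hb₀).1 hb]) ⟨hac, hcb⟩

end Existence

end DarkSoliton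

theorem darkSoliton_existence_general
    (W : ℝ → ℝ) (hW_int : Integrable W) (hW_even : ∀ x, W (-x) = W x)
    (FW : ℝ → ℝ)
    (hFW : ∀ ξ : ℝ, (FW ξ : ℂ) =
      ∫ x : ℝ, (W x : ℂ) * Complex.exp (-(Complex.I * (x : ℂ) * (ξ : ℂ))))
    (σ : ℝ) (hσ : ∀ ξ, σ ≤ FW ξ + ξ ^ 2 / 2) :
    ∀ᵐ (c : ℝ) ∂(volume.restrict (Set.Ioo (0 : ℝ) (Real.sqrt (2 * σ)))),
      ∃ u : ℝ → ℂ, DarkSoliton.IsDarkSoliton W c u := by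
  have hFW_cos (ξ : ℝ) : FW ξ = DarkSoliton.cosTransform W ξ := by
    rw [← DarkSoliton.re_integral_mul_exp_eq_cosTransform hW_int, ← hFW, Complex.ofReal_re]
  have hsymbol (ξ : ℝ) : σ ≤ DarkSoliton.cosTransform W ξ + ξ ^ 2 / 2 := hFW_cos ξ ▸ hσ ξ
  rw [ae_restrict_iff' measurableSet_Ioo]
  filter_upwards [DarkSoliton.ae_exists_isDarkSoliton hW_int hW_even hsymbol] with c hc hc_mem
  exact hc hc_mem.1 ((Real.lt_sqrt hc_mem.1.le).1 hc_mem.2)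

/-- Existence of dark solitons: if the Fourier transform `FW` of the even potential
`W ∈ L¹(ℝ)` satisfies `inf (FW ξ + ξ²/2) = σ ∈ (0,1]`, then for almost every speed
`c ∈ (0, √(2σ))` the nonlocal traveling-wave equation admits a nonconstant bounded
smooth finite-energy solution. -/
theorem darkSoliton_existence
    (W : ℝ → ℝ) (hW_int : Integrable W) (hW_even : ∀ x, W (-x) = W x)
    (FW : ℝ → ℝ)
    (hFW : ∀ ξ : ℝ, (FW ξ : ℂ) =
      ∫ x : ℝ, (W x : ℂ) * Complex.exp (-(Complex.I * (x : ℂ) * (ξ : ℂ))))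
    (σ : ℝ) (hσ : σ ∈ Set.Ioc (0 : ℝ) 1)
    (hinf : IsGLB (Set.range fun ξ : ℝ => FW ξ + ξ ^ 2 / 2) σ) :
    ∀ᵐ (c : ℝ) ∂(volume.restrict (Set.Ioo (0 : ℝ) (Real.sqrt (2 * σ)))),
      ∃ u : ℝ → ℂ,
        ContDiff ℝ (⊤ : ℕ∞) u ∧
        (∃ M : ℝ, ∀ x, ‖u x‖ ≤ M) ∧
        (∃ x y, u x ≠ u y) ∧
        MemLp (deriv u) 2 (volume : Measure ℝ) ∧
        MemLp (fun x : ℝ => 1 - ‖u x‖ ^ 2) 2 (volume : Measure ℝ) ∧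
        (∀ x : ℝ,
          Complex.I * (c : ℂ) * deriv u x + deriv (deriv u) x +
            (((∫ t : ℝ, W t * (1 - ‖u (x - t)‖ ^ 2)) : ℝ) : ℂ) * u x = 0) :=
  darkSoliton_existence_general W hW_int hW_even FW hFW σ fun ξ => hinf.1 ⟨ξ, rfl⟩
end

section
/- Let c ≥ √2 and let u : ℝ → ℂ be a bounded smooth function with u' ∈ L²(ℝ) and 1 − |u|² ∈ L²(ℝ) satisfying i·c·u'(x) + u''(x) + (1 − |u(x)|²)·u(x) = 0 for all x ∈ ℝ. Then u is a constant function of modulus one. -/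
open MeasureTheory

/-!
Pairing the equation with `u'` and with `i u` shows that `|u'|² - (1 - |u|²)² / 2` and
`⟨i u, u'⟩ - (c / 2) (1 - |u|²)` are constant; both vanish because `|u| → 1` and `u' → 0` outside
sets of finite measure. Inserted into `⟨u, u'⟩² + ⟨i u, u'⟩² = |u|² |u'|²` and into `(|u|²)''`,
these identities give, with `η = 1 - |u|²`,
`((|u|²)')² = η² (2 - c² - 2 η)` and `(|u|²)'' = 3 η² - (2 - c²) η`.
For `c² ≥ 2` the first one forces `|u| ≥ 1`, and together they force `(|u|²)'' ≥ 0`.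
A convex function on the line that comes arbitrarily close to `1` near both ends is at most `1`,
hence `|u| = 1` and `u' = 0`.
-/

open Filter Set Topology
open scoped RealInnerProductSpace

section Cofinite

variable {α E : Type*} [MeasurableSpace α] {μ : Measure α}

theorem cofinite_inf_neBot {l : Filter α} (h : ∀ s ∈ l, μ s = ⊤) : (μ.cofinite ⊓ l).NeBot := by
  refine inf_neBot_iff.2 fun s hs t ht ↦ ?_
  by_contra hst
  have hts : t ⊆ sᶜ :=
    (disjoint_iff_inter_eq_empty.2 (not_nonempty_iff_eq_empty.1 hst)).subset_compl_left
  exact ((measure_mono hts).trans_lt (Measure.mem_cofinite.1 hs)).ne (h t ht)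

instance volume_cofinite_inf_atTop_neBot : ((volume : Measure ℝ).cofinite ⊓ atTop).NeBot :=
  cofinite_inf_neBot fun _ hs ↦
    let ⟨_, ha⟩ := mem_atTop_sets.1 hs
    measure_mono_top ha Real.volume_Ici

instance volume_cofinite_inf_atBot_neBot : ((volume : Measure ℝ).cofinite ⊓ atBot).NeBot :=
  cofinite_inf_neBot fun _ hs ↦
    let ⟨_, ha⟩ := mem_atBot_sets.1 hs
    measure_mono_top ha Real.volume_Iic

theorem tendsto_cofinite_zero_of_memLp [NormedAddCommGroup E] {f : α → E} {p : ENNReal}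
    (hf : MemLp f p μ) (hp_zero : p ≠ 0) (hp_top : p ≠ ⊤) : Tendsto f μ.cofinite (𝓝 0) := by
  refine NormedAddGroup.tendsto_nhds_zero.2 fun ε hε ↦ Measure.eventually_cofinite.2 ?_
  simpa only [not_lt, ← NNReal.coe_le_coe, Real.coe_toNNReal ε hε.le, coe_nnnorm] using
    hf.meas_ge_lt_top hp_zero hp_top (Real.toNNReal_pos.2 hε).ne'

theorem tendsto_norm_cofinite_one_of_memLp [NormedAddCommGroup E] {u : α → E} {p : ENNReal}
    (hu : MemLp (fun x ↦ 1 - ‖u x‖ ^ 2) p μ) (hp_zero : p ≠ 0) (hp_top : p ≠ ⊤) :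
    Tendsto (fun x ↦ ‖u x‖) μ.cofinite (𝓝 1) := by
  simpa using ((tendsto_cofinite_zero_of_memLp hu hp_zero hp_top).const_sub 1).sqrt

end Cofinite

theorem convexOn_univ_le_of_tendsto {f : ℝ → ℝ} (hf : ConvexOn ℝ univ f) {l : Filter ℝ}
    [(l ⊓ atTop).NeBot] [(l ⊓ atBot).NeBot] {a : ℝ} (hl : Tendsto f l (𝓝 a)) (x : ℝ) :
    f x ≤ a := by
  refine le_of_forall_gt_imp_ge_of_dense fun b hab ↦ ?_
  have hb : ∀ᶠ y in l, f y < b := hl.eventually_lt_const hab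
  obtain ⟨y, hyb, hxy⟩ :=
    ((hb.filter_mono inf_le_left).and ((eventually_ge_atTop x).filter_mono inf_le_right)).exists
      (f := l ⊓ atTop)
  obtain ⟨z, hzb, hzx⟩ :=
    ((hb.filter_mono inf_le_left).and ((eventually_le_atBot x).filter_mono inf_le_right)).exists
      (f := l ⊓ atBot)
  exact (hf.le_max_of_mem_Icc (mem_univ z) (mem_univ y) ⟨hzx, hxy⟩).trans
    (max_le hzb.le hyb.le)

theorem eq_of_hasDerivAt_zero_of_tendsto {f : ℝ → ℝ} (hf : ∀ x, HasDerivAt f 0 x)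
    {l : Filter ℝ} [l.NeBot] {a : ℝ} (hl : Tendsto f l (𝓝 a)) (x : ℝ) : f x = a := by
  have hconst : f = fun _ ↦ f x := funext fun y ↦
    is_const_of_deriv_eq_zero (fun z ↦ (hf z).differentiableAt) (fun z ↦ (hf z).deriv) y x
  rw [hconst] at hl
  exact tendsto_nhds_unique tendsto_const_nhds hl

theorem inner_sq_add_inner_I_mul_sq (z w : ℂ) :
    ⟪z, w⟫ ^ 2 + ⟪Complex.I * z, w⟫ ^ 2 = ‖z‖ ^ 2 * ‖w‖ ^ 2 := by
  simp only [Complex.inner, Complex.sq_norm, Complex.normSq_apply, Complex.mul_re, Complex.mul_im,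
    Complex.conj_re, Complex.conj_im, Complex.I_re, Complex.I_im]
  ring

theorem inner_I_mul_self (z : ℂ) : ⟪Complex.I * z, z⟫ = 0 := by
  simp only [Complex.inner, Complex.mul_re, Complex.mul_im, Complex.conj_re, Complex.conj_im,
    Complex.I_re, Complex.I_im]
  ring

theorem inner_I_mul_right (z w : ℂ) : ⟪z, Complex.I * w⟫ = -⟪Complex.I * z, w⟫ := by
  simp only [Complex.inner, Complex.mul_re, Complex.mul_im, Complex.conj_re, Complex.conj_im,
    Complex.I_re, Complex.I_im]
  ring

/-- `u` is a twice differentiable solution of the Gross–Pitaevskii traveling-wave equation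
`i c u' + u'' + (1 - |u|²) u = 0` with speed `c`. No condition at infinity is imposed. The
differentiability fields keep `deriv` from taking its junk value `0`. -/
structure IsGPTravelingWave (c : ℝ) (u : ℝ → ℂ) : Prop where
  differentiable : Differentiable ℝ u
  differentiable_deriv : Differentiable ℝ (deriv u)
  equation : ∀ x, Complex.I * (c : ℂ) * deriv u x + deriv (deriv u) x +
    ((1 - ‖u x‖ ^ 2 : ℝ) : ℂ) * u x = 0

namespace IsGPTravelingWave

variable {c : ℝ} {u : ℝ → ℂ}

theorem of_contDiff (hu : ContDiff ℝ 2 u)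
    (heq : ∀ x, Complex.I * (c : ℂ) * deriv u x + deriv (deriv u) x +
      ((1 - ‖u x‖ ^ 2 : ℝ) : ℂ) * u x = 0) : IsGPTravelingWave c u where
  differentiable := hu.differentiable two_ne_zero
  differentiable_deriv := hu.differentiable_deriv_two
  equation := heq

theorem hasDerivAt (hu : IsGPTravelingWave c u) (x : ℝ) : HasDerivAt u (deriv u x) x :=
  (hu.differentiable x).hasDerivAt

theorem hasDerivAt_deriv (hu : IsGPTravelingWave c u) (x : ℝ) :
    HasDerivAt (deriv u) (deriv (deriv u) x) x :=
  (hu.differentiable_deriv x).hasDerivAt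

theorem inner_deriv_deriv (hu : IsGPTravelingWave c u) (z : ℂ) (x : ℝ) :
    ⟪z, deriv (deriv u) x⟫ =
      c * ⟪Complex.I * z, deriv u x⟫ - (1 - ‖u x‖ ^ 2) * ⟪z, u x⟫ := by
  have heq : deriv (deriv u) x =
      -(c • (Complex.I * deriv u x)) - (1 - ‖u x‖ ^ 2) • u x := by
    simp only [Complex.real_smul]
    linear_combination hu.equation x
  rw [heq, inner_sub_right, inner_neg_right, real_inner_smul_right, real_inner_smul_right,
    inner_I_mul_right]
  ring

theorem hasDerivAt_norm_sq (hu : IsGPTravelingWave c u) (x : ℝ) :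
    HasDerivAt (fun y ↦ ‖u y‖ ^ 2) (2 * ⟪u x, deriv u x⟫) x :=
  (hu.hasDerivAt x).norm_sq

theorem hasDerivAt_energy (hu : IsGPTravelingWave c u) (x : ℝ) :
    HasDerivAt (fun y ↦ ‖deriv u y‖ ^ 2 - (1 - ‖u y‖ ^ 2) ^ 2 / 2) 0 x := by
  have hpotential : HasDerivAt (fun y ↦ (1 - ‖u y‖ ^ 2) ^ 2 / 2)
      (-(1 - ‖u x‖ ^ 2) * (2 * ⟪u x, deriv u x⟫)) x :=
    ((((hu.hasDerivAt_norm_sq x).const_sub 1).fun_pow 2).div_const 2).congr_deriv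
      (by push_cast; ring)
  refine ((hu.hasDerivAt_deriv x).norm_sq.fun_sub hpotential).congr_deriv ?_
  rw [hu.inner_deriv_deriv, inner_I_mul_self, real_inner_comm]
  ring

theorem hasDerivAt_momentum (hu : IsGPTravelingWave c u) (x : ℝ) :
    HasDerivAt (fun y ↦ ⟪Complex.I * u y, deriv u y⟫ - c / 2 * (1 - ‖u y‖ ^ 2)) 0 x := by
  refine ((((hu.hasDerivAt x).const_mul Complex.I).inner ℝ (hu.hasDerivAt_deriv x)).fun_sub
    (((hu.hasDerivAt_norm_sq x).const_sub 1).const_mul (c / 2))).congr_deriv ?_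
  rw [hu.inner_deriv_deriv, inner_I_mul_self, inner_I_mul_self, ← mul_assoc, Complex.I_mul_I,
    neg_one_mul, inner_neg_left]
  ring

section Asymptotic

variable {l : Filter ℝ} [l.NeBot]

theorem norm_deriv_sq (hu : IsGPTravelingWave c u) (hmod : Tendsto (fun x ↦ ‖u x‖) l (𝓝 1))
    (hderiv : Tendsto (deriv u) l (𝓝 0)) (x : ℝ) :
    ‖deriv u x‖ ^ 2 = (1 - ‖u x‖ ^ 2) ^ 2 / 2 := by
  have hlim : Tendsto (fun y ↦ ‖deriv u y‖ ^ 2 - (1 - ‖u y‖ ^ 2) ^ 2 / 2) l (𝓝 0) := by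
    simpa using (hderiv.norm.pow 2).sub ((((hmod.pow 2).const_sub 1).pow 2).div_const 2)
  exact sub_eq_zero.1 (eq_of_hasDerivAt_zero_of_tendsto hu.hasDerivAt_energy hlim x)

theorem inner_I_mul_deriv (hu : IsGPTravelingWave c u)
    (hmod : Tendsto (fun x ↦ ‖u x‖) l (𝓝 1)) (hderiv : Tendsto (deriv u) l (𝓝 0)) (x : ℝ) :
    ⟪Complex.I * u x, deriv u x⟫ = c / 2 * (1 - ‖u x‖ ^ 2) := by
  have hinner : Tendsto (fun y ↦ ⟪Complex.I * u y, deriv u y⟫) l (𝓝 0) := by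
    refine squeeze_zero_norm (a := fun y ↦ ‖u y‖ * ‖deriv u y‖) (fun y ↦ ?_)
      (by simpa using hmod.mul hderiv.norm)
    simpa using norm_inner_le_norm (𝕜 := ℝ) (Complex.I * u y) (deriv u y)
  have hlim : Tendsto (fun y ↦ ⟪Complex.I * u y, deriv u y⟫ - c / 2 * (1 - ‖u y‖ ^ 2)) l (𝓝 0) := by
    simpa using hinner.sub (((hmod.pow 2).const_sub 1).const_mul (c / 2))
  exact sub_eq_zero.1 (eq_of_hasDerivAt_zero_of_tendsto hu.hasDerivAt_momentum hlim x)

theorem deriv_norm_sq_sq (hu : IsGPTravelingWave c u)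
    (hmod : Tendsto (fun x ↦ ‖u x‖) l (𝓝 1)) (hderiv : Tendsto (deriv u) l (𝓝 0)) (x : ℝ) :
    deriv (fun y ↦ ‖u y‖ ^ 2) x ^ 2 =
      (1 - ‖u x‖ ^ 2) ^ 2 * (2 - c ^ 2 - 2 * (1 - ‖u x‖ ^ 2)) := by
  have hpythagoras := inner_sq_add_inner_I_mul_sq (u x) (deriv u x)
  rw [hu.norm_deriv_sq hmod hderiv, hu.inner_I_mul_deriv hmod hderiv] at hpythagoras
  rw [(hu.hasDerivAt_norm_sq x).deriv]
  linear_combination 4 * hpythagoras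

theorem hasDerivAt_deriv_norm_sq (hu : IsGPTravelingWave c u)
    (hmod : Tendsto (fun x ↦ ‖u x‖) l (𝓝 1)) (hderiv : Tendsto (deriv u) l (𝓝 0)) (x : ℝ) :
    HasDerivAt (deriv fun y ↦ ‖u y‖ ^ 2)
      (3 * (1 - ‖u x‖ ^ 2) ^ 2 - (2 - c ^ 2) * (1 - ‖u x‖ ^ 2)) x := by
  rw [funext fun y ↦ (hu.hasDerivAt_norm_sq y).deriv]
  refine (((hu.hasDerivAt x).inner ℝ (hu.hasDerivAt_deriv x)).const_mul 2).congr_deriv ?_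
  rw [hu.inner_deriv_deriv, real_inner_self_eq_norm_sq, real_inner_self_eq_norm_sq,
    hu.norm_deriv_sq hmod hderiv, hu.inner_I_mul_deriv hmod hderiv]
  ring

theorem norm_sq_eq_one_or_le (hu : IsGPTravelingWave c u)
    (hmod : Tendsto (fun x ↦ ‖u x‖) l (𝓝 1)) (hderiv : Tendsto (deriv u) l (𝓝 0)) (x : ℝ) :
    ‖u x‖ ^ 2 = 1 ∨ c ^ 2 ≤ 2 * ‖u x‖ ^ 2 := by
  refine or_iff_not_imp_left.2 fun hne ↦ ?_
  have hsq : 0 < (1 - ‖u x‖ ^ 2) ^ 2 := sq_pos_of_ne_zero (sub_ne_zero.2 (Ne.symm hne))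
  have hmul : 0 ≤ (1 - ‖u x‖ ^ 2) ^ 2 * (2 - c ^ 2 - 2 * (1 - ‖u x‖ ^ 2)) :=
    hu.deriv_norm_sq_sq hmod hderiv x ▸ sq_nonneg _
  linarith [nonneg_of_mul_nonneg_right hmul hsq]

theorem one_le_norm_sq (hu : IsGPTravelingWave c u) (hc : 2 ≤ c ^ 2)
    (hmod : Tendsto (fun x ↦ ‖u x‖) l (𝓝 1)) (hderiv : Tendsto (deriv u) l (𝓝 0)) (x : ℝ) :
    1 ≤ ‖u x‖ ^ 2 := by
  rcases hu.norm_sq_eq_one_or_le hmod hderiv x with h | h <;> linarith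

theorem convexOn_norm_sq (hu : IsGPTravelingWave c u) (hc : 2 ≤ c ^ 2)
    (hmod : Tendsto (fun x ↦ ‖u x‖) l (𝓝 1)) (hderiv : Tendsto (deriv u) l (𝓝 0)) :
    ConvexOn ℝ univ fun x ↦ ‖u x‖ ^ 2 := by
  have hsecond := hu.hasDerivAt_deriv_norm_sq hmod hderiv
  refine convexOn_univ_of_deriv2_nonneg (fun x ↦ (hu.hasDerivAt_norm_sq x).differentiableAt)
    (fun x ↦ (hsecond x).differentiableAt) fun x ↦ ?_
  rw [Function.iterate_succ_apply, Function.iterate_one, (hsecond x).deriv]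
  rcases hu.norm_sq_eq_one_or_le hmod hderiv x with h | h
  · simp [h]
  · nlinarith

end Asymptotic

theorem norm_eq_one {l : Filter ℝ} [htop : (l ⊓ atTop).NeBot] [(l ⊓ atBot).NeBot]
    (hu : IsGPTravelingWave c u) (hc : 2 ≤ c ^ 2) (hmod : Tendsto (fun x ↦ ‖u x‖) l (𝓝 1))
    (hderiv : Tendsto (deriv u) l (𝓝 0)) (x : ℝ) : ‖u x‖ = 1 := by
  have : l.NeBot := htop.mono inf_le_left
  have hle : ‖u x‖ ^ 2 ≤ 1 := convexOn_univ_le_of_tendsto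
    (hu.convexOn_norm_sq hc hmod hderiv) (by simpa using hmod.pow 2) x
  exact (pow_eq_one_iff_of_nonneg (norm_nonneg _) two_ne_zero).1
    (hle.antisymm (hu.one_le_norm_sq hc hmod hderiv x))

end IsGPTravelingWave

/-- The filter `l` encodes the behavior at infinity. Finite energy gives `l = volume.cofinite`,
limits at `±∞` correspond to `l = cocompact ℝ`. -/
theorem supersonic_solutions_trivial_general {c : ℝ} (hc : 2 ≤ c ^ 2) {u : ℝ → ℂ}
    (hu : IsGPTravelingWave c u) {l : Filter ℝ} [htop : (l ⊓ atTop).NeBot] [(l ⊓ atBot).NeBot]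
    (hmod : Tendsto (fun x ↦ ‖u x‖) l (𝓝 1)) (hderiv : Tendsto (deriv u) l (𝓝 0)) :
    ∃ z : ℂ, ‖z‖ = 1 ∧ ∀ x : ℝ, u x = z := by
  have : l.NeBot := htop.mono inf_le_left
  have hnorm : ∀ x, ‖u x‖ = 1 := hu.norm_eq_one hc hmod hderiv
  have hderiv_zero : ∀ x, deriv u x = 0 := fun x ↦ by
    simpa [hnorm x] using hu.norm_deriv_sq hmod hderiv x
  exact ⟨u 0, hnorm 0, fun x ↦ is_const_of_deriv_eq_zero hu.differentiable hderiv_zero x 0⟩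

/-- Nonexistence of supersonic dark solitons for the local Gross--Pitaevskii equation:
if `c ≥ √2` then every bounded smooth finite-energy solution of
`i c u' + u'' + (1 - |u|²) u = 0` is a constant of modulus one. -/
theorem supersonic_solutions_trivial
    (c : ℝ) (hc : Real.sqrt 2 ≤ c)
    (u : ℝ → ℂ) (hu_smooth : ContDiff ℝ (⊤ : ℕ∞) u)
    (hu_bdd : ∃ M : ℝ, ∀ x, ‖u x‖ ≤ M)
    (hu_deriv : MemLp (deriv u) 2 (volume : Measure ℝ))
    (hu_mod : MemLp (fun x : ℝ => 1 - ‖u x‖ ^ 2) 2 (volume : Measure ℝ))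
    (heq : ∀ x : ℝ, Complex.I * (c : ℂ) * deriv u x + deriv (deriv u) x +
        ((1 - ‖u x‖ ^ 2 : ℝ) : ℂ) * u x = 0) :
    ∃ z : ℂ, ‖z‖ = 1 ∧ ∀ x : ℝ, u x = z := by
  have hu : IsGPTravelingWave c u := .of_contDiff (contDiff_infty.1 hu_smooth 2) heq
  exact supersonic_solutions_trivial_general (Real.sqrt_le_iff.1 hc).2 hu
    (tendsto_norm_cofinite_one_of_memLp hu_mod two_ne_zero ENNReal.ofNat_ne_top)
    (tendsto_cofinite_zero_of_memLp hu_deriv two_ne_zero ENNReal.ofNat_ne_top)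
end
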